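/- Let n ≥ 4 and d ≥ 3. There exists a constant C = C(d,n) with the following property. Let F ∈ ℚ[x_0,…,x_n] be a homogeneous polynomial of degree d which is irreducible over ℚ̄, defining X = {F = 0} ⊂ P^n, and suppose X is not covered by its linear divisors: there exists a nonzero x ∈ ℚ̄^{n+1} with F(x) = 0 lying in no (n−1)-dimensional ℚ̄-linear subspace of ℚ̄^{n+1} on which F vanishes identically. Then there exists a nonzero homogeneous polynomial Φ ∈ ℚ[a_0,…,a_n] of degree at most C such that for every nonzero a = (a_0,…,a_n) ∈ ℚ^{n+1} with Φ(a) ≠ 0, and for any ℚ-linear isomorphism φ : ℚ^n → ker(a) ⊂ ℚ^{n+1} (where ker(a) is the kernel of the linear form a_0x_0+⋯+a_nx_n), the hyperplane section Π_a ∩ X is geometrically integral and not covered by its linear divisors; concretely: F∘φ is irreducible over ℚ̄, and there exists a nonzero y ∈ ℚ̄^n with (F∘φ)(y) = 0 lying in no (n−2)-dimensional ℚ̄-linear subspace of ℚ̄^n on which F∘φ vanishes identically. -/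

import Mathlib

/-!
Both properties of the section by the hyperplane `a` fail only if an equation holds: reducibility of
a form and the existence of a linear subspace through a point of its zero locus are proper
conditions, so by the valuative criterion they are cut out by integral polynomials in the
coefficients. The degrees in `a` of the resulting conditions depend on `n` and `d` only, and it
suffices to find one good hyperplane over an extension of the ground field. For irreducibility
this is the generic member of a pencil with a smooth base point: the section is irreducible over
`K(t)`, and its unique geometric factor through that point is Galois invariant, hence everything.

Suppose now that all sections are covered by their linear divisors, and let `ξ` be the generic point
of `F = 0`. Then every hyperplane through `ξ` contains a linear subspace of codimension three
through `ξ` on which `F`, and hence each of its Taylor components at `ξ`, vanishes. As `F = 0`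
itself is not covered, this forces the restriction of the quadratic component to the tangent
hyperplane `L = 0` to be an irreducible quadric that divides the restrictions of the cubic component
and of `F`. The tangent directions at `ξ` act as derivations annihilating `F`, and move `L` and this
quadric. Differentiating, one corrects the quadric successively to quadrics `Q` that divide `F`
modulo `L ^ (k + 1)`; after two corrections the derivations preserve `Q` up to a factor, so the same
`Q` works for all `k`. For `k ≥ d` it divides the form `F` of degree `d ≥ 3`, which is absurd.
-/

open MvPolynomial

/-- The composite `G ∘ ψ` of a polynomial `G` in `m` variables with a linear map
`ψ : k^n → k^m`, as a polynomial in `n` variables. -/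
noncomputable def restrictPoly {k : Type*} [CommSemiring k] {m n : ℕ}
    (G : MvPolynomial (Fin m) k) (ψ : (Fin n → k) →ₗ[k] (Fin m → k)) :
    MvPolynomial (Fin n) k :=
  aeval (fun i => ∑ j, C (ψ (Pi.single j 1) i) * X j) G

universe u v

section Elimination

theorem nonempty_algHom_of_finiteType (κ S E : Type*) [Field κ] [CommRing S] [Nontrivial S]
    [Algebra κ S] [Algebra.FiniteType κ S] [Field E] [IsAlgClosed E] [Algebra κ E] :
    Nonempty (S →ₐ[κ] E) := by
  obtain ⟨m, hm⟩ := Ideal.exists_maximal S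
  let := Ideal.Quotient.field m
  have : Module.Finite κ (S ⧸ m) := finite_of_finite_type_of_isJacobsonRing _ _
  exact ⟨(IsAlgClosed.lift : (S ⧸ m) →ₐ[κ] E).comp (Ideal.Quotient.mkₐ κ m)⟩

theorem exists_ringHom_comp_eq_of_ker_eq {A B k E : Type*} [CommRing A] [CommRing B] [Algebra A B]
    [Algebra.FiniteType A B] [Field k] [Field E] [IsAlgClosed E] {φ : A →+* E} {χ : B →+* k}
    (hker : RingHom.ker (χ.comp (algebraMap A B)) = RingHom.ker φ) :
    ∃ ψ : B →+* E, ψ.comp (algebraMap A B) = φ := by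
  set p := RingHom.ker φ
  have : p.IsPrime := RingHom.ker_isPrime φ
  let κ := p.ResidueField
  let algE : Algebra κ E := (Ideal.ResidueField.lift p φ le_rfl
    fun a ha => (isUnit_iff_ne_zero.2 fun h => ha (RingHom.mem_ker.2 h))).toAlgebra
  let algAk : Algebra A k := (χ.comp (algebraMap A B)).toAlgebra
  let algk : Algebra κ k := (Ideal.ResidueField.lift p (χ.comp (algebraMap A B)) hker.ge
    fun a ha => (isUnit_iff_ne_zero.2 fun h => ha (hker.le (RingHom.mem_ker.2 h)))).toAlgebra
  have : IsScalarTower A κ k := IsScalarTower.of_algebraMap_eq fun a =>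
    (Ideal.ResidueField.lift_algebraMap ..).symm
  let toResidue : TensorProduct A κ B →ₐ[κ] k :=
    Algebra.TensorProduct.lift (Algebra.ofId κ k) (AlgHom.mk χ fun _ => rfl)
      fun _ _ => Commute.all _ _
  have : Nontrivial (TensorProduct A κ B) := toResidue.toRingHom.domain_nontrivial
  obtain ⟨toE⟩ := nonempty_algHom_of_finiteType κ (TensorProduct A κ B) E
  refine ⟨toE.toRingHom.comp Algebra.TensorProduct.includeRight.toRingHom, RingHom.ext fun a => ?_⟩
  have ha : (1 : κ) ⊗ₜ[A] algebraMap A B a =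
      algebraMap κ (TensorProduct A κ B) (algebraMap A κ a) :=
    (Algebra.TensorProduct.tmul_one_eq_one_tmul a).symm
  calc toE ((1 : κ) ⊗ₜ[A] algebraMap A B a) = toE (algebraMap κ _ (algebraMap A κ a)) := by rw [ha]
    _ = φ a := (toE.commutes _).trans (Ideal.ResidueField.lift_algebraMap ..)

theorem exists_ringHom_comp_eq_of_valuative {A : Type v} {B : Type u} {E : Type*} [CommRing A]
    [CommRing B] [Algebra A B] [Algebra.FiniteType A B] [Field E] [IsAlgClosed E] {φ : A →+* E}
    (hker : RingHom.ker (algebraMap A B) ≤ RingHom.ker φ)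
    (hval : ∀ (L : Type u) [Field L] (V : ValuationSubring L) (f : A →+* V) (g : B →+* L),
      g.comp (algebraMap A B) = V.subtype.comp f → ∃ ψ : B →+* V, ψ.comp (algebraMap A B) = f) :
    ∃ ψ : B →+* E, ψ.comp (algebraMap A B) = φ := by
  set p := RingHom.ker φ
  have : p.IsPrime := RingHom.ker_isPrime φ
  obtain ⟨p₁, hp₁, hle⟩ := Ideal.exists_minimalPrimes_le hker
  obtain ⟨q, hq, -, hqp⟩ := Ideal.exists_comap_eq_of_mem_minimalPrimes (I := ⊥) _ p₁ hp₁
  let L := FractionRing (B ⧸ q)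
  let g : B →+* L := (algebraMap (B ⧸ q) L).comp (Ideal.Quotient.mk q)
  have hg (a : A) (ha : g (algebraMap A B a) = 0) : a ∈ p := by
    refine hle (hqp ▸ Ideal.mem_comap.2 (Ideal.Quotient.eq_zero_iff_mem.1 ?_))
    exact (IsFractionRing.injective (B ⧸ q) L) (ha.trans (map_zero _).symm)
  let gloc : Localization.AtPrime p →+* L := IsLocalization.lift (M := p.primeCompl)
    (g := g.comp (algebraMap A B)) fun a => isUnit_iff_ne_zero.2 fun h => a.2 (hg a h)
  obtain ⟨V, hV, hlocal⟩ := IsLocalRing.exists_factor_valuationRing gloc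
  let f : A →+* V := (gloc.codRestrict V.toSubring hV).comp (algebraMap A _)
  have hf (a : A) : (f a : L) = g (algebraMap A B a) := IsLocalization.lift_eq _ a
  obtain ⟨ψ, hψ⟩ := hval L V f g (RingHom.ext fun a => (hf a).symm)
  refine exists_ringHom_comp_eq_of_ker_eq (χ := (IsLocalRing.residue V).comp ψ) ?_
  rw [RingHom.comp_assoc, hψ]
  ext a
  have hunit : IsUnit (f a) ↔ IsUnit (algebraMap A (Localization.AtPrime p) a) :=
    isUnit_map_iff (gloc.codRestrict V.toSubring hV) _
  rw [RingHom.mem_ker, RingHom.comp_apply, IsLocalRing.residue_eq_zero_iff,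
    IsLocalRing.mem_maximalIdeal, mem_nonunits_iff, hunit,
    IsLocalization.AtPrime.isUnit_to_map_iff _ p]
  exact not_not

/-- Over the parameter point `s`, the system `Z` of integral polynomial equations, with parameters
indexed by `σ` and unknowns indexed by `τ`, has a solution with values in `R`. -/
def SolvableAt {σ τ R : Type*} [CommRing R] (Z : Set (MvPolynomial (σ ⊕ τ) ℤ)) (s : σ → R) : Prop :=
  ∃ t : τ → R, ∀ p ∈ Z, aeval (Sum.elim s t) p = 0

theorem solvableAt_iff_exists_ringHom {σ τ R : Type*} [CommRing R]
    {Z : Set (MvPolynomial (σ ⊕ τ) ℤ)} {s : σ → R} :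
    SolvableAt Z s ↔ ∃ g : MvPolynomial (σ ⊕ τ) ℤ ⧸ Ideal.span Z →+* R,
      g.comp ((Ideal.Quotient.mk _).comp (rename Sum.inl).toRingHom) = (aeval s).toRingHom := by
  constructor
  · rintro ⟨t, ht⟩
    have hle : Ideal.span Z ≤ RingHom.ker (aeval (Sum.elim s t) : _ →ₐ[ℤ] R).toRingHom :=
      Ideal.span_le.2 ht
    refine ⟨Ideal.Quotient.lift _ _ hle, ?_⟩
    ext x <;> simp
  · rintro ⟨g, hg⟩
    refine ⟨fun j => g (Ideal.Quotient.mk _ (X (Sum.inr j))), fun p hp => ?_⟩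
    have haeval : (aeval (Sum.elim s fun j => g (Ideal.Quotient.mk _ (X (Sum.inr j)))) :
        _ →ₐ[ℤ] R).toRingHom = g.comp (Ideal.Quotient.mk _) := by
      refine MvPolynomial.ringHom_ext (fun n => by simp) ?_
      rintro (i | j)
      · simpa using (congrArg (fun h => h (X i)) hg).symm
      · simp
    calc aeval (Sum.elim s fun j => g (Ideal.Quotient.mk _ (X (Sum.inr j)))) p
        = g (Ideal.Quotient.mk _ p) := congrArg (fun h => h p) haeval
      _ = 0 := by rw [Ideal.Quotient.eq_zero_iff_mem.2 (Ideal.subset_span hp), map_zero]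

-- A quantitative form of properness: solvability is a closed condition on the parameters, defined
-- over `ℤ` by the same finite set of equations for every algebraically closed field.
theorem exists_finset_solvableAt_iff {σ τ : Type u} [Finite σ] [Finite τ]
    {Z : Set (MvPolynomial (σ ⊕ τ) ℤ)}
    (hval : ∀ (L : Type u) [Field L] (V : ValuationSubring L) (s : σ → V),
      SolvableAt Z (fun i => (s i : L)) → SolvableAt Z s) :
    ∃ G : Finset (MvPolynomial σ ℤ), ∀ (E : Type v) [Field E] [IsAlgClosed E] (s : σ → E),
      SolvableAt Z s ↔ ∀ g ∈ G, aeval s g = 0 := by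
  let B := MvPolynomial (σ ⊕ τ) ℤ ⧸ Ideal.span Z
  let toB : MvPolynomial σ ℤ →+* B := (Ideal.Quotient.mk _).comp (rename Sum.inl).toRingHom
  let : Algebra (MvPolynomial σ ℤ) B := toB.toAlgebra
  have : IsScalarTower ℤ (MvPolynomial σ ℤ) B :=
    IsScalarTower.of_algebraMap_eq' (RingHom.ext_int _ _)
  have : Algebra.FiniteType (MvPolynomial σ ℤ) B := .of_restrictScalars_finiteType ℤ _ _
  obtain ⟨G, hG⟩ := (isNoetherianRing_iff_ideal_fg _).1 inferInstance (RingHom.ker toB)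
  refine ⟨G, fun E _ _ s => ?_⟩
  have hvanish : (∀ g ∈ G, aeval s g = 0) ↔
      RingHom.ker toB ≤ RingHom.ker (aeval s : MvPolynomial σ ℤ →ₐ[ℤ] E).toRingHom := by
    rw [← hG, Submodule.span_le]; rfl
  rw [solvableAt_iff_exists_ringHom, hvanish]
  constructor
  · rintro ⟨g, hg⟩
    exact hg ▸ (RingHom.comap_ker g toB ▸ Ideal.comap_mono bot_le)
  · intro hker
    refine exists_ringHom_comp_eq_of_valuative hker fun L _ V f g hfg => ?_
    have hf : f = (aeval fun i => f (X i) : MvPolynomial σ ℤ →ₐ[ℤ] V).toRingHom :=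
      MvPolynomial.ringHom_ext (by simp) (by simp)
    rw [hf]
    refine solvableAt_iff_exists_ringHom.1 (hval L V _ (solvableAt_iff_exists_ringHom.2 ⟨g, ?_⟩))
    exact hfg.trans (MvPolynomial.ringHom_ext (by simp) (by simp))

end Elimination

section LinearSubstitution

variable {R S σ τ ι : Type*} [CommRing R] [CommRing S] [Fintype τ] [Fintype ι]

/-- The substitution `x ↦ M x` on polynomials: `linSubst M F` is the polynomial `F ∘ M`. -/
noncomputable def linSubst (M : Matrix σ τ R) : MvPolynomial σ R →ₐ[R] MvPolynomial τ R :=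
  aeval fun i => ∑ j, C (M i j) * X j

theorem restrictPoly_eq_linSubst {k : Type*} [CommRing k] {m n : ℕ} (G : MvPolynomial (Fin m) k)
    (ψ : (Fin n → k) →ₗ[k] (Fin m → k)) :
    restrictPoly G ψ = linSubst (LinearMap.toMatrix' ψ) G := by
  simp only [restrictPoly, linSubst, LinearMap.toMatrix'_apply]

theorem linSubst_X (M : Matrix σ τ R) (i : σ) : linSubst M (X i) = ∑ j, C (M i j) * X j :=
  aeval_X _ _

theorem linSubst_C (M : Matrix σ τ R) (c : R) : linSubst M (C c) = C c :=
  algHom_C _ _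

theorem map_linSubst (φ : R →+* S) (M : Matrix σ τ R) (F : MvPolynomial σ R) :
    map φ (linSubst M F) = linSubst (M.map φ) (map φ F) := by
  induction F using MvPolynomial.induction_on with
  | C a => simp only [linSubst_C, map_C]
  | add p q hp hq => simp only [map_add, hp, hq]
  | mul_X p i hp => simp [hp, linSubst_X]

theorem eval_linSubst (M : Matrix σ τ R) (F : MvPolynomial σ R) (c : τ → R) :
    eval c (linSubst M F) = eval (M.mulVec c) F := by
  induction F using MvPolynomial.induction_on with
  | C a => simp only [linSubst_C, eval_C]
  | add p q hp hq => simp only [map_add, hp, hq]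
  | mul_X p i hp => simp [hp, linSubst_X, Matrix.mulVec, dotProduct]

theorem linSubst_linSubst (M : Matrix σ τ R) (N : Matrix τ ι R) (F : MvPolynomial σ R) :
    linSubst N (linSubst M F) = linSubst (M * N) F := by
  suffices (linSubst N).comp (linSubst M) = linSubst (M * N) from congrArg (fun h => h F) this
  ext1 i
  simp only [AlgHom.comp_apply, linSubst_X, map_sum, map_mul, linSubst_C, Finset.mul_sum,
    Matrix.mul_apply, Finset.sum_mul, ← mul_assoc]
  exact Finset.sum_comm

theorem linSubst_one [DecidableEq τ] (F : MvPolynomial τ R) : linSubst 1 F = F := by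
  suffices linSubst (1 : Matrix τ τ R) = AlgHom.id R _ from congrArg (fun h => h F) this
  ext1 i
  simp [linSubst_X, Matrix.one_apply]

theorem isHomogeneous_linSubst_X (M : Matrix σ τ R) (i : σ) :
    (linSubst M (X i)).IsHomogeneous 1 := by
  rw [linSubst_X]
  exact IsHomogeneous.sum _ _ _ fun j _ => by
    simpa using (isHomogeneous_C τ (M i j)).mul (isHomogeneous_X R j)

theorem isHomogeneous_linSubst (M : Matrix σ τ R) {F : MvPolynomial σ R} {d : ℕ}
    (hF : F.IsHomogeneous d) : (linSubst M F).IsHomogeneous d := by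
  have h := hF.aeval _ fun i => linSubst_X M i ▸ isHomogeneous_linSubst_X M i
  rwa [one_mul] at h

/-- The substitution by an invertible matrix, as an automorphism of the polynomial ring. -/
noncomputable def linSubstEquiv [DecidableEq τ] (M : (Matrix τ τ R)ˣ) :
    MvPolynomial τ R ≃ₐ[R] MvPolynomial τ R :=
  AlgEquiv.ofAlgHom (linSubst M.val) (linSubst M⁻¹.val)
    (AlgHom.ext fun F => by simp [linSubst_linSubst, linSubst_one])
    (AlgHom.ext fun F => by simp [linSubst_linSubst, linSubst_one])

end LinearSubstitution

section Coefficients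

variable {R S σ : Type*} [CommRing R] [CommRing S]

/-- The exponents of the monomials of degree `d`. -/
noncomputable def exponentsEq (σ : Type*) [Finite σ] (d : ℕ) : Finset (σ →₀ ℕ) :=
  ((Finsupp.finite_of_degree_le d).subset fun m (h : m.degree = d) => h.le).toFinset

/-- The exponents of the monomials of degree less than `d`. -/
noncomputable def exponentsLT (σ : Type*) [Finite σ] (d : ℕ) : Finset (σ →₀ ℕ) :=
  ((Finsupp.finite_of_degree_le d).subset fun m (h : m.degree < d) => h.le).toFinset

theorem mem_exponentsEq [Finite σ] {d : ℕ} {m : σ →₀ ℕ} : m ∈ exponentsEq σ d ↔ m.degree = d :=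
  Set.Finite.mem_toFinset _

theorem mem_exponentsLT [Finite σ] {d : ℕ} {m : σ →₀ ℕ} : m ∈ exponentsLT σ d ↔ m.degree < d :=
  Set.Finite.mem_toFinset _

/-- The polynomial with prescribed coefficients on a finite set of exponents. -/
noncomputable def polyOfCoeffs {T : Finset (σ →₀ ℕ)} (f : T → R) : MvPolynomial σ R :=
  ∑ m : T, monomial m.1 (f m)

theorem map_polyOfCoeffs {T : Finset (σ →₀ ℕ)} (φ : R →+* S) (f : T → R) :
    map φ (polyOfCoeffs f) = polyOfCoeffs fun m => φ (f m) := by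
  simp [polyOfCoeffs]

theorem support_polyOfCoeffs_subset {T : Finset (σ →₀ ℕ)} (f : T → R) :
    (polyOfCoeffs f).support ⊆ T := by
  classical
  refine support_sum.trans (Finset.biUnion_subset.2 fun m _ => ?_)
  exact support_monomial_subset.trans (Finset.singleton_subset_iff.2 m.2)

theorem polyOfCoeffs_coeff {T : Finset (σ →₀ ℕ)} {F : MvPolynomial σ R} (hF : F.support ⊆ T) :
    polyOfCoeffs (fun m : T => coeff m.1 F) = F := by
  rw [polyOfCoeffs, Finset.sum_coe_sort T fun m => monomial m (coeff m F)]
  conv_rhs => rw [F.as_sum]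
  exact (Finset.sum_subset hF fun m _ hm => by rw [notMem_support_iff.1 hm, map_zero]).symm

theorem polyOfCoeffs_coeff_of_isHomogeneous [Finite σ] {d : ℕ} {F : MvPolynomial σ R}
    (hF : F.IsHomogeneous d) : polyOfCoeffs (fun m : exponentsEq σ d => coeff m.1 F) = F :=
  polyOfCoeffs_coeff fun _ hm => mem_exponentsEq.2 <| by
    by_contra hne
    exact mem_support_iff.1 hm (hF.coeff_eq_zero hne)

theorem totalDegree_polyOfCoeffs_lt [Finite σ] {d : ℕ} (hd : 0 < d) (f : exponentsLT σ d → R) :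
    (polyOfCoeffs f).totalDegree < d :=
  (Finset.sup_lt_iff hd).2 fun _ hm =>
    mem_exponentsLT.1 (support_polyOfCoeffs_subset f hm)

theorem polyOfCoeffs_coeff_of_totalDegree_lt [Finite σ] {d : ℕ} {F : MvPolynomial σ R}
    (hF : F.totalDegree < d) : polyOfCoeffs (fun m : exponentsLT σ d => coeff m.1 F) = F :=
  polyOfCoeffs_coeff fun _ hm => mem_exponentsLT.2 ((le_totalDegree hm).trans_lt hF)

end Coefficients

section Minors

theorem exists_isUnit_det_submatrix {K ι κ : Type*} [Field K] [Finite ι] [Fintype κ]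
    [DecidableEq κ] {A : Matrix ι κ K} (hA : LinearIndependent K A.col) :
    ∃ e : κ → ι, IsUnit (A.submatrix e id).det := by
  cases nonempty_fintype ι
  obtain ⟨κ', a, -, hspan, hli⟩ := exists_linearIndependent' K A.row
  have : Finite κ' := hli.finite
  let := Fintype.ofFinite κ'
  have hcard : Fintype.card κ = Fintype.card κ' :=
    calc Fintype.card κ = A.rank :=
        A.rank_transpose ▸ (LinearIndependent.rank_matrix (M := A.transpose) hA).symm
      _ = Module.finrank K (Submodule.span K (Set.range A.row)) := A.rank_eq_finrank_span_row
      _ = Fintype.card κ' := by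
        rw [← hspan, linearIndependent_iff_card_eq_finrank_span.1 hli, Set.finrank]
  let e := Fintype.equivOfCardEq hcard
  refine ⟨a ∘ e, (Matrix.isUnit_iff_isUnit_det _).1 (Matrix.linearIndependent_rows_iff_isUnit.1 ?_)⟩
  exact hli.comp e e.injective

end Minors

section LinearSubspaces

-- Choosing a maximal minor of largest value makes all entries integral, by Cramer's rule.
theorem exists_mul_inv_submatrix_mem {L ι κ : Type*} [Field L] [Finite ι] [Fintype κ]
    [DecidableEq κ] (V : ValuationSubring L) {M : Matrix ι κ L} (hM : LinearIndependent L M.col) :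
    ∃ e : κ → ι, IsUnit (M.submatrix e id).det ∧ ∀ i j, (M * (M.submatrix e id)⁻¹) i j ∈ V := by
  obtain ⟨e₀, he₀⟩ := exists_isUnit_det_submatrix hM
  have : Nonempty (κ → ι) := ⟨e₀⟩
  obtain ⟨e, he⟩ := Finite.exists_max fun e : κ → ι => V.valuation (M.submatrix e id).det
  have hdet : (M.submatrix e id).det ≠ 0 := fun h => he₀.ne_zero <|
    (map_eq_zero V.valuation).1 (le_zero_iff.1 ((he e₀).trans_eq (by rw [h, map_zero])))
  refine ⟨e, hdet.isUnit, fun i j => ?_⟩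
  have hentry : (M * (M.submatrix e id)⁻¹) i j =
      (M.submatrix (Function.update e j i) id).det / (M.submatrix e id).det := by
    have hrow : M.submatrix (Function.update e j i) id = (M.submatrix e id).updateRow j (M i) := by
      ext a b
      obtain rfl | hab := eq_or_ne a j
      · simp
      · simp [hab]
    have hcramer := congrFun
      (Matrix.det_smul_inv_vecMul_eq_cramer_transpose (M.submatrix e id) (M i) hdet.isUnit) j
    rw [Matrix.cramer_transpose_apply, ← hrow] at hcramer
    rw [← hcramer, Pi.smul_apply, smul_eq_mul, mul_div_cancel_left₀ _ hdet]
    rfl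
  rw [hentry, ← V.valuation_le_one_iff, map_div₀]
  exact div_le_one_of_le₀ (he _) zero_le

variable {R ι : Type*} [CommRing R] [Fintype ι]

/-- The point `y` lies on an `r`-dimensional linear subspace on which `h` vanishes. The subspace is
encoded by a parametrization `M` having a left inverse `N`, so that the notion makes sense over
every commutative ring and is given by polynomial equations. -/
def HasLinearSubspaceThrough (h : MvPolynomial ι R) (r : ℕ) (y : ι → R) : Prop :=
  ∃ (M : Matrix ι (Fin r) R) (N : Matrix (Fin r) ι R) (c : Fin r → R),
    N * M = 1 ∧ linSubst M h = 0 ∧ M.mulVec c = y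

theorem hasLinearSubspaceThrough_iff {K : Type*} [Field K] [Infinite K] {h : MvPolynomial ι K}
    {r : ℕ} {y : ι → K} : HasLinearSubspaceThrough h r y ↔
      ∃ W : Submodule K (ι → K), Module.finrank K W = r ∧ y ∈ W ∧ ∀ z ∈ W, eval z h = 0 := by
  classical
  constructor
  · rintro ⟨M, N, c, hNM, hMh, rfl⟩
    have hinj : Function.Injective M.mulVecLin := Function.LeftInverse.injective
      (g := N.mulVecLin) fun v => by simp [hNM]
    refine ⟨LinearMap.range M.mulVecLin, by simp [LinearMap.finrank_range_of_inj hinj],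
      ⟨c, rfl⟩, ?_⟩
    rintro _ ⟨v, rfl⟩
    rw [Matrix.mulVecLin_apply, ← eval_linSubst, hMh, map_zero]
  · rintro ⟨W, hW, hy, hWh⟩
    let e : (Fin r → K) ≃ₗ[K] W := (LinearEquiv.ofFinrankEq _ _ (by simp [hW]))
    obtain ⟨g, hg⟩ := (W.subtype.comp e.toLinearMap).exists_leftInverse_of_injective
      (LinearMap.ker_eq_bot.2 (W.subtype_injective.comp e.injective))
    refine ⟨LinearMap.toMatrix' (W.subtype.comp e.toLinearMap), LinearMap.toMatrix' g,
      e.symm ⟨y, hy⟩, ?_, funext fun v => ?_, ?_⟩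
    · rw [← LinearMap.toMatrix'_comp, hg, LinearMap.toMatrix'_id]
    · rw [eval_linSubst, LinearMap.toMatrix'_mulVec, map_zero]
      exact hWh _ (e v).2
    · simp [LinearMap.toMatrix'_mulVec]

theorem hasLinearSubspaceThrough_linSubst_iff [DecidableEq ι] {h : MvPolynomial ι R} {r : ℕ}
    {y : ι → R} (T : (Matrix ι ι R)ˣ) : HasLinearSubspaceThrough (linSubst T.val h) r y ↔
      HasLinearSubspaceThrough h r (T.val.mulVec y) := by
  constructor
  · rintro ⟨M, N, c, hNM, hMh, rfl⟩
    refine ⟨T.val * M, N * T⁻¹.val, c, ?_, by rw [← linSubst_linSubst, hMh], by simp⟩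
    rw [← Matrix.mul_assoc, Matrix.mul_assoc N, T.inv_mul, Matrix.mul_one, hNM]
  · rintro ⟨M, N, c, hNM, hMh, hy⟩
    refine ⟨T⁻¹.val * M, N * T.val, c, ?_, ?_, ?_⟩
    · rw [← Matrix.mul_assoc, Matrix.mul_assoc N, T.mul_inv, Matrix.mul_one, hNM]
    · rw [linSubst_linSubst, ← Matrix.mul_assoc, T.mul_inv, Matrix.one_mul, hMh]
    · rw [← Matrix.mulVec_mulVec, hy, Matrix.mulVec_mulVec, T.inv_mul, Matrix.one_mulVec]

theorem HasLinearSubspaceThrough.of_valuationSubring {L : Type*} [Field L] {V : ValuationSubring L}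
    {h : MvPolynomial ι V} {r : ℕ} {y : ι → V}
    (H : HasLinearSubspaceThrough (MvPolynomial.map V.subtype h) r (fun i => (y i : L))) :
    HasLinearSubspaceThrough h r y := by
  classical
  obtain ⟨M, N, c, hNM, hMh, hy⟩ := H
  have hM : LinearIndependent L M.col := Matrix.mulVec_injective_iff.1 <|
    Function.LeftInverse.injective (g := N.mulVec) fun v => by simp [hNM]
  obtain ⟨e, hdet, hV⟩ := exists_mul_inv_submatrix_mem V hM
  set B := M.submatrix e id
  let M₁ : Matrix ι (Fin r) V := Matrix.of fun i j => ⟨(M * B⁻¹) i j, hV i j⟩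
  have hM₁ : M₁.map V.subtype = M * B⁻¹ := rfl
  have hsub : (M * B⁻¹).submatrix e id = 1 := by
    rw [Matrix.submatrix_mul M B⁻¹ e id id Function.bijective_id]
    exact Matrix.mul_nonsing_inv B hdet
  refine ⟨M₁, (1 : Matrix ι ι V).submatrix e id, y ∘ e, ?_, ?_, ?_⟩
  · rw [← Matrix.submatrix_id_id M₁, ← Matrix.submatrix_mul _ _ _ _ _ Function.bijective_id,
      Matrix.one_mul]
    apply Matrix.map_injective V.subtype_injective
    dsimp only
    rw [Matrix.map_one _ V.subtype.map_zero V.subtype.map_one, ← hsub, ← hM₁]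
    rfl
  · refine MvPolynomial.map_injective V.subtype V.subtype_injective ?_
    rw [map_linSubst, hM₁, ← linSubst_linSubst, hMh, map_zero, map_zero]
  · have hBc : V.subtype ∘ y ∘ e = B.mulVec c := funext fun i => (congrFun hy (e i)).symm
    refine V.subtype_injective.comp_left ?_
    calc V.subtype ∘ M₁.mulVec (y ∘ e) = (M * B⁻¹).mulVec (B.mulVec c) := by
          rw [← hBc, ← hM₁]; exact funext fun i => RingHom.map_mulVec V.subtype _ _ i
      _ = V.subtype ∘ y := by
          rw [Matrix.mulVec_mulVec, Matrix.mul_assoc, Matrix.nonsing_inv_mul B hdet, Matrix.mul_one]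
          exact hy

/-- Indices of the unknowns `(M, N, c)` in `HasLinearSubspaceThrough`. -/
abbrev SubspaceUnknowns (ι : Type*) (r : ℕ) : Type _ := (ι × Fin r) ⊕ (Fin r × ι) ⊕ Fin r

/-- The equations over `ℤ` expressing `HasLinearSubspaceThrough` in terms of the coefficients of a
form of degree `d` and the coordinates of a point. -/
def subspaceEquations (ι : Type*) [Fintype ι] (d r : ℕ) :
    Set (MvPolynomial ((exponentsEq ι d ⊕ ι) ⊕ SubspaceUnknowns ι r) ℤ) :=
  let h := polyOfCoeffs fun m : exponentsEq ι d => X (Sum.inl (Sum.inl m))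
  let M : Matrix ι (Fin r) (MvPolynomial ((exponentsEq ι d ⊕ ι) ⊕ SubspaceUnknowns ι r) ℤ) :=
    .of fun i j => X (Sum.inr (Sum.inl (i, j)))
  let N : Matrix (Fin r) ι (MvPolynomial ((exponentsEq ι d ⊕ ι) ⊕ SubspaceUnknowns ι r) ℤ) :=
    .of fun i j => X (Sum.inr (Sum.inr (Sum.inl (i, j))))
  let A : Matrix (Fin r) (Fin r) _ := N * M - 1
  (Set.range fun ij : Fin r × Fin r => A ij.1 ij.2) ∪ (Set.range fun m => coeff m (linSubst M h)) ∪
    Set.range fun i => M.mulVec (fun j => X (.inr (.inr (.inr j)))) i - X (.inl (.inr i))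

theorem solvableAt_subspaceEquations_iff {d r : ℕ} (f : exponentsEq ι d → R) (y : ι → R) :
    SolvableAt (subspaceEquations ι d r) (Sum.elim f y) ↔
      HasLinearSubspaceThrough (polyOfCoeffs f) r y := by
  classical
  have hsol (t : SubspaceUnknowns ι r → R) :
      (∀ p ∈ subspaceEquations ι d r, aeval (Sum.elim (Sum.elim f y) t) p = 0) ↔
        (Matrix.of fun i j => t (.inr (.inl (i, j)))) * (Matrix.of fun i j => t (.inl (i, j))) = 1 ∧
          linSubst (.of fun i j => t (.inl (i, j))) (polyOfCoeffs f) = 0 ∧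
          Matrix.mulVec (.of fun i j => t (.inl (i, j))) (fun i => t (.inr (.inr i))) = y := by
    let φ : MvPolynomial ((exponentsEq ι d ⊕ ι) ⊕ SubspaceUnknowns ι r) ℤ →+* R :=
      (aeval (Sum.elim (Sum.elim f y) t) : _ →ₐ[ℤ] R).toRingHom
    have hM : (Matrix.of fun (i : ι) (j : Fin r) => t (.inl (i, j))) =
        (Matrix.of fun i j => X (Sum.inr (Sum.inl (i, j)))).map φ := by
      ext i j; simp [φ]
    have hN : (Matrix.of fun (i : Fin r) (j : ι) => t (.inr (.inl (i, j)))) =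
        (Matrix.of fun i j => X (Sum.inr (Sum.inr (Sum.inl (i, j))))).map φ := by
      ext i j; simp [φ]
    have hh : polyOfCoeffs f =
        MvPolynomial.map φ (polyOfCoeffs fun m => X (Sum.inl (Sum.inl m))) := by
      rw [map_polyOfCoeffs]; simp [φ]
    have hc : (fun i => t (.inr (.inr i))) = φ ∘ fun i => X (Sum.inr (Sum.inr (Sum.inr i))) := by
      ext i; simp [φ]
    have hy : y = fun i => φ (X (Sum.inl (Sum.inr i))) := by ext i; simp [φ]
    rw [hM, hN, hh, hc, ← Matrix.map_mul, ← map_linSubst, ← sub_eq_zero (b := (1 : Matrix _ _ R)),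
      ← Matrix.map_one φ φ.map_zero φ.map_one, ← Matrix.map_sub φ (map_sub φ)]
    conv_rhs => rw [hy]
    simp only [← Matrix.ext_iff, MvPolynomial.ext_iff, funext_iff, coeff_map, coeff_zero,
      Matrix.map_apply, Matrix.zero_apply, ← RingHom.map_mulVec, ← sub_eq_zero (b := φ (X _)),
      ← map_sub]
    simp only [subspaceEquations, Set.mem_union, or_imp, forall_and, Set.forall_mem_range,
      Prod.forall, and_assoc]
    rfl
  simp only [SolvableAt, hsol]
  constructor
  · rintro ⟨t, hNM, hMh, hy⟩
    exact ⟨_, _, _, hNM, hMh, hy⟩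
  · rintro ⟨M, N, c, hNM, hMh, hy⟩
    exact ⟨Sum.elim (fun ij => M ij.1 ij.2) (Sum.elim (fun ij => N ij.1 ij.2) c), hNM, hMh, hy⟩

theorem exists_finset_hasLinearSubspaceThrough_iff (ι : Type u) [Fintype ι] (d r : ℕ) :
    ∃ G : Finset (MvPolynomial (exponentsEq ι d ⊕ ι) ℤ), ∀ (E : Type v) [Field E] [IsAlgClosed E]
      (h : MvPolynomial ι E), h.IsHomogeneous d → ∀ y : ι → E, HasLinearSubspaceThrough h r y ↔
        ∀ g ∈ G, aeval (Sum.elim (fun m : exponentsEq ι d => coeff m.1 h) y) g = 0 := by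
  obtain ⟨G, hG⟩ := exists_finset_solvableAt_iff.{u, v} (Z := subspaceEquations ι d r)
    fun L _ V s hs => by
      rw [← Sum.elim_comp_inl_inr s] at hs ⊢
      have hs' : SolvableAt (subspaceEquations ι d r)
        (Sum.elim (fun m => (s (.inl m) : L)) fun i => (s (.inr i) : L)) := by
        convert hs using 1
        ext (m | i) <;> rfl
      rw [solvableAt_subspaceEquations_iff] at hs' ⊢
      refine HasLinearSubspaceThrough.of_valuationSubring ?_
      rwa [map_polyOfCoeffs]
  refine ⟨G, fun E _ _ h hh y => ?_⟩
  rw [← hG, solvableAt_subspaceEquations_iff, polyOfCoeffs_coeff_of_isHomogeneous hh]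

end LinearSubspaces

section Factorization

variable {R σ : Type*} [CommRing R]

/-- `F` is a product of two polynomials of total degree less than `d`. For forms of degree `d`
over a field this is the negation of irreducibility, but in contrast to the latter it is a closed
condition on the coefficients. -/
def FactorsBelow (F : MvPolynomial σ R) (d : ℕ) : Prop :=
  ∃ G H : MvPolynomial σ R, F = G * H ∧ G.totalDegree < d ∧ H.totalDegree < d

theorem irreducible_iff_not_factorsBelow {K : Type*} [Field K] {F : MvPolynomial σ K} {d : ℕ}
    (hF : F.IsHomogeneous d) (hF0 : F ≠ 0) (hd : 0 < d) :
    Irreducible F ↔ ¬ FactorsBelow F d := by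
  have hunit {G : MvPolynomial σ K} (hG : G ≠ 0) : IsUnit G ↔ G.totalDegree = 0 := by
    rw [isUnit_iff_totalDegree_of_isReduced, and_iff_right_iff_imp]
    intro h
    rw [totalDegree_eq_zero_iff_eq_C.1 h, coeff_zero_C, isUnit_iff_ne_zero]
    exact fun h0 => hG (by rw [totalDegree_eq_zero_iff_eq_C.1 h, h0, C_0])
  have hdeg : F.totalDegree = d := hF.totalDegree hF0
  constructor
  · rintro hirr ⟨G, H, rfl, hG, hH⟩
    have hG0 := left_ne_zero_of_mul hF0
    have hH0 := right_ne_zero_of_mul hF0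
    rw [totalDegree_mul_of_isDomain hG0 hH0] at hdeg
    rcases hirr.isUnit_or_isUnit rfl with hu | hu
    · rw [(hunit hG0).1 hu] at hdeg; omega
    · rw [(hunit hH0).1 hu] at hdeg; omega
  · refine fun hred => ⟨fun hu => hd.ne' (hdeg.symm.trans ((hunit hF0).1 hu)), ?_⟩
    rintro G H rfl
    have hG0 := left_ne_zero_of_mul hF0
    have hH0 := right_ne_zero_of_mul hF0
    rw [totalDegree_mul_of_isDomain hG0 hH0] at hdeg
    by_contra! hcon
    rw [hunit hG0, hunit hH0] at hcon
    exact hred ⟨G, H, rfl, by omega, by omega⟩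

theorem exists_eq_C_mul_map_residue_ne_zero {L : Type*} [Field L] (V : ValuationSubring L)
    {G : MvPolynomial σ L} (hG : G ≠ 0) : ∃ (c : L) (G₁ : MvPolynomial σ V),
      G = C c * map V.subtype G₁ ∧ map (IsLocalRing.residue V) G₁ ≠ 0 ∧
        G₁.totalDegree = G.totalDegree := by
  obtain ⟨m, hm, hmax⟩ := G.support.exists_max_image (fun m => V.valuation (coeff m G))
    (support_nonempty.2 hG)
  have hc : coeff m G ≠ 0 := mem_support_iff.1 hm
  have hint (m' : σ →₀ ℕ) : (coeff m G)⁻¹ * coeff m' G ∈ V := by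
    by_cases hm' : m' ∈ G.support
    · rw [← V.valuation_le_one_iff, map_mul, map_inv₀, mul_comm, ← div_eq_mul_inv]
      exact div_le_one_of_le₀ (hmax m' hm') zero_le
    · rw [notMem_support_iff.1 hm', mul_zero]; exact V.zero_mem
  obtain ⟨G₁, hG₁⟩ : ∃ G₁, map V.subtype G₁ = C (coeff m G)⁻¹ * G := by
    refine mem_range_map_iff_coeffs_subset.2 fun x hx => ?_
    obtain ⟨m', -, rfl⟩ := mem_coeffs_iff.1 hx
    rw [coeff_C_mul]
    exact ⟨⟨_, hint m'⟩, rfl⟩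
  have hG' : G = C (coeff m G) * map V.subtype G₁ := by
    rw [hG₁, ← mul_assoc, ← C_mul, mul_inv_cancel₀ hc, C_1, one_mul]
  refine ⟨coeff m G, G₁, hG', fun h0 => ?_, ?_⟩
  · have hone : coeff m G₁ = 1 := V.subtype_injective <| by
      rw [← coeff_map, hG₁, coeff_C_mul, inv_mul_cancel₀ hc, map_one]
    simpa [coeff_map, hone] using congrArg (coeff m) h0
  · conv_rhs => rw [hG', C_mul', totalDegree, support_smul_eq hc,
      support_map_of_injective _ V.subtype_injective]
    rfl

-- Gauss's lemma: the product of the primitive parts of two factors is again primitive.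
theorem FactorsBelow.of_valuationSubring {L : Type*} [Field L] {V : ValuationSubring L}
    {F : MvPolynomial σ V} {d : ℕ} (h : FactorsBelow (map V.subtype F) d) : FactorsBelow F d := by
  obtain ⟨G, H, hGH, hG, hH⟩ := h
  obtain rfl | hF := eq_or_ne F 0
  · exact ⟨0, 0, by simp, by simpa using hG.pos, by simpa using hG.pos⟩
  have hGH0 : G * H ≠ 0 := hGH ▸ (map_ne_zero_iff _ (map_injective _ V.subtype_injective)).2 hF
  obtain ⟨c, G₁, rfl, hG₁, hGdeg⟩ :=
    exists_eq_C_mul_map_residue_ne_zero V (left_ne_zero_of_mul hGH0)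
  obtain ⟨e, H₁, rfl, hH₁, hHdeg⟩ :=
    exists_eq_C_mul_map_residue_ne_zero V (right_ne_zero_of_mul hGH0)
  obtain ⟨m, hm⟩ := ne_zero_iff.1 (mul_ne_zero hG₁ hH₁)
  rw [← map_mul, coeff_map, IsLocalRing.residue_ne_zero_iff_isUnit] at hm
  obtain ⟨v, hv⟩ := hm
  have hscalar : map V.subtype F = C (c * e) * map V.subtype (G₁ * H₁) := by
    rw [hGH, map_mul _ G₁, C_mul]; ring
  have hce : V.subtype (coeff m F * ↑v⁻¹) = c * e := by
    have hcoeff := congrArg (coeff m) hscalar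
    rw [coeff_map, coeff_C_mul, coeff_map, ← hv] at hcoeff
    rw [map_mul, hcoeff, mul_assoc, ← map_mul, v.mul_inv, map_one, mul_one]
  refine ⟨C (coeff m F * ↑v⁻¹) * G₁, H₁, ?_, ?_, hHdeg.trans_lt hH⟩
  · apply map_injective V.subtype V.subtype_injective
    rw [hscalar, mul_assoc, map_mul _ (C _), map_C, hce]
  · exact (totalDegree_mul _ _).trans_lt (by rwa [totalDegree_C, zero_add, hGdeg])

/-- The equations over `ℤ` expressing `FactorsBelow` in terms of the coefficients of a form of
degree `d`; the unknowns are the coefficients of the two factors. -/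
def factorEquations (σ : Type*) [Finite σ] (d : ℕ) :
    Set (MvPolynomial (exponentsEq σ d ⊕ exponentsLT σ d ⊕ exponentsLT σ d) ℤ) :=
  Set.range fun m => coeff m (polyOfCoeffs (fun i : exponentsLT σ d => X (.inr (.inl i))) *
    polyOfCoeffs (fun i : exponentsLT σ d => X (.inr (.inr i))) -
      polyOfCoeffs fun i : exponentsEq σ d => X (.inl i))

theorem solvableAt_factorEquations_iff [Finite σ] {d : ℕ} (hd : 0 < d) (f : exponentsEq σ d → R) :
    SolvableAt (factorEquations σ d) f ↔ FactorsBelow (polyOfCoeffs f) d := by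
  have hsol (t : exponentsLT σ d ⊕ exponentsLT σ d → R) :
      (∀ p ∈ factorEquations σ d, aeval (Sum.elim f t) p = 0) ↔
        polyOfCoeffs f = polyOfCoeffs (fun i => t (.inl i)) * polyOfCoeffs fun i => t (.inr i) := by
    rw [eq_comm, ← sub_eq_zero, MvPolynomial.ext_iff, factorEquations, Set.forall_mem_range]
    refine forall_congr' fun m => ?_
    let φ := (aeval (Sum.elim f t) : _ →ₐ[ℤ] R).toRingHom
    rw [← show φ _ = aeval (Sum.elim f t) _ from rfl, ← coeff_map]
    simp [map_polyOfCoeffs, φ]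
  simp only [SolvableAt, hsol]
  constructor
  · rintro ⟨t, ht⟩
    exact ⟨_, _, ht, totalDegree_polyOfCoeffs_lt hd _, totalDegree_polyOfCoeffs_lt hd _⟩
  · rintro ⟨G, H, hGH, hG, hH⟩
    refine ⟨Sum.elim (fun m => coeff m.1 G) fun m => coeff m.1 H, ?_⟩
    simpa [polyOfCoeffs_coeff_of_totalDegree_lt hG, polyOfCoeffs_coeff_of_totalDegree_lt hH]

theorem exists_finset_factorsBelow_iff (σ : Type u) [Finite σ] {d : ℕ} (hd : 0 < d) :
    ∃ G : Finset (MvPolynomial (exponentsEq σ d) ℤ), ∀ (E : Type v) [Field E] [IsAlgClosed E]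
      (F : MvPolynomial σ E), F.IsHomogeneous d →
        (FactorsBelow F d ↔ ∀ g ∈ G, aeval (fun m : exponentsEq σ d => coeff m.1 F) g = 0) := by
  obtain ⟨G, hG⟩ := exists_finset_solvableAt_iff.{u, v} (Z := factorEquations σ d)
    fun L _ V s hs => by
      rw [solvableAt_factorEquations_iff hd] at hs ⊢
      refine FactorsBelow.of_valuationSubring ?_
      rwa [map_polyOfCoeffs]
  refine ⟨G, fun E _ _ F hF => ?_⟩
  rw [← hG, solvableAt_factorEquations_iff hd, polyOfCoeffs_coeff_of_isHomogeneous hF]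

end Factorization

section Divisibility

variable {R S σ : Type*} [CommRing R] [CommRing S]

theorem dvd_of_forall_eval_eq_zero {K : Type*} [Field K] [IsAlgClosed K] [Finite σ]
    {F G : MvPolynomial σ K} (hF : Prime F) (hG : ∀ x, eval x F = 0 → eval x G = 0) : F ∣ G := by
  have hprime : (Ideal.span {F}).IsPrime := (Ideal.span_singleton_prime hF.ne_zero).2 hF
  rw [← Ideal.mem_span_singleton, ← hprime.radical, ← vanishingIdeal_zeroLocus_eq_radical (K := K)]
  exact fun x hx => hG x (hx F (Ideal.mem_span_singleton_self F))

/-- The family consisting of `P` and of the products of `h` with all monomials of degree `≤ D`. -/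
noncomputable def consMultiples [Finite σ] (D : ℕ) (h P : MvPolynomial σ R) :
    Option (exponentsLT σ (D + 1)) → MvPolynomial σ R
  | none => P
  | some m => monomial m.1 1 * h

theorem not_dvd_iff_linearIndependent_consMultiples {K : Type*} [Field K] [Finite σ] {D : ℕ}
    {h P : MvPolynomial σ K} (hh : h ≠ 0) (hP : P.totalDegree ≤ D) :
    ¬ h ∣ P ↔ LinearIndependent K (consMultiples D h P) := by
  have hsome : consMultiples D h P ∘ some = LinearMap.mulRight K h ∘
      fun m : exponentsLT σ (D + 1) => monomial m.1 1 := rfl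
  have hli : LinearIndependent K (consMultiples D h P ∘ some) := by
    rw [hsome]
    refine LinearIndependent.map' ?_ _ (LinearMap.ker_eq_bot.2 (mul_left_injective₀ hh))
    exact (basisMonomials σ K).linearIndependent.comp _ Subtype.val_injective
  rw [linearIndependent_option, and_iff_right hli, hsome, Set.range_comp, Submodule.span_image]
  refine not_congr ⟨?_, ?_⟩
  · rintro ⟨Q, rfl⟩
    refine ⟨Q, ?_, mul_comm _ _⟩
    obtain rfl | hQ := eq_or_ne Q 0
    · exact zero_mem _
    rw [totalDegree_mul_of_isDomain hh hQ] at hP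
    rw [SetLike.mem_coe, ← polyOfCoeffs_coeff_of_totalDegree_lt (d := D + 1) (F := Q) (by omega),
      polyOfCoeffs]
    refine Submodule.sum_mem _ fun m _ => ?_
    rw [← mul_one (coeff m.1 Q), ← smul_eq_mul, ← smul_monomial]
    exact Submodule.smul_mem _ _ (Submodule.subset_span ⟨m, rfl⟩)
  · rintro ⟨Q, -, hQ⟩
    exact ⟨Q, (mul_comm _ _).trans hQ |>.symm⟩

theorem linearIndependent_iff_of_support_subset {K κ : Type*} [Field K] {T : Finset (σ →₀ ℕ)}
    {v : κ → MvPolynomial σ K} (hv : ∀ j, (v j).support ⊆ T) :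
    LinearIndependent K v ↔
      LinearIndependent K (Matrix.of fun (i : T) j => coeff i.1 (v j)).col := by
  constructor
  · intro hli
    let ofCoeffs : (T → K) →ₗ[K] MvPolynomial σ K := 
      ∑ i : T, (monomial i.1 : K →ₗ[K] _) ∘ₗ LinearMap.proj i
    refine LinearIndependent.of_comp ofCoeffs ?_
    convert hli using 1
    ext1 j
    rw [← polyOfCoeffs_coeff (hv j)]
    simp only [ofCoeffs, polyOfCoeffs, Function.comp_apply, LinearMap.sum_apply,
      LinearMap.comp_apply, LinearMap.proj_apply]
    rfl
  · exact LinearIndependent.of_comp (LinearMap.pi fun i : T => lcoeff K i.1)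

/-- The coefficient matrix of `consMultiples`. Its maximal minors decide whether `h ∣ P`. -/
noncomputable def divisibilityMatrix [Finite σ] (d D : ℕ) (h P : MvPolynomial σ R) :
    Matrix (exponentsLT σ (D + d + 1)) (Option (exponentsLT σ (D + 1))) R :=
  .of fun i j => coeff i.1 (consMultiples D h P j)

theorem map_divisibilityMatrix [Finite σ] (φ : R →+* S) (d D : ℕ) (h P : MvPolynomial σ R) :
    (divisibilityMatrix d D h P).map φ = divisibilityMatrix d D (map φ h) (map φ P) := by
  ext i (_ | j) <;> simp [divisibilityMatrix, consMultiples, ← coeff_map]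

open Classical in
theorem not_dvd_iff_exists_det_ne_zero {K : Type*} [Field K] [Finite σ] {d D : ℕ}
    {h P : MvPolynomial σ K} (hh : h ≠ 0) (hhd : h.totalDegree ≤ d) (hP : P.totalDegree ≤ D) :
    ¬ h ∣ P ↔ ∃ e, ((divisibilityMatrix d D h P).submatrix e id).det ≠ 0 := by
  have hsupp (j) : (consMultiples D h P j).support ⊆ exponentsLT σ (D + d + 1) := by
    refine fun m hm => mem_exponentsLT.2 (Nat.lt_succ_of_le ((le_totalDegree hm).trans ?_))
    rcases j with _ | j
    · exact hP.trans (Nat.le_add_right _ _)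
    · refine (totalDegree_mul _ _).trans (add_le_add ?_ hhd)
      exact (totalDegree_monomial_le _ _).trans (Nat.lt_succ_iff.1 (mem_exponentsLT.1 j.2))
  rw [not_dvd_iff_linearIndependent_consMultiples hh hP,
    linearIndependent_iff_of_support_subset hsupp]
  constructor
  · intro hli
    obtain ⟨e, he⟩ := exists_isUnit_det_submatrix hli
    exact ⟨e, he.ne_zero⟩
  · rintro ⟨e, he⟩
    have hcols : LinearIndependent K ((divisibilityMatrix d D h P).submatrix e id).col :=
      Matrix.linearIndependent_cols_iff_isUnit.2 ((Matrix.isUnit_iff_isUnit_det _).2 he.isUnit)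
    exact LinearIndependent.of_comp (LinearMap.funLeft K K e) hcols

end Divisibility

section Noncovered

/-- The hypersurface `h = 0` is not covered by the `r`-dimensional linear subspaces of the affine
cone contained in it. -/
def Noncovered {K ι : Type*} [CommRing K] [Fintype ι] (h : MvPolynomial ι K) (r : ℕ) : Prop :=
  ∃ y, eval y h = 0 ∧ ¬ HasLinearSubspaceThrough h r y

/-- The specialization at `h` of the first block of variables of `g`. -/
noncomputable def specializeCoeffs {R ι : Type*} [CommRing R] [Finite ι] {d : ℕ}
    (g : MvPolynomial (exponentsEq ι d ⊕ ι) ℤ) (h : MvPolynomial ι R) : MvPolynomial ι R :=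
  aeval (Sum.elim (fun m => C (coeff m.1 h)) X) g

theorem eval_specializeCoeffs {R ι : Type*} [CommRing R] [Finite ι] {d : ℕ}
    (g : MvPolynomial (exponentsEq ι d ⊕ ι) ℤ) (h : MvPolynomial ι R) (y : ι → R) :
    eval y (specializeCoeffs g h) =
      aeval (Sum.elim (fun m : exponentsEq ι d => coeff m.1 h) y) g := by
  induction g using MvPolynomial.induction_on with
  | C a => simp [specializeCoeffs]
  | add p q hp hq => simp_all [specializeCoeffs]
  | mul_X p i hp => rcases i with i | i <;> simp_all [specializeCoeffs]

theorem map_specializeCoeffs {R S ι : Type*} [CommRing R] [CommRing S] [Finite ι] {d : ℕ}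
    (g : MvPolynomial (exponentsEq ι d ⊕ ι) ℤ) (φ : R →+* S) (h : MvPolynomial ι R) :
    map φ (specializeCoeffs g h) = specializeCoeffs g (map φ h) := by
  induction g using MvPolynomial.induction_on with
  | C a => simp [specializeCoeffs]
  | add p q hp hq => simp_all [specializeCoeffs]
  | mul_X p i hp => rcases i with i | i <;> simp_all [specializeCoeffs, coeff_map]

theorem noncovered_iff_exists_not_dvd {E ι : Type*} [Field E] [IsAlgClosed E] [Fintype ι] {d r : ℕ}
    {G : Finset (MvPolynomial (exponentsEq ι d ⊕ ι) ℤ)} {h : MvPolynomial ι E}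
    (hG : ∀ y : ι → E, HasLinearSubspaceThrough h r y ↔
      ∀ g ∈ G, aeval (Sum.elim (fun m : exponentsEq ι d => coeff m.1 h) y) g = 0) :
    (Noncovered h r → ∃ g ∈ G, ¬ h ∣ specializeCoeffs g h) ∧
      (Irreducible h → (∃ g ∈ G, ¬ h ∣ specializeCoeffs g h) → Noncovered h r) := by
  simp only [← eval_specializeCoeffs] at hG
  constructor
  · rintro ⟨y, hy, hyn⟩
    obtain ⟨g, hg, hne⟩ : ∃ g ∈ G, eval y (specializeCoeffs g h) ≠ 0 := by
      simpa [hG] using hyn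
    refine ⟨g, hg, fun ⟨Q, hQ⟩ => hne ?_⟩
    rw [hQ, map_mul, hy, zero_mul]
  · rintro hirr ⟨g, hg, hndvd⟩
    by_contra hcov
    simp only [Noncovered, not_exists, not_and, not_not] at hcov
    exact hndvd (dvd_of_forall_eval_eq_zero hirr.prime fun y hy => (hG y).1 (hcov y hy) g hg)

-- For irreducible `h` the two implications combine to an equivalence: noncoveredness is open.
theorem exists_finset_noncovered (ι : Type u) [Fintype ι] (d r : ℕ) :
    ∃ G : Finset (MvPolynomial (exponentsEq ι d) ℤ), ∀ (E : Type v) [Field E] [IsAlgClosed E]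
      (h : MvPolynomial ι E), h.IsHomogeneous d → h ≠ 0 →
        (Noncovered h r → ∃ g ∈ G, aeval (fun m : exponentsEq ι d => coeff m.1 h) g ≠ 0) ∧
          (Irreducible h → (∃ g ∈ G, aeval (fun m : exponentsEq ι d => coeff m.1 h) g ≠ 0) →
            Noncovered h r) := by
  classical
  obtain ⟨G, hG⟩ := exists_finset_hasLinearSubspaceThrough_iff.{u, v} ι d r
  let h₀ : MvPolynomial ι (MvPolynomial (exponentsEq ι d) ℤ) := polyOfCoeffs X
  let D (g : MvPolynomial (exponentsEq ι d ⊕ ι) ℤ) : ℕ := (specializeCoeffs g h₀).totalDegree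
  let A (g) := divisibilityMatrix d (D g) h₀ (specializeCoeffs g h₀)
  refine ⟨G.biUnion fun g => Finset.univ.image fun e => ((A g).submatrix e id).det,
    fun E _ _ h hh hne => ?_⟩
  let φ : MvPolynomial (exponentsEq ι d) ℤ →+* E :=
    (aeval fun m : exponentsEq ι d => coeff m.1 h : _ →ₐ[ℤ] E).toRingHom
  have hφh : map φ h₀ = h := by
    rw [map_polyOfCoeffs]
    simpa [φ] using polyOfCoeffs_coeff_of_isHomogeneous hh
  have hdeg (g) : (specializeCoeffs g h).totalDegree ≤ D g := by
    rw [← hφh, ← map_specializeCoeffs]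
    exact Finset.sup_mono (support_map_subset _ _)
  have hndvd (g) : ¬ h ∣ specializeCoeffs g h ↔ ∃ e, φ ((A g).submatrix e id).det ≠ 0 := by
    rw [not_dvd_iff_exists_det_ne_zero hne (hh.totalDegree_le) (hdeg g)]
    conv_lhs => rw [← hφh, ← map_specializeCoeffs]
    simp only [RingHom.map_det, ← map_divisibilityMatrix]
    rfl
  have hopen : (∃ g ∈ G, ¬ h ∣ specializeCoeffs g h) ↔
      ∃ g ∈ G.biUnion fun g => Finset.univ.image fun e => ((A g).submatrix e id).det, φ g ≠ 0 := by
    simp [hndvd]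
  have hiff := noncovered_iff_exists_not_dvd (hG E h hh)
  rwa [hopen] at hiff

end Noncovered

section Hyperplane

theorem map_aeval_int {R S σ : Type*} [CommRing R] [CommRing S] (φ : R →+* S) (f : σ → R)
    (g : MvPolynomial σ ℤ) : φ (aeval f g) = aeval (fun i => φ (f i)) g :=
  DFunLike.congr_fun (comp_aeval f φ.toIntAlgHom) g

variable {R S : Type*} [CommRing R] [CommRing S] {n : ℕ}

/-- The parametrization `y ↦ (a_u y_j)_j`, completed by `- ∑ a_j y_j` in position `u`, of the
hyperplane `∑ a_i x_i = 0`. It is polynomial in `a`, and bijective where `a_u` is invertible. -/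
def hyperplaneParam (a : Fin (n + 1) → R) (u : Fin (n + 1)) : Matrix (Fin (n + 1)) (Fin n) R :=
  .of (u.insertNth (α := fun _ => Fin n → R) (fun j => -a (u.succAbove j))
    fun i => a u • (1 : Matrix (Fin n) (Fin n) R) i)

theorem map_hyperplaneParam (φ : R →+* S) (a : Fin (n + 1) → R) (u : Fin (n + 1)) :
    (hyperplaneParam a u).map φ = hyperplaneParam (φ ∘ a) u := by
  ext i j
  induction i using Fin.succAboveCases u with
  | x => simp [hyperplaneParam]
  | p i => simp [hyperplaneParam, Matrix.one_apply, apply_ite φ]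

theorem hyperplaneParam_mulVec (a : Fin (n + 1) → R) (u : Fin (n + 1)) (y : Fin n → R) :
    (hyperplaneParam a u).mulVec y =
      u.insertNth (α := fun _ => R) (-∑ j, a (u.succAbove j) * y j) (a u • y) := by
  ext i
  induction i using Fin.succAboveCases u with
  | x => simp [hyperplaneParam, Matrix.mulVec, dotProduct]
  | p i => simp [hyperplaneParam, Matrix.mulVec, dotProduct, Matrix.one_apply]

theorem dotProduct_hyperplaneParam_mulVec (a : Fin (n + 1) → R) (u : Fin (n + 1)) (y : Fin n → R) :
    a ⬝ᵥ (hyperplaneParam a u).mulVec y = 0 := by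
  rw [hyperplaneParam_mulVec, dotProduct, Fin.sum_univ_succAbove _ u]
  simp [Finset.mul_sum, mul_left_comm]

variable {K : Type*} [Field K]

/-- The left inverse of `hyperplaneParam a u`. -/
def hyperplaneCoords (a : Fin (n + 1) → K) (u : Fin (n + 1)) : Matrix (Fin n) (Fin (n + 1)) K :=
  .of fun j => Pi.single (u.succAbove j) (a u)⁻¹

theorem hyperplaneCoords_mulVec (a : Fin (n + 1) → K) (u : Fin (n + 1)) (x : Fin (n + 1) → K) :
    (hyperplaneCoords a u).mulVec x = fun j => (a u)⁻¹ * x (u.succAbove j) := by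
  ext j
  simp [hyperplaneCoords, Matrix.mulVec]

theorem hyperplaneCoords_mul_hyperplaneParam {a : Fin (n + 1) → K} {u : Fin (n + 1)}
    (hu : a u ≠ 0) : hyperplaneCoords a u * hyperplaneParam a u = 1 := by
  refine Matrix.mulVec_injective (funext fun y => ?_)
  rw [← Matrix.mulVec_mulVec, hyperplaneParam_mulVec, hyperplaneCoords_mulVec]
  ext j
  simp [hu]

theorem hyperplaneParam_mulVec_hyperplaneCoords_mulVec {a x : Fin (n + 1) → K} {u : Fin (n + 1)}
    (hu : a u ≠ 0) (hx : a ⬝ᵥ x = 0) :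
    (hyperplaneParam a u).mulVec ((hyperplaneCoords a u).mulVec x) = x := by
  rw [hyperplaneParam_mulVec, hyperplaneCoords_mulVec]
  ext i
  induction i using Fin.succAboveCases u with
  | x =>
    rw [dotProduct, Fin.sum_univ_succAbove _ u, add_comm, ← neg_eq_iff_add_eq_zero] at hx
    have hsum : ∑ j, a (u.succAbove j) * ((a u)⁻¹ * x (u.succAbove j)) =
        (a u)⁻¹ * ∑ j, a (u.succAbove j) * x (u.succAbove j) := by
      simp only [Finset.mul_sum, mul_left_comm]
    rw [Fin.insertNth_apply_same, hsum, ← mul_neg, hx, inv_mul_cancel_left₀ hu]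
  | p i => simp [hu]

theorem exists_isUnit_eq_hyperplaneParam_mul {a : Fin (n + 1) → K} {u : Fin (n + 1)}
    (hu : a u ≠ 0) {A : Matrix (Fin (n + 1)) (Fin n) K} (hA : A.mulVecLin.ker = ⊥)
    (haA : ∀ y, a ⬝ᵥ A.mulVec y = 0) :
    ∃ T : (Matrix (Fin n) (Fin n) K)ˣ, A = hyperplaneParam a u * T.val := by
  have hfac : hyperplaneParam a u * (hyperplaneCoords a u * A) = A :=
    Matrix.mulVec_injective <| funext fun y => by
      rw [← Matrix.mulVec_mulVec, ← Matrix.mulVec_mulVec,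
        hyperplaneParam_mulVec_hyperplaneCoords_mulVec hu (haA y)]
  have hinj : Function.Injective (hyperplaneCoords a u * A).mulVec := fun y z hyz => by
    refine LinearMap.ker_eq_bot.1 hA ?_
    rw [Matrix.mulVecLin_apply, Matrix.mulVecLin_apply, ← hfac, ← Matrix.mulVec_mulVec, hyz,
      Matrix.mulVec_mulVec]
  exact ⟨(Matrix.mulVec_injective_iff_isUnit.1 hinj).unit, hfac.symm⟩

/-- The section of `F = 0` by the hyperplane `∑ a_i x_i = 0`, in the coordinates of
`hyperplaneParam a u`. -/
noncomputable def hyperplaneSection {R : Type*} [CommRing R] (F : MvPolynomial (Fin (n + 1)) R)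
    (a : Fin (n + 1) → R) (u : Fin (n + 1)) : MvPolynomial (Fin n) R :=
  linSubst (hyperplaneParam a u) F

theorem map_hyperplaneSection (φ : R →+* S) (F : MvPolynomial (Fin (n + 1)) R)
    (a : Fin (n + 1) → R) (u : Fin (n + 1)) :
    map φ (hyperplaneSection F a u) = hyperplaneSection (map φ F) (φ ∘ a) u := by
  rw [hyperplaneSection, map_linSubst, map_hyperplaneParam, hyperplaneSection]

theorem isHomogeneous_hyperplaneSection {F : MvPolynomial (Fin (n + 1)) R} {d : ℕ}
    (hF : F.IsHomogeneous d) (a : Fin (n + 1) → R) (u : Fin (n + 1)) :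
    (hyperplaneSection F a u).IsHomogeneous d :=
  isHomogeneous_linSubst _ hF

/-- The value of `g` at the coefficients of the hyperplane section `hyperplaneSection F a u`, as a
polynomial in `a`. -/
noncomputable def sectionCondition {d : ℕ} (g : MvPolynomial (exponentsEq (Fin n) d) ℤ)
    (F : MvPolynomial (Fin (n + 1)) R) (u : Fin (n + 1)) : MvPolynomial (Fin (n + 1)) R :=
  aeval (fun m => coeff m.1 (hyperplaneSection (map C F) X u)) g

theorem map_sectionCondition {d : ℕ} (g : MvPolynomial (exponentsEq (Fin n) d) ℤ) (φ : R →+* S)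
    (F : MvPolynomial (Fin (n + 1)) R) (u : Fin (n + 1)) :
    map φ (sectionCondition g F u) = sectionCondition g (map φ F) u := by
  have hcomp : (map φ).comp C = (C : S →+* MvPolynomial (Fin (n + 1)) S).comp φ :=
    RingHom.ext (map_C φ)
  have hsec : map (map φ) (hyperplaneSection (map C F) X u) =
      hyperplaneSection (map C (map φ F)) X u := by
    rw [map_hyperplaneSection, map_map, map_map, hcomp]
    congr 1
    exact funext fun i => map_X φ i
  rw [sectionCondition, sectionCondition, ← hsec]
  simp only [coeff_map]
  exact map_aeval_int _ _ _

theorem eval_sectionCondition {d : ℕ} (g : MvPolynomial (exponentsEq (Fin n) d) ℤ)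
    (F : MvPolynomial (Fin (n + 1)) R) (u : Fin (n + 1)) (a : Fin (n + 1) → R) :
    eval a (sectionCondition g F u) =
      aeval (fun m : exponentsEq (Fin n) d => coeff m.1 (hyperplaneSection F a u)) g := by
  have hsec : map (eval a) (hyperplaneSection (map C F) X u) = hyperplaneSection F a u := by
    rw [map_hyperplaneSection, map_map, show (eval a).comp C = RingHom.id R from
      RingHom.ext eval_C, map_id]
    congr 1
    exact funext fun i => eval_X i
  rw [sectionCondition, ← hsec]
  simp only [coeff_map]
  exact map_aeval_int _ _ _

theorem exists_totalDegree_sectionCondition_le {d : ℕ} (e : ℕ)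
    (g : MvPolynomial (exponentsEq (Fin n) d) ℤ) (u : Fin (n + 1)) :
    ∃ D : ℕ, ∀ (R : Type*) [CommRing R] (F : MvPolynomial (Fin (n + 1)) R), F.IsHomogeneous e →
      (sectionCondition g F u).totalDegree ≤ D := by
  let F₀ : MvPolynomial (Fin (n + 1)) (MvPolynomial (exponentsEq (Fin (n + 1)) e) ℤ) :=
    polyOfCoeffs X
  refine ⟨(sectionCondition g F₀ u).totalDegree, fun R _ F hF => ?_⟩
  let φ : MvPolynomial (exponentsEq (Fin (n + 1)) e) ℤ →+* R :=
    (aeval fun m : exponentsEq (Fin (n + 1)) e => coeff m.1 F : _ →ₐ[ℤ] R).toRingHom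
  have hφF : map φ F₀ = F := by
    rw [map_polyOfCoeffs]
    simpa [φ] using polyOfCoeffs_coeff_of_isHomogeneous hF
  rw [← hφF, ← map_sectionCondition]
  exact Finset.sup_mono (support_map_subset _ _)

end Hyperplane

section SmoothRationalPoint

variable {L E σ : Type*} [Field L] [Field E]

theorem eq_of_associated_of_coeff_eq {F G : MvPolynomial σ E} (h : Associated F G) {m : σ →₀ ℕ}
    (hm : coeff m F = coeff m G) (hm0 : coeff m F ≠ 0) : F = G := by
  obtain ⟨u, rfl⟩ := h
  obtain ⟨c, -, hc⟩ := isUnit_iff_eq_C_of_isReduced.1 u.isUnit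
  rw [hc, mul_comm, coeff_C_mul, eq_comm, mul_eq_right₀ hm0] at hm
  rw [hc, hm, C_1, mul_one]

theorem exists_irreducible_dvd_eval_eq_zero {F : MvPolynomial σ E} (hF : F ≠ 0) {p : σ → E}
    (hp : eval p F = 0) : ∃ G, Irreducible G ∧ G ∣ F ∧ eval p G = 0 ∧ ∃ m, coeff m G = 1 := by
  obtain ⟨s, hs, hsF⟩ := WfDvdMonoid.exists_factors F hF
  have hprod : eval p s.prod = 0 := by
    obtain ⟨u, rfl⟩ := hsF
    rw [map_mul] at hp
    exact (mul_eq_zero.1 hp).resolve_right (u.isUnit.map _).ne_zero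
  rw [map_multiset_prod, Multiset.prod_eq_zero_iff, Multiset.mem_map] at hprod
  obtain ⟨G, hGs, hGp⟩ := hprod
  obtain ⟨m, hm⟩ := ne_zero_iff.1 (hs G hGs).ne_zero
  have hu : IsUnit (C (coeff m G)⁻¹ : MvPolynomial σ E) :=
    (isUnit_iff_ne_zero.2 (inv_ne_zero hm)).map C
  exact ⟨C (coeff m G)⁻¹ * G, (irreducible_isUnit_mul hu).2 (hs G hGs),
    hu.mul_left_dvd.2 ((Multiset.dvd_prod hGs).trans hsF.dvd), by rw [map_mul, hGp, mul_zero],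
    m, by rw [coeff_C_mul, inv_mul_cancel₀ hm]⟩

theorem map_eq_self_of_dvd_mul {G H : MvPolynomial σ E} (hG : Irreducible G) {m : σ →₀ ℕ}
    (hm : coeff m G = 1) {p : σ → E} (hGp : eval p G = 0) (hHp : eval p H ≠ 0) {γ : E ≃+* E}
    (hγp : γ ∘ p = p) (hdvd : map (γ : E →+* E) G ∣ G * H) : map (γ : E →+* E) G = G := by
  have hirr : Irreducible (map (γ : E →+* E) G) :=
    (MulEquiv.irreducible_iff (mapEquiv σ γ)).2 hG
  have hγG : eval p (map (γ : E →+* E) G) = 0 := by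
    rw [← hγp, eval_map, ← RingEquiv.coe_toRingHom, ← eval₂_comp, hGp, map_zero]
  rcases hirr.prime.dvd_or_dvd hdvd with h | ⟨k, rfl⟩
  · refine eq_of_associated_of_coeff_eq (hirr.associated_of_dvd hG h) (m := m) ?_ ?_ <;>
      simp [coeff_map, hm]
  · exact absurd (by rw [map_mul, hγG, zero_mul]) hHp

variable [Algebra L E] [IsGalois L E]

theorem mem_range_map_algebraMap_iff_fixed (P : MvPolynomial σ E) :
    P ∈ Set.range (map (algebraMap L E)) ↔ ∀ γ : Gal(E/L), map (γ : E →+* E) P = P := by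
  refine ⟨?_, fun h => mem_range_map_iff_coeffs_subset.2 fun c hc => ?_⟩
  · rintro ⟨Q, rfl⟩ γ
    rw [MvPolynomial.map_map]
    exact congrArg (map · Q) (RingHom.ext γ.commutes)
  · obtain ⟨m, -, rfl⟩ := mem_coeffs_iff.1 hc
    exact (InfiniteGalois.mem_range_algebraMap_iff_fixed _).2 fun γ =>
      (coeff_map _ _ _).symm.trans (congrArg (coeff m) (h γ))

/-- The irreducible factor through the point `p` is unique because `p` is a smooth point, so it is
Galois invariant because `p` is rational. -/
theorem irreducible_map_algebraMap_of_eval_pderiv_ne_zero {f : MvPolynomial σ L}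
    (hf : Irreducible f) {p : σ → L} (hp : eval p f = 0) {i : σ} (hi : eval p (pderiv i f) ≠ 0) :
    Irreducible (map (algebraMap L E) f) := by
  have hinj : Function.Injective (map (algebraMap L E) : MvPolynomial σ L → _) :=
    map_injective _ (algebraMap L E).injective
  have heval (g : MvPolynomial σ L) :
      eval (algebraMap L E ∘ p) (map (algebraMap L E) g) = algebraMap L E (eval p g) := by
    rw [eval_map, eval₂_comp]
  obtain ⟨G, hG, ⟨H, hGH⟩, hGp, m, hm⟩ := exists_irreducible_dvd_eval_eq_zero
    ((map_ne_zero_iff _ hinj).2 hf.ne_zero) (p := algebraMap L E ∘ p) (by rw [heval, hp, map_zero])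
  have hHp : eval (algebraMap L E ∘ p) H ≠ 0 := fun hHp => hi <| by
    refine (algebraMap L E).injective ?_
    rw [← heval, ← pderiv_map, hGH, Derivation.leibniz]
    simp [hGp, hHp]
  have hGfix (γ : Gal(E/L)) : map (γ : E →+* E) G = G := by
    refine map_eq_self_of_dvd_mul hG hm hGp hHp (γ := γ) (funext fun j => γ.commutes _) ?_
    rw [← hGH, ← (mem_range_map_algebraMap_iff_fixed _).1 ⟨f, rfl⟩ γ, hGH, map_mul]
    exact dvd_mul_right _ _
  have hHfix (γ : Gal(E/L)) : map (γ : E →+* E) H = H := by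
    refine mul_left_cancel₀ hG.ne_zero ?_
    rw [← hGH, ← (mem_range_map_algebraMap_iff_fixed _).1 ⟨f, rfl⟩ γ, hGH, map_mul, hGfix]
  obtain ⟨g, rfl⟩ := (mem_range_map_algebraMap_iff_fixed G).2 hGfix
  obtain ⟨h, rfl⟩ := (mem_range_map_algebraMap_iff_fixed H).2 hHfix
  rw [← map_mul] at hGH
  rcases hf.isUnit_or_isUnit (hinj hGH) with hg | hh
  · exact absurd (hg.map _) hG.not_isUnit
  · rwa [hinj hGH, map_mul, irreducible_mul_isUnit (hh.map _)]

end SmoothRationalPoint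

section SmoothPoint

variable {R σ τ : Type*} [CommRing R]

theorem eval_zero_of_isHomogeneous {F : MvPolynomial σ R} {d : ℕ} (hF : F.IsHomogeneous d)
    (hd : d ≠ 0) : eval 0 F = 0 := by
  rw [eval_zero, constantCoeff_eq]
  exact hF.coeff_eq_zero (by simpa using hd.symm)

theorem not_dvd_pderiv {K : Type*} [Field K] {F : MvPolynomial σ K} {d : ℕ}
    (hF : F.IsHomogeneous d) (hd : d ≠ 0) {i : σ} (hi : pderiv i F ≠ 0) : ¬ F ∣ pderiv i F := by
  rintro ⟨H, hH⟩
  have hFH : F * H ≠ 0 := hH ▸ hi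
  have hdeg := totalDegree_mul_of_isDomain (left_ne_zero_of_mul hFH) (right_ne_zero_of_mul hFH)
  rw [← hH, hF.pderiv.totalDegree hi, hF.totalDegree (left_ne_zero_of_mul hFH)] at hdeg
  omega

theorem pderiv_linSubst [Fintype σ] [Fintype τ] (M : Matrix σ τ R) (F : MvPolynomial σ R)
    (j : τ) :
    pderiv j (linSubst M F) = ∑ i, C (M i j) * linSubst M (pderiv i F) := by
  classical
  induction F using MvPolynomial.induction_on with
  | C c => simp
  | add p q hp hq => simp only [map_add, hp, hq, mul_add, Finset.sum_add_distrib]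
  | mul_X p k hp =>
    have hX : pderiv j (linSubst M (X k)) = C (M k j) := by
      simp [linSubst_X, Derivation.leibniz, pderiv_X, Pi.single_apply]
    have hsum : ∑ i, C (M i j) * (linSubst M p * linSubst M (pderiv i (X k))) =
        linSubst M p * C (M k j) := by
      simp [pderiv_X, Pi.single_apply, apply_ite (linSubst M), mul_comm]
    simp only [map_mul, Derivation.leibniz, smul_eq_mul, map_add, hX, hp, mul_add,
      Finset.sum_add_distrib, hsum, Finset.mul_sum, mul_left_comm]

variable {K : Type*} [Field K] [CharZero K] [Finite σ] {F : MvPolynomial σ K} {d : ℕ}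

theorem exists_pderiv_ne_zero (hF : F.IsHomogeneous d) (hd : d ≠ 0) (hF0 : F ≠ 0) :
    ∃ i, pderiv i F ≠ 0 := by
  cases nonempty_fintype σ
  by_contra! h
  have heuler := hF.sum_X_mul_pderiv
  simp [h, hd, hF0] at heuler

/-- By Euler's identity, a smooth point other than `0` cannot have its `i`-th coordinate as the
only nonzero one when `∂_i F` does not vanish there. -/
theorem exists_smooth_point [IsAlgClosed K] (hF : F.IsHomogeneous d) (hd : 2 ≤ d)
    (hirr : Irreducible F) : ∃ p i k, eval p F = 0 ∧ eval p (pderiv i F) ≠ 0 ∧ k ≠ i ∧ p k ≠ 0 := by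
  cases nonempty_fintype σ
  obtain ⟨i, hi⟩ := exists_pderiv_ne_zero hF (by omega) hirr.ne_zero
  obtain ⟨p, hpF, hpi⟩ : ∃ p, eval p F = 0 ∧ eval p (pderiv i F) ≠ 0 := by
    by_contra! h
    exact not_dvd_pderiv hF (by omega) hi (dvd_of_forall_eval_eq_zero hirr.prime h)
  by_contra! hp
  replace hp (k) (hki : k ≠ i) : p k = 0 := hp p i k hpF hpi hki
  have heuler := congrArg (eval p) hF.sum_X_mul_pderiv
  rw [map_sum, Finset.sum_eq_single i (fun k _ hki => by simp [hp k hki]) (by simp)] at heuler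
  simp only [map_mul, eval_X, map_nsmul, hpF, smul_zero, mul_eq_zero, hpi, or_false] at heuler
  have hp0 : p = 0 := funext fun k => by
    by_cases hki : k = i
    · rw [hki, heuler, Pi.zero_apply]
    · exact hp k hki
  exact hpi (hp0 ▸ eval_zero_of_isHomogeneous hF.pderiv (by omega))

end SmoothPoint

section Pencil

theorem prime_map_of_forall_exists_associated {A B : Type*} [CommRing A] [CommRing B] [IsDomain B]
    {φ : A →+* B} (hφ : Function.Injective φ) {b : B} (hb : Prime b)
    (hloc : ∀ P : B, ∃ s Q : A, (∃ m : ℕ, Associated (φ s) (b ^ m)) ∧ φ Q = φ s * P)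
    {F : A} (hF : Prime F) (hu : ¬ IsUnit (φ F)) (hbF : ¬ b ∣ φ F) : Prime (φ F) := by
  have hcancel {s : A} (hs : ∃ m : ℕ, Associated (φ s) (b ^ m)) {P : B}
      (h : φ F ∣ φ s * P) : φ F ∣ P := by
    obtain ⟨m, hm⟩ := hs
    obtain ⟨k, hk⟩ := (hm.mul_right P).dvd_iff_dvd_right.1 h
    obtain ⟨k', rfl⟩ := hb.pow_dvd_of_dvd_mul_left m hbF ⟨P, hk.symm⟩
    exact ⟨k', mul_left_cancel₀ (pow_ne_zero m hb.ne_zero) (by rw [hk, mul_left_comm])⟩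
  refine ⟨(map_ne_zero_iff φ hφ).2 hF.ne_zero, hu, fun g h ⟨c, hc⟩ => ?_⟩
  obtain ⟨s₁, Q₁, hs₁, hQ₁⟩ := hloc g
  obtain ⟨s₂, Q₂, hs₂, hQ₂⟩ := hloc h
  obtain ⟨s₃, Q₃, hs₃, hQ₃⟩ := hloc c
  have hfac : Q₁ * Q₂ * s₃ = F * (Q₃ * s₁ * s₂) := hφ <| by
    simp only [map_mul, hQ₁, hQ₂, hQ₃]
    linear_combination φ s₁ * φ s₂ * φ s₃ * hc
  rcases hF.dvd_or_dvd ⟨_, hfac⟩ with hd | hd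
  · exact (hF.dvd_or_dvd hd).imp (fun hd => hcancel hs₁ (hQ₁ ▸ map_dvd φ hd))
      fun hd => hcancel hs₂ (hQ₂ ▸ map_dvd φ hd)
  · exact absurd (isUnit_of_dvd_one (hcancel hs₃ ((mul_one (φ s₃)).symm ▸ map_dvd φ hd))) hu

variable {R S : Type*} [CommRing R] [CommRing S] {n : ℕ}

/-- Restriction to the hyperplane `x_u = t x_v` of the pencil spanned by two coordinate hyperplanes,
where `u.succAbove v` is the index called `v` here. -/
noncomputable def pencilHom (κ : R →+* S) (t : S) (u : Fin (n + 1)) (v : Fin n) :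
    MvPolynomial (Fin (n + 1)) R →+* MvPolynomial (Fin n) S :=
  eval₂Hom (C.comp κ) (u.insertNth (α := fun _ => MvPolynomial (Fin n) S) (C t * X v) X)

theorem map_pencilHom {S' : Type*} [CommRing S'] (φ : S →+* S') (κ : R →+* S) (t : S)
    (u : Fin (n + 1)) (v : Fin n) (F : MvPolynomial (Fin (n + 1)) R) :
    map φ (pencilHom κ t u v F) = pencilHom (φ.comp κ) (φ t) u v F := by
  suffices (map φ).comp (pencilHom κ t u v) = pencilHom (φ.comp κ) (φ t) u v from
    DFunLike.congr_fun this F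
  ext i : 2
  · simp [pencilHom]
  · induction i using Fin.succAboveCases u with
    | x => simp [pencilHom]
    | p i => simp [pencilHom]

theorem eval_pencilHom (κ : R →+* S) (t : S) (u : Fin (n + 1)) (v : Fin n)
    (F : MvPolynomial (Fin (n + 1)) R) (c : Fin n → S) :
    eval c (pencilHom κ t u v F) = eval₂ κ (u.insertNth (α := fun _ => S) (t * c v) c) F := by
  suffices (eval c).comp (pencilHom κ t u v) =
      eval₂Hom κ (u.insertNth (α := fun _ => S) (t * c v) c) from DFunLike.congr_fun this F
  ext i
  · simp [pencilHom]
  · induction i using Fin.succAboveCases u with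
    | x => simp [pencilHom]
    | p i => simp [pencilHom]

/-- The linear form defining the hyperplane `x_u = t x_v`. -/
def pencilForm (t : S) (u : Fin (n + 1)) (v : Fin n) : Fin (n + 1) → S :=
  u.insertNth (α := fun _ => S) 1 (Pi.single v (-t))

theorem hyperplaneSection_pencilForm (κ : R →+* S) (t : S) (u : Fin (n + 1)) (v : Fin n)
    (F : MvPolynomial (Fin (n + 1)) R) :
    hyperplaneSection (map κ F) (pencilForm t u v) u = pencilHom κ t u v F := by
  suffices (linSubst (hyperplaneParam (pencilForm t u v) u)).toRingHom.comp (map κ) =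
      pencilHom κ t u v from DFunLike.congr_fun this F
  ext i : 2
  · simp [pencilHom, linSubst]
  · induction i using Fin.succAboveCases u with
    | x => simp [pencilHom, linSubst, hyperplaneParam, pencilForm, Pi.single_apply, apply_ite]
    | p i => simp [pencilHom, linSubst, hyperplaneParam, pencilForm, Matrix.one_apply]

theorem pderiv_pencilHom (κ : R →+* S) (t : S) (u : Fin (n + 1)) {i v : Fin n} (hi : i ≠ v)
    (F : MvPolynomial (Fin (n + 1)) R) :
    pderiv i (pencilHom κ t u v F) = pencilHom κ t u v (pderiv (u.succAbove i) F) := by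
  simp only [← hyperplaneSection_pencilForm, hyperplaneSection, pderiv_linSubst, pderiv_map]
  rw [Fin.sum_univ_succAbove _ u]
  simp [hyperplaneParam, pencilForm, Matrix.one_apply, hi]

end Pencil

section GenericPencil

variable {K L : Type*} [Field K] [Field L] [Algebra (Polynomial K) L]
  {n : ℕ} (u : Fin (n + 1)) (v : Fin n)

variable (K L) in
/-- The restriction to the generic member of the pencil `x_u = t x_v`, where `L = K(t)`. -/
noncomputable def genericPencilHom : MvPolynomial (Fin (n + 1)) K →+* MvPolynomial (Fin n) L :=
  pencilHom ((algebraMap (Polynomial K) L).comp Polynomial.C)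
    (algebraMap (Polynomial K) L Polynomial.X) u v

theorem exists_genericPencilHom_eq_C_mul (p : Polynomial K) :
    ∃ m Q, genericPencilHom K L u v Q = C (algebraMap _ L p) * X v ^ m := by
  induction p using Polynomial.induction_on' with
  | add p q hp hq =>
    obtain ⟨m₁, Q₁, h₁⟩ := hp
    obtain ⟨m₂, Q₂, h₂⟩ := hq
    refine ⟨m₁ + m₂, Q₁ * X (u.succAbove v) ^ m₂ + Q₂ * X (u.succAbove v) ^ m₁, ?_⟩
    rw [map_add, map_mul, map_mul, h₁, h₂, map_add, C_add]
    simp [genericPencilHom, pencilHom]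
    ring
  | monomial k a =>
    refine ⟨k, C a * X u ^ k, ?_⟩
    simp [genericPencilHom, pencilHom, ← Polynomial.C_mul_X_pow_eq_monomial, mul_pow, mul_assoc]

variable [IsFractionRing (Polynomial K) L]

theorem genericPencilHom_injective [Infinite K] :
    Function.Injective (genericPencilHom K L u v) := by
  rw [injective_iff_map_eq_zero]
  intro Q hQ
  have hpoly : pencilHom Polynomial.C Polynomial.X u v Q = 0 := by
    refine map_injective (algebraMap (Polynomial K) L) (IsFractionRing.injective _ _) ?_
    rw [map_pencilHom, map_zero]
    exact hQ
  suffices X (u.succAbove v) * Q = 0 from (mul_eq_zero.1 this).resolve_left (X_ne_zero _)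
  refine MvPolynomial.funext fun x => ?_
  rw [map_mul, map_zero, mul_eq_zero, eval_X, or_iff_not_imp_left]
  intro hx
  have hC : (Polynomial.evalRingHom (x u / x (u.succAbove v))).comp Polynomial.C = RingHom.id K :=
    RingHom.ext fun c => Polynomial.eval_C
  have heval := congrArg (eval fun j => x (u.succAbove j)) <|
    congrArg (map (Polynomial.evalRingHom (x u / x (u.succAbove v)))) hpoly
  rw [map_pencilHom, eval_pencilHom, hC, map_zero, map_zero] at heval
  rw [← heval, eval₂_id]
  congr 2
  ext i
  induction i using Fin.succAboveCases u with
  | x => simp [hx]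
  | p i => simp

/-- Inverting `x_v` on both sides makes `t = x_u / x_v` available, so the restriction is then a
localization. -/
theorem exists_genericPencilHom_eq_mul (P : MvPolynomial (Fin n) L) :
    ∃ s Q, (∃ m : ℕ, Associated (genericPencilHom K L u v s) (X v ^ m)) ∧
      genericPencilHom K L u v Q = genericPencilHom K L u v s * P := by
  have hX (j : Fin n) : genericPencilHom K L u v (X (u.succAbove j)) = X j := by
    simp [genericPencilHom, pencilHom]
  induction P using MvPolynomial.induction_on with
  | C c =>
    obtain ⟨p, q, hq, rfl⟩ := IsFractionRing.div_surjective (A := Polynomial K) c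
    obtain ⟨m₁, Q₁, h₁⟩ := exists_genericPencilHom_eq_C_mul (L := L) u v p
    obtain ⟨m₂, Q₂, h₂⟩ := exists_genericPencilHom_eq_C_mul (L := L) u v q
    have hq0 : algebraMap _ L q ≠ 0 := IsFractionRing.to_map_ne_zero_of_mem_nonZeroDivisors hq
    refine ⟨Q₂ * X (u.succAbove v) ^ m₁, Q₁ * X (u.succAbove v) ^ m₂, ⟨m₂ + m₁, ?_⟩, ?_⟩
    · rw [map_mul, map_pow, h₂, hX, mul_assoc, ← pow_add]
      exact associated_unit_mul_left _ _ ((isUnit_iff_ne_zero.2 hq0).map C)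
    · rw [map_mul, map_mul, map_pow, map_pow, h₁, h₂, hX,
        show algebraMap _ L p = algebraMap _ L q * (algebraMap _ L p / algebraMap _ L q) by
          rw [mul_div_cancel₀ _ hq0], C_mul, ← mul_div_assoc, mul_div_cancel_left₀ _ hq0]
      ring
  | add p q hp hq =>
    obtain ⟨s₁, Q₁, ⟨m₁, hs₁⟩, h₁⟩ := hp
    obtain ⟨s₂, Q₂, ⟨m₂, hs₂⟩, h₂⟩ := hq
    refine ⟨s₁ * s₂, Q₁ * s₂ + Q₂ * s₁, ⟨m₁ + m₂, ?_⟩, ?_⟩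
    · rw [map_mul, pow_add]
      exact hs₁.mul_mul hs₂
    · rw [map_add, map_mul, map_mul, map_mul, h₁, h₂]
      ring
  | mul_X p j hp =>
    obtain ⟨s, Q, hs, hQ⟩ := hp
    exact ⟨s, Q * X (u.succAbove j), hs, by rw [map_mul, hQ, hX, mul_assoc]⟩

variable {u v}

theorem irreducible_map_genericPencilHom [CharZero K] {F : MvPolynomial (Fin (n + 1)) K}
    (hF : Irreducible F) {i k : Fin n} (hvi : v ≠ i) (hvk : v ≠ k)
    (hk : eval (Pi.single (u.succAbove k) 1) F = 0)
    (hi : eval (Pi.single (u.succAbove k) 1) (pderiv (u.succAbove i) F) ≠ 0) :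
    Irreducible (map (algebraMap L (AlgebraicClosure L)) (genericPencilHom K L u v F)) := by
  let κ : K →+* L := (algebraMap (Polynomial K) L).comp Polynomial.C
  have : CharZero L := charZero_of_injective_ringHom κ.injective
  have heval (G : MvPolynomial (Fin (n + 1)) K) :
      eval (Pi.single k 1) (genericPencilHom K L u v G) =
        κ (eval (Pi.single (u.succAbove k) 1) G) := by
    have hpoint : u.insertNth (α := fun _ => L) 0 (Pi.single k 1) =
        κ ∘ Pi.single (u.succAbove k) 1 := by
      ext j
      induction j using Fin.succAboveCases u with
      | x => simp
      | p j => simp [Pi.single_apply, apply_ite κ]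
    rw [genericPencilHom, eval_pencilHom, Pi.single_eq_of_ne hvk, mul_zero, hpoint]
    exact (eval₂_comp _ _ _).symm
  have hi' : eval (Pi.single k 1) (pderiv i (genericPencilHom K L u v F)) ≠ 0 := by
    rw [genericPencilHom, pderiv_pencilHom _ _ _ hvi.symm]
    exact heval _ ▸ (map_ne_zero κ).2 hi
  have hk' : eval (Pi.single k 1) (genericPencilHom K L u v F) = 0 := by rw [heval, hk, map_zero]
  have hprime : Prime (genericPencilHom K L u v F) := by
    refine prime_map_of_forall_exists_associated (genericPencilHom_injective u v) (X_prime (i := v))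
      (exists_genericPencilHom_eq_mul u v) hF.prime
      (fun hu => (hu.map (eval (Pi.single k 1))).ne_zero hk') fun ⟨g, hg⟩ => hi' ?_
    rw [hg, Derivation.leibniz, pderiv_X_of_ne hvi]
    simp [hvk]
  exact irreducible_map_algebraMap_of_eval_pderiv_ne_zero hprime.irreducible hk' hi'

end GenericPencil

section Bertini

theorem irreducible_linSubst_units_iff {R τ : Type*} [CommRing R] [Fintype τ] [DecidableEq τ]
    (T : (Matrix τ τ R)ˣ) {F : MvPolynomial τ R} :
    Irreducible (linSubst T.val F) ↔ Irreducible F :=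
  MulEquiv.irreducible_iff (linSubstEquiv T)

variable {K : Type*} [Field K] {n : ℕ}

theorem exists_hyperplaneSection_linSubst_eq (T : (Matrix (Fin (n + 1)) (Fin (n + 1)) K)ˣ)
    (F : MvPolynomial (Fin (n + 1)) K) {a : Fin (n + 1) → K} {u : Fin (n + 1)} (hu : a u ≠ 0) :
    ∃ a' u', a' u' ≠ 0 ∧ ∃ S : (Matrix (Fin n) (Fin n) K)ˣ,
      hyperplaneSection (linSubst T.val F) a u = linSubst S.val (hyperplaneSection F a' u') := by
  have ha' : a = Matrix.vecMul (Matrix.vecMul a T⁻¹.val) T.val := by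
    rw [Matrix.vecMul_vecMul, T.inv_mul, Matrix.vecMul_one]
  obtain ⟨u', hu'⟩ : ∃ u', Matrix.vecMul a T⁻¹.val u' ≠ 0 :=
    Function.ne_iff.1 fun h => hu (by
      rw [ha', show Matrix.vecMul a T⁻¹.val = 0 from h, Matrix.zero_vecMul, Pi.zero_apply])
  have hleft : hyperplaneCoords a u * T⁻¹.val * (T.val * hyperplaneParam a u) = 1 := by
    rw [Matrix.mul_assoc, ← Matrix.mul_assoc T⁻¹.val, T.inv_mul, Matrix.one_mul,
      hyperplaneCoords_mul_hyperplaneParam hu]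
  have hker : (T.val * hyperplaneParam a u).mulVecLin.ker = ⊥ := LinearMap.ker_eq_bot.2 <|
    Function.LeftInverse.injective (g := (hyperplaneCoords a u * T⁻¹.val).mulVec) fun y => by
      rw [Matrix.mulVecLin_apply, Matrix.mulVec_mulVec, hleft, Matrix.one_mulVec]
  have himage (y : Fin n → K) :
      Matrix.vecMul a T⁻¹.val ⬝ᵥ (T.val * hyperplaneParam a u).mulVec y = 0 := by
    rw [← Matrix.mulVec_mulVec, Matrix.dotProduct_mulVec, ← ha']
    exact dotProduct_hyperplaneParam_mulVec a u y
  obtain ⟨S, hS⟩ := exists_isUnit_eq_hyperplaneParam_mul hu' hker himage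
  exact ⟨_, u', hu', S, by
    rw [hyperplaneSection, hyperplaneSection, linSubst_linSubst, linSubst_linSubst, hS]⟩

theorem exists_units_linSubst_smooth_point {σ : Type*} [Fintype σ] [DecidableEq σ]
    (F : MvPolynomial σ K) {p : σ → K} {i k : σ} (hp : eval p F = 0)
    (hi : eval p (pderiv i F) ≠ 0) (hki : k ≠ i) (hk : p k ≠ 0) :
    ∃ T : (Matrix σ σ K)ˣ, eval (Pi.single k 1) (linSubst T.val F) = 0 ∧
      eval (Pi.single k 1) (pderiv i (linSubst T.val F)) ≠ 0 := by
  have hdet : ((1 : Matrix σ σ K).updateCol k p).det = p k := by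
    rw [← Matrix.cramer_apply, Matrix.cramer_one, Module.End.one_apply]
  let T : (Matrix σ σ K)ˣ := Matrix.nonsingInvUnit _ (hdet ▸ isUnit_iff_ne_zero.2 hk)
  have hT : T.val = (1 : Matrix σ σ K).updateCol k p := rfl
  have heval (G : MvPolynomial σ K) : eval (Pi.single k 1) (linSubst T.val G) = eval p G := by
    rw [eval_linSubst, Matrix.mulVec_single_one, hT]
    congr 2
    ext j
    simp [Matrix.col_apply]
  refine ⟨T, (heval F).trans hp, ?_⟩
  rw [pderiv_linSubst, map_sum, Finset.sum_eq_single i]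
  · rw [map_mul, heval]
    simpa [hT, Matrix.updateCol_ne hki.symm] using hi
  · intro j _ hji
    simp [hT, Matrix.updateCol_ne hki.symm, Matrix.one_apply_ne hji]
  · simp

variable (K) in
/-- An algebraic closure of the field of rational functions in one variable. -/
abbrev RatFunClosure : Type _ := AlgebraicClosure (FractionRing (Polynomial K))

theorem exists_irreducible_hyperplaneSection [IsAlgClosed K] [CharZero K] {d : ℕ} (hn : 3 ≤ n)
    (hd : 2 ≤ d) {F : MvPolynomial (Fin (n + 1)) K} (hF : F.IsHomogeneous d)
    (hirr : Irreducible F) : ∃ (a : Fin (n + 1) → RatFunClosure K) (u : Fin (n + 1)),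
      a u ≠ 0 ∧ Irreducible (hyperplaneSection (map (algebraMap K (RatFunClosure K)) F) a u) := by
  have hcard {s : Finset (Fin (n + 1))} (hs : s.card ≤ 3) : ∃ u, u ∉ s := by
    by_contra! h
    rw [Finset.eq_univ_of_forall h, Finset.card_univ, Fintype.card_fin] at hs
    omega
  obtain ⟨p, i, k, hp, hi, hki, hk⟩ := exists_smooth_point hF hd hirr
  obtain ⟨T, hTk, hTi⟩ := exists_units_linSubst_smooth_point F hp hi hki hk
  obtain ⟨u, hu⟩ := hcard (s := {i, k}) (Finset.card_le_two.trans (by norm_num))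
  obtain ⟨v, hv⟩ := hcard (s := {i, k, u}) Finset.card_le_three
  simp only [Finset.mem_insert, Finset.mem_singleton, not_or] at hu hv
  obtain ⟨i, rfl⟩ := Fin.exists_succAbove_eq (Ne.symm hu.1)
  obtain ⟨k, rfl⟩ := Fin.exists_succAbove_eq (Ne.symm hu.2)
  obtain ⟨v, rfl⟩ := Fin.exists_succAbove_eq hv.2.2
  have hgen := irreducible_map_genericPencilHom (L := FractionRing (Polynomial K))
    ((irreducible_linSubst_units_iff T).2 hirr) (fun h => hv.1 (congrArg _ h))
    (fun h => hv.2.1 (congrArg _ h)) hTk hTi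
  let ι : K →+* RatFunClosure K := algebraMap K (RatFunClosure K)
  let TE : (Matrix (Fin (n + 1)) (Fin (n + 1)) (RatFunClosure K))ˣ :=
    Units.map ι.mapMatrix.toMonoidHom T
  let a := pencilForm (algebraMap (Polynomial K) (RatFunClosure K) Polynomial.X) u v
  have ha : a u ≠ 0 := by simp [a, pencilForm]
  have hsec : Irreducible (hyperplaneSection (linSubst TE.val (map ι F)) a u) := by
    have : linSubst TE.val (map ι F) = map ι (linSubst T.val F) := (map_linSubst ι T.val F).symm
    rw [this, hyperplaneSection_pencilForm]
    rwa [genericPencilHom, map_pencilHom] at hgen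
  obtain ⟨a', u', ha', S, hS⟩ := exists_hyperplaneSection_linSubst_eq TE (map ι F) ha
  exact ⟨a', u', ha', (irreducible_linSubst_units_iff S).1 (hS ▸ hsec)⟩

end Bertini

section GenericZero

variable {K E σ : Type*} [Field K] [Field E] [Algebra K E]

theorem aeval_eq_zero_of_forall_eval_eq_zero [IsAlgClosed K] [Finite σ] {P Q : MvPolynomial σ K}
    (hPQ : ∀ x, eval x P = 0 → eval x Q = 0) {y : σ → E} (hy : aeval y P = 0) :
    aeval y Q = 0 := by
  have hrad : Q ∈ (Ideal.span {P}).radical := by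
    rw [← vanishingIdeal_zeroLocus_eq_radical (K := K)]
    exact fun x hx => hPQ x (hx P (Ideal.mem_span_singleton_self P))
  obtain ⟨N, hN⟩ := hrad
  obtain ⟨A, hA⟩ := Ideal.mem_span_singleton.1 hN
  exact eq_zero_of_pow_eq_zero (by rw [← map_pow, hA, map_mul, hy, zero_mul] : aeval y Q ^ N = 0)

/-- The point `ξ` is a generic point of the hypersurface `F = 0`. -/
def IsGenericZero (F : MvPolynomial σ K) (ξ : σ → E) : Prop :=
  ∀ G : MvPolynomial σ K, aeval ξ G = 0 ↔ F ∣ G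

theorem IsGenericZero.not_hasLinearSubspaceThrough {K E : Type v} [Field K] [IsAlgClosed K]
    [Field E] [IsAlgClosed E] [Algebra K E] [Fintype σ] {F : MvPolynomial σ K} {ξ : σ → E}
    {d r : ℕ} (hξ : IsGenericZero F ξ) (hF : F.IsHomogeneous d) (hN : Noncovered F r) :
    ¬ HasLinearSubspaceThrough (map (algebraMap K E) F) r ξ := by
  obtain ⟨G, hG⟩ := exists_finset_hasLinearSubspaceThrough_iff.{_, v} σ d r
  obtain ⟨g, hg, hndvd⟩ := (noncovered_iff_exists_not_dvd (hG K F hF)).1 hN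
  rw [hG E _ (hF.map _)]
  intro hcov
  rw [← hξ, aeval_def, ← eval_map, map_specializeCoeffs, eval_specializeCoeffs] at hndvd
  exact hndvd (hcov g hg)

end GenericZero

section UniversalSection

variable {K L : Type*} [CommRing K] [CommRing L] [Algebra K L] {n : ℕ}

/-- The family of all hyperplane sections `hyperplaneSection F a u`. Its coefficients are
polynomials in `a` (variables `inl`) and in a point `y` of the section (variables `inr`). -/
noncomputable def universalSection (F : MvPolynomial (Fin (n + 1)) K) (u : Fin (n + 1)) :
    MvPolynomial (Fin n) (MvPolynomial (Fin (n + 1) ⊕ Fin n) K) :=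
  hyperplaneSection (map C F) (fun i => X (Sum.inl i)) u

theorem map_aeval_universalSection (F : MvPolynomial (Fin (n + 1)) K) (u : Fin (n + 1))
    (a : Fin (n + 1) → L) (y : Fin n → L) :
    map (RingHomClass.toRingHom (aeval (R := K) (Sum.elim a y))) (universalSection F u) =
      hyperplaneSection (map (algebraMap K L) F) a u := by
  rw [universalSection, map_hyperplaneSection, map_map]
  congr 2 <;> ext <;> simp

/-- The equation of the total space of the family of all hyperplane sections. -/
noncomputable def incidenceEquation (F : MvPolynomial (Fin (n + 1)) K) (u : Fin (n + 1)) :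
    MvPolynomial (Fin (n + 1) ⊕ Fin n) K :=
  eval (fun j => X (Sum.inr j)) (universalSection F u)

theorem aeval_incidenceEquation (F : MvPolynomial (Fin (n + 1)) K) (u : Fin (n + 1))
    (a : Fin (n + 1) → L) (y : Fin n → L) :
    aeval (Sum.elim a y) (incidenceEquation F u) =
      eval y (hyperplaneSection (map (algebraMap K L) F) a u) := by
  let ψ : MvPolynomial (Fin (n + 1) ⊕ Fin n) K →+* L :=
    RingHomClass.toRingHom (aeval (R := K) (Sum.elim a y))
  have hψ : ψ ∘ (fun j => X (Sum.inr j)) = y := funext fun j => aeval_X (Sum.elim a y) (Sum.inr j)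
  refine (eval₂_comp_left ψ (RingHom.id _) _ _).trans ?_
  rw [RingHom.comp_id, hψ, ← eval_map, map_aeval_universalSection]

/-- The value of `g` at the coefficients of the hyperplane section `hyperplaneSection F a u` and at
its point `y`, as a polynomial in `a` and `y`. -/
noncomputable def incidenceCondition {d : ℕ}
    (g : MvPolynomial (exponentsEq (Fin n) d ⊕ Fin n) ℤ) (F : MvPolynomial (Fin (n + 1)) K)
    (u : Fin (n + 1)) : MvPolynomial (Fin (n + 1) ⊕ Fin n) K :=
  aeval (Sum.elim (fun m => coeff m.1 (universalSection F u)) fun j => X (Sum.inr j)) g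

theorem aeval_incidenceCondition {d : ℕ} (g : MvPolynomial (exponentsEq (Fin n) d ⊕ Fin n) ℤ)
    (F : MvPolynomial (Fin (n + 1)) K) (u : Fin (n + 1)) (a : Fin (n + 1) → L) (y : Fin n → L) :
    aeval (Sum.elim a y) (incidenceCondition g F u) =
      aeval (Sum.elim (fun m : exponentsEq (Fin n) d =>
        coeff m.1 (hyperplaneSection (map (algebraMap K L) F) a u)) y) g := by
  refine (map_aeval_int (RingHomClass.toRingHom (aeval (R := K) (Sum.elim a y))) _ g).trans ?_
  congr 2
  ext (m | j)
  · rw [Sum.elim_inl, Sum.elim_inl, ← map_aeval_universalSection F u a y, coeff_map]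
  · exact aeval_X (Sum.elim a y) (Sum.inr j)

theorem not_noncovered_hyperplaneSection_map {K E : Type v} [Field K] [IsAlgClosed K] [Field E]
    [IsAlgClosed E] [Algebra K E] {n d r : ℕ} {F : MvPolynomial (Fin (n + 1)) K}
    (hF : F.IsHomogeneous d) {u : Fin (n + 1)}
    (hcov : ∀ a, a u ≠ 0 → ¬ Noncovered (hyperplaneSection F a u) r) {a : Fin (n + 1) → E}
    (hu : a u ≠ 0) : ¬ Noncovered (hyperplaneSection (map (algebraMap K E) F) a u) r := by
  obtain ⟨G, hG⟩ := exists_finset_hasLinearSubspaceThrough_iff.{_, v} (Fin n) d r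
  rintro ⟨y, hy, hn⟩
  rw [hG E _ (isHomogeneous_hyperplaneSection (hF.map _) _ _)] at hn
  refine hn fun g hg => ?_
  suffices hzero : aeval (Sum.elim a y) (X (Sum.inl u) * incidenceCondition g F u) = 0 by
    rw [map_mul, aeval_X, aeval_incidenceCondition] at hzero
    exact (mul_eq_zero.1 hzero).resolve_left hu
  refine aeval_eq_zero_of_forall_eval_eq_zero (P := incidenceEquation F u) (fun z hz => ?_)
    (by rw [aeval_incidenceEquation, hy])
  obtain ⟨b, w, rfl⟩ : ∃ b w, z = Sum.elim b w := ⟨_, _, (Sum.elim_comp_inl_inr z).symm⟩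
  rw [← coe_aeval_eq_eval, RingHom.coe_coe] at hz ⊢
  rw [aeval_incidenceEquation, Algebra.algebraMap_self, map_id] at hz
  rw [map_mul, aeval_X, aeval_incidenceCondition, Algebra.algebraMap_self, map_id, mul_eq_zero,
    or_iff_not_imp_left]
  intro hbu
  have hlin := not_not.1 fun h => hcov b hbu ⟨w, hz, h⟩
  exact (hG K _ (isHomogeneous_hyperplaneSection hF _ _) w).1 hlin g hg

end UniversalSection

section Derivation

variable {R A B M : Type*} [CommRing R] [CommRing A] [CommRing B] [AddCommGroup M]
variable [Algebra R A] [Algebra R B] [Algebra A B] [IsScalarTower R A B] [Module R M] [Module A M]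
variable [Module B M] [IsScalarTower A B M]

theorem exists_derivation_of_surjective (hsurj : Function.Surjective (algebraMap A B))
    (d : Derivation R A M) (hd : ∀ a, algebraMap A B a = 0 → d a = 0) :
    ∃ D : Derivation R B M, ∀ a, D (algebraMap A B a) = d a := by
  let s := Function.surjInv hsurj
  have hs (b : B) : algebraMap A B (s b) = b := Function.surjInv_eq hsurj b
  have hwd {a a' : A} (h : algebraMap A B a = algebraMap A B a') : d a = d a' := by
    rw [← sub_eq_zero, ← map_sub]
    exact hd _ (by rw [map_sub, h, sub_self])
  let D : B →ₗ[R] M :=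
    { toFun := fun b => d (s b)
      map_add' := fun b c => by rw [← map_add]; exact hwd (by simp only [map_add, hs])
      map_smul' := fun r b => by
        rw [RingHom.id_apply, ← d.map_smul]
        exact hwd (by simp only [hs, Algebra.smul_def, map_mul, ← IsScalarTower.algebraMap_apply]) }
  refine ⟨Derivation.mk' D fun b c => ?_, fun a => hwd (hs _)⟩
  have hmul : D (b * c) = d (s b * s c) := hwd (by simp only [map_mul, hs])
  rw [hmul, d.leibniz, ← algebraMap_smul B (s b), ← algebraMap_smul B (s c), hs, hs]
  rfl

open TensorProduct in
theorem exists_derivation_of_formallyEtale [IsScalarTower R A M] [IsScalarTower R B M]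
    [Algebra.FormallyEtale A B] (d : Derivation R A M) :
    ∃ D : Derivation R B M, ∀ a, D (algebraMap A B a) = d a := by
  let e := KaehlerDifferential.tensorKaehlerEquivOfFormallyEtale R A B
  refine ⟨(d.liftKaehlerDifferential.liftBaseChange B ∘ₗ e.symm.toLinearMap).compDer
    (KaehlerDifferential.D R B), fun a => ?_⟩
  have hlift : d.liftKaehlerDifferential.liftBaseChange B (1 ⊗ₜ KaehlerDifferential.D R A a) =
      d a := by
    rw [LinearMap.liftBaseChange_tmul, one_smul, Derivation.liftKaehlerDifferential_comp_D]
  rwa [← KaehlerDifferential.tensorKaehlerEquivOfFormallyEtale_symm_D_algebraMap R A B a] at hlift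

theorem derivation_eq_sum_pderiv_smul {σ : Type*} [Fintype σ] [Module (MvPolynomial σ R) M]
    [IsScalarTower R (MvPolynomial σ R) M]
    (D : Derivation R (MvPolynomial σ R) M) (P : MvPolynomial σ R) :
    D P = ∑ i, pderiv i P • D (X i) := by
  classical
  induction P using MvPolynomial.induction_on with
  | C a => simp
  | add p q hp hq => simp only [map_add, add_smul, Finset.sum_add_distrib, hp, hq]
  | mul_X p j hp =>
    simp [Derivation.leibniz, hp, add_smul, Finset.sum_add_distrib, Finset.smul_sum, pderiv_X,
      Pi.single_apply, mul_smul, ite_smul]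

theorem exists_derivation_algebraMap_X_eq {σ : Type*} [Fintype σ] [Algebra (MvPolynomial σ R) A]
    [Algebra (MvPolynomial σ R) B] [IsScalarTower R (MvPolynomial σ R) A]
    [IsScalarTower R (MvPolynomial σ R) B] [IsScalarTower (MvPolynomial σ R) A B]
    [Algebra.FormallyEtale A B] (hsurj : Function.Surjective (algebraMap (MvPolynomial σ R) A))
    (w : σ → B) (hw : ∀ P, algebraMap (MvPolynomial σ R) A P = 0 →
      ∑ i, algebraMap (MvPolynomial σ R) B (pderiv i P) * w i = 0) :
    ∃ D : Derivation R B B, ∀ i, D (algebraMap (MvPolynomial σ R) B (X i)) = w i := by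
  obtain ⟨d, hd⟩ := exists_derivation_of_surjective hsurj (mkDerivation R w) fun P hP => by
    rw [derivation_eq_sum_pderiv_smul]
    simpa only [mkDerivation_X, Algebra.smul_def] using hw P hP
  obtain ⟨D, hD⟩ := exists_derivation_of_formallyEtale (B := B) d
  exact ⟨D, fun i => by
    rw [IsScalarTower.algebraMap_apply _ A B, hD, hd, mkDerivation_X]⟩

end Derivation

theorem exists_isGenericZero {K : Type v} [Field K] [CharZero K] {σ : Type} [Fintype σ]
    {F : MvPolynomial σ K} (hF : Prime F) :
    ∃ (E : Type v) (_ : Field E) (_ : IsAlgClosed E) (_ : Algebra K E) (ξ : σ → E),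
      IsGenericZero F ξ ∧ ∀ w : σ → E, ∑ i, aeval ξ (pderiv i F) * w i = 0 →
        ∃ D : Derivation K E E, ∀ i, D (ξ i) = w i := by
  let I := Ideal.span {F}
  have : I.IsPrime := (Ideal.span_singleton_prime hF.ne_zero).2 hF
  let A := MvPolynomial σ K ⧸ I
  let k := FractionRing A
  let E := AlgebraicClosure k
  have : CharZero k := charZero_of_injective_algebraMap (algebraMap K k).injective
  have : Algebra.FormallyEtale A k := .of_isLocalization (nonZeroDivisors A)
  have : Algebra.FormallyEtale k E := .of_isSeparable k E
  have : Algebra.FormallyEtale A E := .comp A k E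
  have hinj : Function.Injective (algebraMap A E) := by
    rw [IsScalarTower.algebraMap_eq A k E]
    exact (algebraMap k E).injective.comp (IsFractionRing.injective A k)
  let ξ : σ → E := fun i => algebraMap (MvPolynomial σ K) E (X i)
  have haeval (G : MvPolynomial σ K) : aeval ξ G = algebraMap (MvPolynomial σ K) E G :=
    (DFunLike.congr_fun (aeval_unique (IsScalarTower.toAlgHom K (MvPolynomial σ K) E)) G).symm
  have hmk (G : MvPolynomial σ K) : algebraMap (MvPolynomial σ K) A G = 0 ↔ F ∣ G :=
    Ideal.Quotient.eq_zero_iff_dvd F G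
  have hgen : IsGenericZero F ξ := fun G => by
    rw [haeval, IsScalarTower.algebraMap_apply _ A E, map_eq_zero_iff _ hinj, hmk]
  refine ⟨E, inferInstance, inferInstance, inferInstance, ξ, hgen, fun w hw => ?_⟩
  refine exists_derivation_algebraMap_X_eq (A := A) Ideal.Quotient.mk_surjective w fun G hG => ?_
  obtain ⟨H, rfl⟩ := (hmk G).1 hG
  have hF0 : algebraMap (MvPolynomial σ K) E F = 0 := haeval F ▸ (hgen F).2 dvd_rfl
  simp only [haeval] at hw
  simp only [Derivation.leibniz, smul_eq_mul, map_add, map_mul, hF0, zero_mul, zero_add, mul_assoc,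
    ← Finset.mul_sum, hw, mul_zero]

section HomogeneousComponents

variable {R σ : Type*} [CommSemiring R]

theorem homogeneousComponent_mul {a : ℕ} {P : MvPolynomial σ R} (hP : P.IsHomogeneous a) (j : ℕ)
    (Q : MvPolynomial σ R) :
    homogeneousComponent j (P * Q) =
      ∑ i ∈ Finset.range (Q.totalDegree + 1),
        if j = a + i then P * homogeneousComponent i Q else 0 := by
  conv_lhs => rw [← sum_homogeneousComponent Q, Finset.mul_sum, map_sum]
  exact Finset.sum_congr rfl fun i _ =>
    homogeneousComponent_of_mem (hP.mul (homogeneousComponent_isHomogeneous i Q))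

theorem homogeneousComponent_add_mul {a : ℕ} {P : MvPolynomial σ R} (hP : P.IsHomogeneous a) (b : ℕ)
    (Q : MvPolynomial σ R) :
    homogeneousComponent (a + b) (P * Q) = P * homogeneousComponent b Q := by
  simp only [homogeneousComponent_mul hP, add_right_inj, Finset.sum_ite_eq, Finset.mem_range]
  split_ifs with hb
  · rfl
  · rw [homogeneousComponent_eq_zero _ _ (by omega), mul_zero]

theorem homogeneousComponent_mul_of_lt {a b : ℕ} {P : MvPolynomial σ R} (hP : P.IsHomogeneous a)
    (hb : b < a) (Q : MvPolynomial σ R) : homogeneousComponent b (P * Q) = 0 := by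
  rw [homogeneousComponent_mul hP]
  exact Finset.sum_eq_zero fun i _ => if_neg (by omega)

theorem eq_zero_of_dvd_of_isHomogeneous {a b : ℕ} {P Q : MvPolynomial σ R}
    (hP : P.IsHomogeneous a) (hQ : Q.IsHomogeneous b) (hb : b < a) (h : P ∣ Q) : Q = 0 := by
  obtain ⟨c, rfl⟩ := h
  rw [← homogeneousComponent_eq_self hQ, homogeneousComponent_mul_of_lt hP hb]

theorem exists_isHomogeneous_eq_mul_of_dvd {a b : ℕ} {P Q : MvPolynomial σ R}
    (hP : P.IsHomogeneous a) (hQ : Q.IsHomogeneous (a + b)) (h : P ∣ Q) :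
    ∃ c : MvPolynomial σ R, c.IsHomogeneous b ∧ Q = P * c := by
  obtain ⟨c, rfl⟩ := h
  exact ⟨_, homogeneousComponent_isHomogeneous b c, by
    rw [← homogeneousComponent_add_mul hP, homogeneousComponent_eq_self hQ]⟩

theorem exists_eq_C_mul_of_dvd {a : ℕ} {P Q : MvPolynomial σ R} (hP : P.IsHomogeneous a)
    (hQ : Q.IsHomogeneous a) (h : P ∣ Q) : ∃ c : R, Q = C c * P := by
  obtain ⟨c, hc, rfl⟩ := exists_isHomogeneous_eq_mul_of_dvd (b := 0) hP hQ h
  rw [← homogeneousComponent_eq_self hc, homogeneousComponent_zero]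
  exact ⟨_, mul_comm _ _⟩

theorem eval_smul_of_isHomogeneous {d : ℕ} {P : MvPolynomial σ R} (hP : P.IsHomogeneous d) (t : R)
    (x : σ → R) : eval (t • x) P = t ^ d * eval x P := by
  rw [eval_eq, eval_eq, Finset.mul_sum]
  refine Finset.sum_congr rfl fun m hm => ?_
  have hdeg : ∏ i ∈ m.support, t ^ m i = t ^ d := by
    rw [Finset.prod_pow_eq_pow_sum, hP.degree_eq_sum_deg_support hm]
  simp only [Pi.smul_apply, smul_eq_mul, mul_pow, Finset.prod_mul_distrib, hdeg, mul_left_comm]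

end HomogeneousComponents

section DirectionalDerivative

variable {R σ τ : Type*} [CommRing R]

/-- The derivative `∑ i, w i • ∂/∂X i` in the direction `w`. -/
noncomputable def dirDeriv (w : σ → R) : Derivation R (MvPolynomial σ R) (MvPolynomial σ R) :=
  mkDerivation R fun i => C (w i)

@[simp]
theorem dirDeriv_X (w : σ → R) (i : σ) : dirDeriv w (X i) = C (w i) :=
  mkDerivation_X ..

@[simp]
theorem dirDeriv_C (w : σ → R) (c : R) : dirDeriv w (C c) = 0 :=
  derivation_C ..

theorem dirDeriv_mul (w : σ → R) (P Q : MvPolynomial σ R) :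
    dirDeriv w (P * Q) = P * dirDeriv w Q + Q * dirDeriv w P :=
  Derivation.leibniz ..

theorem dirDeriv_comm (u w : σ → R) (P : MvPolynomial σ R) :
    dirDeriv u (dirDeriv w P) = dirDeriv w (dirDeriv u P) := by
  have hbracket : ⁅dirDeriv u, dirDeriv w⁆ = 0 := derivation_ext fun i => by
    simp [Derivation.commutator_apply]
  rw [← sub_eq_zero, ← Derivation.commutator_apply, hbracket, Derivation.zero_apply]

theorem homogeneousComponent_pderiv (i : σ) (P : MvPolynomial σ R) (j : ℕ) :
    homogeneousComponent j (pderiv i P) = pderiv i (homogeneousComponent (j + 1) P) := by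
  classical
  ext m
  have hdeg : (m + Finsupp.single i 1).degree = m.degree + 1 := by
    rw [map_add, Finsupp.degree_single]
  simp only [coeff_homogeneousComponent, coeff_pderiv, hdeg, add_left_inj, ite_mul, zero_mul]

theorem dirDeriv_eq_sum [Fintype σ] (w : σ → R) (P : MvPolynomial σ R) :
    dirDeriv w P = ∑ i, C (w i) * pderiv i P := by
  simp [derivation_eq_sum_pderiv_smul (dirDeriv w) P, mul_comm]

variable [Finite σ]

theorem isHomogeneous_dirDeriv {d : ℕ} {P : MvPolynomial σ R} (hP : P.IsHomogeneous d)
    (w : σ → R) : (dirDeriv w P).IsHomogeneous (d - 1) := by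
  cases nonempty_fintype σ
  rw [dirDeriv_eq_sum]
  exact IsHomogeneous.sum _ _ _ fun i _ => hP.pderiv.C_mul (w i)

theorem homogeneousComponent_dirDeriv (w : σ → R) (P : MvPolynomial σ R) (j : ℕ) :
    homogeneousComponent j (dirDeriv w P) = dirDeriv w (homogeneousComponent (j + 1) P) := by
  cases nonempty_fintype σ
  simp only [dirDeriv_eq_sum, map_sum, homogeneousComponent_C_mul, homogeneousComponent_pderiv]

theorem dirDeriv_linSubst [Fintype τ] (M : Matrix σ τ R) (P : MvPolynomial σ R) (u : τ → R) :
    dirDeriv u (linSubst M P) = linSubst M (dirDeriv (M.mulVec u) P) := by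
  cases nonempty_fintype σ
  simp only [dirDeriv_eq_sum, pderiv_linSubst, map_sum, map_mul, linSubst_C, Matrix.mulVec,
    dotProduct, Finset.mul_sum, Finset.sum_mul]
  rw [Finset.sum_comm]
  exact Finset.sum_congr rfl fun i _ => Finset.sum_congr rfl fun j _ => by ring

theorem eval_dirDeriv_self {d : ℕ} {P : MvPolynomial σ R} (hP : P.IsHomogeneous d) (x : σ → R) :
    eval x (dirDeriv x P) = d * eval x P := by
  cases nonempty_fintype σ
  simpa [dirDeriv_eq_sum] using congrArg (eval x) hP.sum_X_mul_pderiv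

end DirectionalDerivative

section LinearForms

variable {R σ : Type*} [CommRing R] [Finite σ]

theorem exists_dual_eval_eq {P : MvPolynomial σ R} (hP : P.IsHomogeneous 1) :
    ∃ φ : Module.Dual R (σ → R), (∀ x, eval x P = φ x) ∧ ∀ x, dirDeriv x P = C (φ x) := by
  cases nonempty_fintype σ
  let a : σ → R := fun i => coeff 0 (pderiv i P)
  have hpderiv (i : σ) : pderiv i P = C (a i) := by
    rw [← homogeneousComponent_zero, homogeneousComponent_eq_self hP.pderiv]
  refine ⟨∑ i, a i • LinearMap.proj i, fun x => ?_, fun x => ?_⟩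
  · simpa [hpderiv, mul_comm, eq_comm] using congrArg (eval x) hP.sum_X_mul_pderiv
  · simp [dirDeriv_eq_sum, hpderiv, mul_comm]

theorem dirDeriv_eq_C_eval {P : MvPolynomial σ R} (hP : P.IsHomogeneous 1) (w : σ → R) :
    dirDeriv w P = C (eval w P) := by
  obtain ⟨φ, heval, hderiv⟩ := exists_dual_eval_eq hP
  rw [heval, hderiv]

theorem eval_add_of_isHomogeneous_one {P : MvPolynomial σ R} (hP : P.IsHomogeneous 1)
    (x y : σ → R) : eval (x + y) P = eval x P + eval y P := by
  obtain ⟨φ, heval, -⟩ := exists_dual_eval_eq hP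
  simp only [heval, map_add]

theorem eval_dirDeriv_comm {q : MvPolynomial σ R} (hq : q.IsHomogeneous 2) (u v : σ → R) :
    eval v (dirDeriv u q) = eval u (dirDeriv v q) :=
  C_injective σ R <| by
    rw [← dirDeriv_eq_C_eval (isHomogeneous_dirDeriv hq u),
      ← dirDeriv_eq_C_eval (isHomogeneous_dirDeriv hq v), dirDeriv_comm]

end LinearForms

section QuadraticForms

variable {K σ : Type*} [Field K]

theorem prime_of_isHomogeneous_one {P : MvPolynomial σ K} (hP : P.IsHomogeneous 1) (h0 : P ≠ 0) :
    Prime P := by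
  rw [← UniqueFactorizationMonoid.irreducible_iff_prime,
    irreducible_iff_not_factorsBelow hP h0 one_pos]
  rintro ⟨G, H, rfl, hG, hH⟩
  have := hP.totalDegree h0
  have := totalDegree_mul G H
  omega

theorem dvd_comm_of_isHomogeneous_one {P Q : MvPolynomial σ K} (hP : P.IsHomogeneous 1)
    (hQ : Q.IsHomogeneous 1) (hQ0 : Q ≠ 0) (h : P ∣ Q) : Q ∣ P := by
  obtain ⟨c, rfl⟩ := exists_eq_C_mul_of_dvd hP hQ h
  have hc : C c ≠ (0 : MvPolynomial σ K) := left_ne_zero_of_mul hQ0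
  exact ⟨C c⁻¹, by rw [mul_right_comm, ← C_mul, mul_inv_cancel₀ (C_ne_zero.1 hc), C_1, one_mul]⟩

theorem exists_isHomogeneous_one_mul_eq {q : MvPolynomial σ K} (hq : q.IsHomogeneous 2)
    (h0 : q ≠ 0) (hred : ¬ Irreducible q) :
    ∃ l m : MvPolynomial σ K, l.IsHomogeneous 1 ∧ m.IsHomogeneous 1 ∧ q = l * m := by
  rw [irreducible_iff_not_factorsBelow hq h0 two_pos, not_not] at hred
  obtain ⟨G, H, hGH, hG, hH⟩ := hred
  have hsplit : G = homogeneousComponent 0 G + homogeneousComponent 1 G := by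
    conv_lhs => rw [← sum_homogeneousComponent G]
    rw [Finset.sum_subset (Finset.range_subset_range.2 hG) fun i _ hi =>
      homogeneousComponent_eq_zero _ _ (by simpa using hi)]
    simp only [Finset.sum_range_succ, Finset.sum_range_zero, zero_add]
  have hconst : homogeneousComponent 2 (homogeneousComponent 0 G * H) = 0 := by
    rw [homogeneousComponent_zero, homogeneousComponent_C_mul,
      homogeneousComponent_eq_zero 2 H hH, mul_zero]
  refine ⟨_, _, homogeneousComponent_isHomogeneous 1 G, homogeneousComponent_isHomogeneous 1 H, ?_⟩
  rw [← homogeneousComponent_add_mul (homogeneousComponent_isHomogeneous 1 G), one_add_one_eq_two,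
    ← zero_add (homogeneousComponent 2 _), ← hconst, ← map_add, ← add_mul, ← hsplit, ← hGH,
    homogeneousComponent_eq_self hq]

end QuadraticForms

section Functionals

variable {E V : Type*} [Field E] [AddCommGroup V] [Module E V]

theorem exists_dual_ne_zero_forall_mem_eq_zero (s : Finset V) (hs : s.card < Module.finrank E V) :
    ∃ φ : Module.Dual E V, φ ≠ 0 ∧ ∀ x ∈ s, φ x = 0 := by
  have hlt : Submodule.span E (s : Set V) < ⊤ :=
    Submodule.lt_top_of_finrank_lt_finrank ((finrank_span_finset_le_card s).trans_lt hs)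
  obtain ⟨φ, hφ, hker⟩ := Submodule.exists_le_ker_of_lt_top _ hlt
  exact ⟨φ, hφ, fun x hx => hker (Submodule.subset_span hx)⟩

theorem eq_inf_ker_of_le [FiniteDimensional E V] {φ ψ : Module.Dual E V} {W : Submodule E V}
    (hφ : φ ≠ 0) (hW : Module.finrank E W + 2 = Module.finrank E V) (hWφ : W ≤ LinearMap.ker φ)
    (hWψ : W ≤ LinearMap.ker ψ) (h : ¬ LinearMap.ker φ ≤ LinearMap.ker ψ) :
    W = LinearMap.ker φ ⊓ LinearMap.ker ψ := by
  have hlt : LinearMap.ker φ ⊓ LinearMap.ker ψ < LinearMap.ker φ := inf_lt_left.2 h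
  have := Submodule.finrank_lt_finrank_of_lt hlt
  have := Module.Dual.finrank_ker_add_one_of_ne_zero hφ
  exact Submodule.eq_of_le_of_finrank_le (le_inf hWφ hWψ) (by omega)

theorem le_ker_or_le_ker {φ ψ : Module.Dual E V} {W : Submodule E V}
    (h : ∀ w ∈ W, φ w * ψ w = 0) : W ≤ LinearMap.ker φ ∨ W ≤ LinearMap.ker ψ := by
  by_contra! hc
  obtain ⟨⟨x, hx, hφx⟩, y, hy, hψy⟩ :=
    And.imp SetLike.not_le_iff_exists.1 SetLike.not_le_iff_exists.1 hc
  rw [LinearMap.mem_ker] at hφx hψy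
  have hψx := (mul_eq_zero.1 (h x hx)).resolve_left hφx
  have hφy := (mul_eq_zero.1 (h y hy)).resolve_right hψy
  have := h _ (W.add_mem hx hy)
  simp only [map_add, hψx, hφy, add_zero, zero_add] at this
  exact mul_ne_zero hφx hψy this

end Functionals

section Irreducibility

variable {K σ : Type*} [Field K]

theorem not_dvd_of_isHomogeneous_of_lt {a b : ℕ} {P Q : MvPolynomial σ K} (hP : P.IsHomogeneous a)
    (hQ : Q.IsHomogeneous b) (hirr : Irreducible Q) (ha : 0 < a) (hab : a < b) : ¬ P ∣ Q := by
  rintro ⟨c, rfl⟩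
  rcases hirr.isUnit_or_isUnit rfl with hunit | hunit
  · exact one_ne_zero (eq_zero_of_dvd_of_isHomogeneous hP (isHomogeneous_one σ K) ha hunit.dvd)
  · exact left_ne_zero_of_mul hirr.ne_zero
      (eq_zero_of_dvd_of_isHomogeneous hQ hP hab (hunit.mul_right_dvd.2 dvd_rfl))

theorem exists_eval_ne_zero [Infinite K] {P : MvPolynomial σ K} (hP : P ≠ 0) :
    ∃ x, eval x P ≠ 0 := by
  by_contra! h
  exact hP (MvPolynomial.funext fun x => by rw [h, map_zero])

theorem exists_dirDeriv_ne_zero [CharZero K] [Finite σ] {d : ℕ} {P : MvPolynomial σ K}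
    (hP : P.IsHomogeneous d) (hd : d ≠ 0) (hP0 : P ≠ 0) : ∃ u, dirDeriv u P ≠ 0 := by
  by_contra! h
  refine hP0 (MvPolynomial.funext fun x => ?_)
  have := eval_dirDeriv_self hP x
  rw [h, map_zero, zero_eq_mul] at this
  rw [this.resolve_left (Nat.cast_ne_zero.2 hd), map_zero]

theorem eval_add_of_isHomogeneous_two [CharZero K] [Finite σ] {q : MvPolynomial σ K}
    (hq : q.IsHomogeneous 2) (u v : σ → K) :
    eval (u + v) q = eval u q + eval v (dirDeriv u q) + eval v q := by
  have hlin (x) := eval_add_of_isHomogeneous_one (isHomogeneous_dirDeriv hq x) u v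
  have heuler (x) := eval_dirDeriv_self hq x
  have hadd := heuler (u + v)
  rw [hlin, eval_dirDeriv_comm hq, eval_dirDeriv_comm hq (u + v) v] at hadd
  rw [hlin, hlin, heuler, heuler, eval_dirDeriv_comm hq v u] at hadd
  push_cast at hadd
  linear_combination (-1 / 2 : K) * hadd

theorem exists_eval_eq_zero_eval_mul_ne_zero [IsAlgClosed K] [Finite σ] {F l m : MvPolynomial σ K}
    (hl : Prime l) (hF : ¬ l ∣ F) (hm : ¬ l ∣ m) :
    ∃ u, eval u l = 0 ∧ eval u F ≠ 0 ∧ eval u m ≠ 0 := by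
  by_contra! hc
  refine (hl.dvd_or_dvd (dvd_of_forall_eval_eq_zero hl (G := F * m) fun x hx => ?_)).elim hF hm
  rw [map_mul, mul_eq_zero, or_iff_not_imp_left]
  exact hc x hx

theorem eval_eq_zero_of_eval_dirDeriv_mul_eq_zero [CharZero K] [Finite σ] {η : σ → K}
    {l m : MvPolynomial σ K} (hl : l.IsHomogeneous 1) (hm : m.IsHomogeneous 1)
    (hm0 : ∃ v, eval v m ≠ 0) (h : ∀ u, eval η (dirDeriv u (l * m)) = 0) : eval η l = 0 := by
  obtain ⟨v, hv⟩ := hm0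
  have hprod (u) : eval η l * eval u m + eval η m * eval u l = 0 := by
    simpa [dirDeriv_mul, dirDeriv_eq_C_eval hl, dirDeriv_eq_C_eval hm] using h u
  by_contra hηl
  have hηm : eval η m = 0 := by
    have := hprod η
    rw [mul_comm (eval η m), ← two_mul] at this
    simpa [hηl] using this
  simpa [hηm, hηl, hv] using hprod v

end Irreducibility

section SubspacesInHyperplanes

variable {E σ : Type*} [Field E] [Fintype σ]

/-- Every hyperplane through `η` contains, as a hyperplane of its own, a linear subspace through `η`
on which all the polynomials in `S` vanish. -/
def HasSubspacesInHyperplanes (η : σ → E) (S : Set (MvPolynomial σ E)) : Prop :=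
  ∀ φ : Module.Dual E (σ → E), φ ≠ 0 → φ η = 0 → ∃ W : Submodule E (σ → E),
    Module.finrank E W + 2 = Fintype.card σ ∧ η ∈ W ∧ W ≤ LinearMap.ker φ ∧
      ∀ P ∈ S, ∀ w ∈ W, eval w P = 0

variable {η : σ → E} {S : Set (MvPolynomial σ E)}

theorem HasSubspacesInHyperplanes.exists_submodule (hS : HasSubspacesInHyperplanes η S)
    (hσ : 4 ≤ Fintype.card σ) (u v : σ → E) :
    ∃ (φ : Module.Dual E (σ → E)) (W : Submodule E (σ → E)), φ ≠ 0 ∧ φ u = 0 ∧ φ v = 0 ∧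
      Module.finrank E W + 2 = Module.finrank E (σ → E) ∧ W ≤ LinearMap.ker φ ∧
      ∀ P ∈ S, ∀ w ∈ W, eval w P = 0 := by
  classical
  obtain ⟨φ, hφ, hker⟩ := exists_dual_ne_zero_forall_mem_eq_zero (E := E) {η, u, v}
    (Finset.card_le_three.trans_lt (by rw [Module.finrank_pi]; omega))
  simp only [Finset.mem_insert, Finset.mem_singleton, forall_eq_or_imp, forall_eq] at hker
  obtain ⟨W, hW, -, hWφ, hWS⟩ := hS φ hφ hker.1
  exact ⟨φ, W, hφ, hker.2.1, hker.2.2, by rwa [Module.finrank_pi], hWφ, hWS⟩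

variable {F l m q : MvPolynomial σ E}

theorem HasSubspacesInHyperplanes.eval_eq_zero_of_forall_eval_eq_zero
    (hS : HasSubspacesInHyperplanes η S) (hσ : 4 ≤ Fintype.card σ) (hlm : l * m ∈ S) (hF : F ∈ S)
    (hl : l.IsHomogeneous 1) (hm : m.IsHomogeneous 1) (hl0 : ∃ v, eval v l ≠ 0)
    (h : ∀ x, eval x m = 0 → eval x l = 0) {u : σ → E} (hu : eval u l = 0) : eval u F = 0 := by
  obtain ⟨lam, hlam, -⟩ := exists_dual_eval_eq hl
  obtain ⟨mu, hmu, -⟩ := exists_dual_eval_eq hm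
  obtain ⟨v, hv⟩ := hl0
  obtain ⟨φ, W, hφ, hφu, hφv, hW, hWφ, hWS⟩ := hS.exists_submodule hσ u v
  have hWlam : W ≤ LinearMap.ker lam := by
    rcases le_ker_or_le_ker (φ := lam) (ψ := mu) (W := W) fun w hw => by
        rw [← hlam, ← hmu, ← map_mul, hWS _ hlm w hw] with hle | hle
    · exact hle
    · exact fun w hw => by
        rw [LinearMap.mem_ker, ← hlam, h w ((hmu w).trans (hle hw))]
  refine hWS F hF u ?_
  rw [eq_inf_ker_of_le hφ hW hWφ hWlam fun hle => hv ((hlam v).trans (hle hφv))]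
  exact ⟨hφu, (hlam u).symm.trans hu⟩

theorem HasSubspacesInHyperplanes.eval_mul_eval_eq_zero
    (hS : HasSubspacesInHyperplanes η S) (hσ : 4 ≤ Fintype.card σ) (hlm : l * m ∈ S) (hF : F ∈ S)
    (hl : l.IsHomogeneous 1) (hm : m.IsHomogeneous 1) {u v : σ → E} (hul : eval u l = 0)
    (hum : eval u m ≠ 0) (hvl : eval v l ≠ 0) (hvm : eval v m = 0) :
    eval u F * eval v F = 0 := by
  obtain ⟨lam, hlam, -⟩ := exists_dual_eval_eq hl
  obtain ⟨mu, hmu, -⟩ := exists_dual_eval_eq hm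
  obtain ⟨φ, W, hφ, hφu, hφv, hW, hWφ, hWS⟩ := hS.exists_submodule hσ u v
  rw [hlam] at hul hvl
  rw [hmu] at hum hvm
  rcases le_ker_or_le_ker (φ := lam) (ψ := mu) (W := W) fun w hw => by
      rw [← hlam, ← hmu, ← map_mul, hWS _ hlm w hw] with hle | hle
  · have hWeq := eq_inf_ker_of_le hφ hW hWφ hle fun h => hvl (h hφv)
    rw [hWS F hF u (hWeq ▸ ⟨hφu, hul⟩), zero_mul]
  · have hWeq := eq_inf_ker_of_le hφ hW hWφ hle fun h => hum (h hφu)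
    rw [hWS F hF v (hWeq ▸ ⟨hφv, hvm⟩), mul_zero]

theorem HasSubspacesInHyperplanes.irreducible [IsAlgClosed E] [CharZero E]
    (hS : HasSubspacesInHyperplanes η S) (hσ : 4 ≤ Fintype.card σ) (hqS : q ∈ S) (hFS : F ∈ S)
    (hF : ∀ l : MvPolynomial σ E, l.IsHomogeneous 1 → l ≠ 0 → eval η l = 0 → ¬ l ∣ F)
    (hq : q.IsHomogeneous 2) (hq0 : q ≠ 0) (hη : ∀ u, eval η (dirDeriv u q) = 0) :
    Irreducible q := by
  by_contra hred
  obtain ⟨l, m, hl, hm, rfl⟩ := exists_isHomogeneous_one_mul_eq hq hq0 hred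
  have hl0 := left_ne_zero_of_mul hq0
  have hm0 := right_ne_zero_of_mul hq0
  have hlval := exists_eval_ne_zero hl0
  have hmval := exists_eval_ne_zero hm0
  have hlF := hF l hl hl0 (eval_eq_zero_of_eval_dirDeriv_mul_eq_zero hl hm hmval hη)
  have hmF := hF m hm hm0
    (eval_eq_zero_of_eval_dirDeriv_mul_eq_zero hm hl hlval (mul_comm l m ▸ hη))
  have hlprime := prime_of_isHomogeneous_one hl hl0
  by_cases hlm : l ∣ m
  · refine hlF (dvd_of_forall_eval_eq_zero hlprime fun u hu => ?_)
    refine hS.eval_eq_zero_of_forall_eval_eq_zero hσ hqS hFS hl hm hlval (fun x hx => ?_) hu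
    exact zero_dvd_iff.1 (hx ▸ map_dvd (eval x) (dvd_comm_of_isHomogeneous_one hl hm hm0 hlm))
  · have hml : ¬ m ∣ l := fun h => hlm (dvd_comm_of_isHomogeneous_one hm hl hl0 h)
    obtain ⟨u, hul, huF, hum⟩ := exists_eval_eq_zero_eval_mul_ne_zero hlprime hlF hlm
    obtain ⟨v, hvm, hvF, hvl⟩ :=
      exists_eval_eq_zero_eval_mul_ne_zero (prime_of_isHomogeneous_one hm hm0) hmF hml
    exact mul_ne_zero huF hvF
      (hS.eval_mul_eval_eq_zero hσ hqS hFS hl hm hul hum hvl hvm)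

theorem HasSubspacesInHyperplanes.eval_eq_zero_of_dirDeriv_ne_zero
    [IsAlgClosed E] [CharZero E]
    (hS : HasSubspacesInHyperplanes η S) (hqS : q ∈ S) (hFS : F ∈ S) (hq : q.IsHomogeneous 2)
    (hirr : Irreducible q) (hη : ∀ u, eval η (dirDeriv u q) = 0) {z : σ → E} (hz : eval z q = 0)
    (hdz : dirDeriv z q ≠ 0) : eval z F = 0 := by
  have hlin := isHomogeneous_dirDeriv hq z
  obtain ⟨φ, hφ, -⟩ := exists_dual_eval_eq hlin
  have hφ0 : φ ≠ 0 := by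
    rintro rfl
    exact hdz (MvPolynomial.funext fun x => by rw [hφ, map_zero]; rfl)
  obtain ⟨W, hW, -, hWφ, hWS⟩ := hS φ hφ0 ((hφ η).symm.trans (hη z))
  by_cases hzW : z ∈ W
  · exact hWS F hFS z hzW
  have hφz : φ z = 0 := by rw [← hφ, eval_dirDeriv_self hq, hz, mul_zero]
  have hlt : W < W ⊔ Submodule.span E {z} := by
    rwa [left_lt_sup, Submodule.span_singleton_le_iff_mem]
  have hker : W ⊔ Submodule.span E {z} = LinearMap.ker φ := by
    have := Submodule.finrank_lt_finrank_of_lt hlt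
    have := Module.Dual.finrank_ker_add_one_of_ne_zero hφ0
    rw [Module.finrank_pi] at this
    exact Submodule.eq_of_le_of_finrank_le (sup_le hWφ (by simpa using hφz)) (by omega)
  refine absurd (dvd_of_forall_eval_eq_zero (prime_of_isHomogeneous_one hlin hdz) fun x hx => ?_)
    (not_dvd_of_isHomogeneous_of_lt hlin hq hirr one_pos one_lt_two)
  have hxW : x ∈ W ⊔ Submodule.span E {z} := hker ▸ (hφ x).symm.trans hx
  obtain ⟨w, hw, y, hy, rfl⟩ := Submodule.mem_sup.1 hxW
  obtain ⟨c, rfl⟩ := Submodule.mem_span_singleton.1 hy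
  have hwz : eval z (dirDeriv w q) = 0 := by
    rw [eval_dirDeriv_comm hq, hφ]
    exact hWφ hw
  rw [eval_add_of_isHomogeneous_two hq, hWS q hqS w hw, eval_smul_of_isHomogeneous hq, hz,
    eval_smul_of_isHomogeneous (isHomogeneous_dirDeriv hq w), hwz, mul_zero, mul_zero, add_zero,
    add_zero]

theorem HasSubspacesInHyperplanes.dvd [IsAlgClosed E] [CharZero E]
    (hS : HasSubspacesInHyperplanes η S) (hqS : q ∈ S) (hFS : F ∈ S) (hq : q.IsHomogeneous 2)
    (hirr : Irreducible q) (hη : ∀ u, eval η (dirDeriv u q) = 0) : q ∣ F := by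
  obtain ⟨u, hu⟩ := exists_dirDeriv_ne_zero hq two_ne_zero hirr.ne_zero
  refine (hirr.prime.dvd_or_dvd (b := dirDeriv u q)
    (dvd_of_forall_eval_eq_zero hirr.prime fun z hz => ?_)).resolve_right fun h =>
      hu (eq_zero_of_dvd_of_isHomogeneous hq (isHomogeneous_dirDeriv hq u) one_lt_two h)
  rw [map_mul, mul_eq_zero]
  by_cases hdz : dirDeriv z q = 0
  · exact Or.inr (by rw [eval_dirDeriv_comm hq, hdz, map_zero])
  · exact Or.inl (hS.eval_eq_zero_of_dirDeriv_ne_zero hqS hFS hq hirr hη hz hdz)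

end SubspacesInHyperplanes

section OrthogonalProjection

variable {K σ : Type*} [Field K] [Finite σ] {q : MvPolynomial σ K}

/-- The projection of `z` to the orthogonal complement of `u` with respect to the quadratic form
`q`, whose polar form is `(u, z) ↦ eval z (dirDeriv u q)`; meaningful when `q` does not vanish
at `u`. -/
noncomputable def orthProj (q : MvPolynomial σ K) (u z : σ → K) : σ → K :=
  z + (-eval z (dirDeriv u q) / (2 * eval u q)) • u

theorem eval_orthProj_of_orthogonal (hq : q.IsHomogeneous 2) {u v : σ → K}
    (huv : eval u (dirDeriv v q) = 0) (z : σ → K) :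
    eval (orthProj q u z) (dirDeriv v q) = eval z (dirDeriv v q) := by
  rw [orthProj, eval_add_of_isHomogeneous_one (isHomogeneous_dirDeriv hq v),
    eval_smul_of_isHomogeneous (isHomogeneous_dirDeriv hq v), huv, mul_zero, add_zero]

variable [CharZero K]

theorem eval_orthProj_dirDeriv (hq : q.IsHomogeneous 2) {u : σ → K} (hu : eval u q ≠ 0)
    (z : σ → K) : eval (orthProj q u z) (dirDeriv u q) = 0 := by
  rw [orthProj, eval_add_of_isHomogeneous_one (isHomogeneous_dirDeriv hq u),
    eval_smul_of_isHomogeneous (isHomogeneous_dirDeriv hq u), eval_dirDeriv_self hq]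
  push_cast
  field_simp
  ring

theorem eval_orthProj (hq : q.IsHomogeneous 2) {u : σ → K} (hu : eval u q ≠ 0) (z : σ → K) :
    eval (orthProj q u z) q = eval z q - (4 * eval u q)⁻¹ * eval z (dirDeriv u q) ^ 2 := by
  rw [orthProj, eval_add_of_isHomogeneous_two hq, eval_smul_of_isHomogeneous hq,
    eval_smul_of_isHomogeneous (isHomogeneous_dirDeriv hq z), eval_dirDeriv_comm hq z u]
  simp only [Nat.add_one_sub_one, pow_one]
  field_simp
  ring

omit [Finite σ] [CharZero K] in
theorem ne_C_mul_sq_add_C_mul_sq [IsAlgClosed K] (hirr : Irreducible q)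
    {l m : MvPolynomial σ K} (hl : l.IsHomogeneous 1) (hm : m.IsHomogeneous 1) (α β : K) :
    q ≠ C α * l ^ 2 + C β * m ^ 2 := by
  obtain ⟨a, rfl⟩ := IsAlgClosed.exists_pow_nat_eq α two_pos
  obtain ⟨b, hb⟩ := IsAlgClosed.exists_pow_nat_eq (-β) two_pos
  obtain rfl : -b ^ 2 = β := by rw [hb, neg_neg]
  have hlin : (C a * l + C b * m).IsHomogeneous 1 := (hl.C_mul a).add (hm.C_mul b)
  have hlin' : (C a * l - C b * m).IsHomogeneous 1 := (hl.C_mul a).sub (hm.C_mul b)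
  intro h
  have hfactor : q = (C a * l + C b * m) * (C a * l - C b * m) := by
    rw [h]
    simp only [map_pow, map_neg]
    ring
  exact not_dvd_of_isHomogeneous_of_lt hlin (hfactor ▸ hlin.mul hlin') hirr one_pos one_lt_two
    (Dvd.intro _ hfactor.symm)

theorem exists_orthogonal_triple [IsAlgClosed K] (hq : q.IsHomogeneous 2) (hirr : Irreducible q) :
    ∃ u v w, eval u q ≠ 0 ∧ eval v q ≠ 0 ∧ eval w q ≠ 0 ∧ eval v (dirDeriv u q) = 0 ∧
      eval w (dirDeriv u q) = 0 ∧ eval w (dirDeriv v q) = 0 := by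
  have hlin := isHomogeneous_dirDeriv hq
  obtain ⟨u, hu⟩ := exists_eval_ne_zero hirr.ne_zero
  obtain ⟨y, hy⟩ := exists_eval_ne_zero <| sub_ne_zero.2 <|
    ne_C_mul_sq_add_C_mul_sq hirr (hlin u) (hlin u) (4 * eval u q)⁻¹ 0
  have hv : eval (orthProj q u y) q ≠ 0 := by simpa [eval_orthProj hq hu] using hy
  have huv := eval_orthProj_dirDeriv hq hu y
  set v := orthProj q u y
  obtain ⟨z, hz⟩ := exists_eval_ne_zero <| sub_ne_zero.2 <|
    ne_C_mul_sq_add_C_mul_sq hirr (hlin u) (hlin v) (4 * eval u q)⁻¹ (4 * eval v q)⁻¹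
  have hvu : eval u (dirDeriv v q) = 0 := by rw [eval_dirDeriv_comm hq, huv]
  refine ⟨u, v, orthProj q v (orthProj q u z), hu, hv, ?_, huv, ?_,
    eval_orthProj_dirDeriv hq hv _⟩
  · rw [eval_orthProj hq hv, eval_orthProj hq hu, eval_orthProj_of_orthogonal hq hvu]
    simpa [sub_sub] using hz
  · rw [eval_orthProj_of_orthogonal hq huv, eval_orthProj_dirDeriv hq hu]

end OrthogonalProjection

section TaylorExpansion

variable {R σ : Type*} [CommRing R]

/-- The polynomial `P (ξ + X)`, whose homogeneous components are the terms of the Taylor expansion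
of `P` at `ξ`. -/
noncomputable def translateHom (ξ : σ → R) : MvPolynomial σ R →ₐ[R] MvPolynomial σ R :=
  aeval fun i => X i + C (ξ i)

@[simp]
theorem translateHom_X (ξ : σ → R) (i : σ) : translateHom ξ (X i) = X i + C (ξ i) :=
  aeval_X ..

theorem eval_translateHom (ξ w : σ → R) (P : MvPolynomial σ R) :
    eval w (translateHom ξ P) = eval (ξ + w) P := by
  induction P using MvPolynomial.induction_on with
  | C c => simp
  | add P Q hP hQ => simp only [map_add, hP, hQ]
  | mul_X P i hP => simp [hP, add_comm]

theorem dirDeriv_translateHom (ξ w : σ → R) (P : MvPolynomial σ R) :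
    dirDeriv w (translateHom ξ P) = translateHom ξ (dirDeriv w P) := by
  induction P using MvPolynomial.induction_on with
  | C c => simp
  | add P Q hP hQ => simp only [map_add, hP, hQ]
  | mul_X P i hP => simp [hP]

/-- The term of degree `j` in the Taylor expansion of `P` at `ξ`. -/
noncomputable def taylorComponent (ξ : σ → R) (P : MvPolynomial σ R) (j : ℕ) : MvPolynomial σ R :=
  homogeneousComponent j (translateHom ξ P)

theorem isHomogeneous_taylorComponent (ξ : σ → R) (P : MvPolynomial σ R) (j : ℕ) :
    (taylorComponent ξ P j).IsHomogeneous j :=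
  homogeneousComponent_isHomogeneous ..

theorem taylorComponent_zero (ξ : σ → R) (P : MvPolynomial σ R) :
    taylorComponent ξ P 0 = C (eval ξ P) := by
  rw [taylorComponent, homogeneousComponent_zero, ← constantCoeff_eq, ← eval_zero,
    eval_translateHom, add_zero]

theorem eval_taylorComponent_eq_zero {K : Type*} [Field K] [Infinite K] {ξ w : σ → K}
    {P : MvPolynomial σ K} (h : ∀ s : K, eval (ξ + s • w) P = 0) (j : ℕ) :
    eval w (taylorComponent ξ P j) = 0 := by
  let p : Polynomial K := ∑ k ∈ Finset.range ((translateHom ξ P).totalDegree + 1),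
    Polynomial.monomial k (eval w (taylorComponent ξ P k))
  have hp : p = 0 := Polynomial.funext fun s => by
    rw [Polynomial.eval_zero, ← h s, ← eval_translateHom,
      ← sum_homogeneousComponent (translateHom ξ P)]
    simp only [p, Polynomial.eval_finsetSum, Polynomial.eval_monomial, map_sum,
      eval_smul_of_isHomogeneous (homogeneousComponent_isHomogeneous _ _), taylorComponent,
      mul_comm]
  by_cases hj : j < (translateHom ξ P).totalDegree + 1
  · have hcoeff : p.coeff j = eval w (taylorComponent ξ P j) := by
      simp [p, Polynomial.finsetSum_coeff, Polynomial.coeff_monomial, hj]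
    rw [← hcoeff, hp, Polynomial.coeff_zero]
  · rw [taylorComponent, homogeneousComponent_eq_zero _ _ (by omega), map_zero]

variable [Finite σ]

theorem taylorComponent_dirDeriv (ξ w : σ → R) (P : MvPolynomial σ R) (j : ℕ) :
    taylorComponent ξ (dirDeriv w P) j = dirDeriv w (taylorComponent ξ P (j + 1)) := by
  rw [taylorComponent, ← dirDeriv_translateHom, homogeneousComponent_dirDeriv, taylorComponent]

theorem eval_taylorComponent_one (ξ w : σ → R) (P : MvPolynomial σ R) :
    eval w (taylorComponent ξ P 1) = eval ξ (dirDeriv w P) :=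
  C_injective σ R <| by
    rw [← dirDeriv_eq_C_eval (isHomogeneous_taylorComponent ξ P 1), ← zero_add 1,
      ← taylorComponent_dirDeriv, taylorComponent_zero]

theorem eval_dirDeriv_taylorComponent_two (ξ u w : σ → R) (P : MvPolynomial σ R) :
    eval w (dirDeriv u (taylorComponent ξ P 2)) = eval ξ (dirDeriv w (dirDeriv u P)) := by
  rw [← one_add_one_eq_two, ← taylorComponent_dirDeriv, eval_taylorComponent_one]

theorem eval_dirDeriv_self_taylorComponent_two {d : ℕ} {P : MvPolynomial σ R}
    (hP : P.IsHomogeneous d) (ξ w : σ → R) :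
    eval w (dirDeriv ξ (taylorComponent ξ P 2)) =
      (d - 1 : ℕ) * eval w (taylorComponent ξ P 1) := by
  rw [eval_dirDeriv_taylorComponent_two, dirDeriv_comm,
    eval_dirDeriv_self (isHomogeneous_dirDeriv hP w), eval_taylorComponent_one]

end TaylorExpansion

section CoefficientDerivation

variable {K E σ : Type*} [CommRing K] [CommRing E] [Algebra K E]

/-- The derivation of a polynomial ring that applies `D` to the coefficients. -/
noncomputable def coeffDerivation (D : Derivation K E E) :
    Derivation K (MvPolynomial σ E) (MvPolynomial σ E) :=
  Derivation.mk'
    { toFun P := AddMonoidAlgebra.map (D : E →+ E) P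
      map_add' P Q := by ext m; exact D.map_add _ _
      map_smul' c P := by ext m; exact D.map_smul c _ }
    fun P Q => by
      classical
      ext m
      change D (coeff m (P * Q)) = _
      simp only [smul_eq_mul, coeff_add, mul_comm Q, coeff_mul, map_sum, Derivation.leibniz,
        ← Finset.sum_add_distrib]
      exact Finset.sum_congr rfl fun x _ => by rw [mul_comm (coeff x.2 Q)]; rfl

theorem coeff_coeffDerivation (D : Derivation K E E) (P : MvPolynomial σ E) (m : σ →₀ ℕ) :
    coeff m (coeffDerivation D P) = D (coeff m P) :=
  rfl

@[simp]
theorem coeffDerivation_C (D : Derivation K E E) (c : E) :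
    coeffDerivation (σ := σ) D (C c) = C (D c) := by
  classical
  ext m
  simp only [coeff_coeffDerivation, coeff_C, apply_ite D, map_zero]

@[simp]
theorem coeffDerivation_X (D : Derivation K E E) (i : σ) : coeffDerivation D (X i) = 0 := by
  classical
  ext m
  simp only [coeff_coeffDerivation, coeff_X, apply_ite D, map_zero, coeff_zero,
    Derivation.map_one_eq_zero, ite_self]

theorem coeffDerivation_map_algebraMap (D : Derivation K E E) (P : MvPolynomial σ K) :
    coeffDerivation D (map (algebraMap K E) P) = 0 := by
  ext m
  rw [coeff_coeffDerivation, coeff_map, Derivation.map_algebraMap, coeff_zero]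

theorem coeffDerivation_homogeneousComponent (D : Derivation K E E) (j : ℕ)
    (P : MvPolynomial σ E) :
    coeffDerivation D (homogeneousComponent j P) =
      homogeneousComponent j (coeffDerivation D P) := by
  ext m
  simp only [coeff_coeffDerivation, coeff_homogeneousComponent, apply_ite D, map_zero]

theorem isHomogeneous_coeffDerivation (D : Derivation K E E) {P : MvPolynomial σ E} {j : ℕ}
    (hP : P.IsHomogeneous j) : (coeffDerivation D P).IsHomogeneous j := by
  rw [← homogeneousComponent_eq_self hP, coeffDerivation_homogeneousComponent]
  exact homogeneousComponent_isHomogeneous ..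

theorem coeffDerivation_translateHom (D : Derivation K E E) {ξ w : σ → E} (hD : ∀ i, D (ξ i) = w i)
    (P : MvPolynomial σ E) :
    coeffDerivation D (translateHom ξ P) =
      dirDeriv w (translateHom ξ P) + translateHom ξ (coeffDerivation D P) := by
  induction P using MvPolynomial.induction_on with
  | C c => simp
  | add P Q hP hQ =>
    simp only [map_add, hP, hQ]
    ring
  | mul_X P i hP =>
    simp only [map_mul, Derivation.leibniz, translateHom_X, map_add, coeffDerivation_X,
      coeffDerivation_C, dirDeriv_X, dirDeriv_C, hD, hP, smul_eq_mul, map_zero]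
    ring

theorem coeffDerivation_taylorComponent [Finite σ] (D : Derivation K E E) {ξ w : σ → E}
    (hD : ∀ i, D (ξ i) = w i) {P : MvPolynomial σ E} (hP : coeffDerivation D P = 0) (j : ℕ) :
    coeffDerivation D (taylorComponent ξ P j) = dirDeriv w (taylorComponent ξ P (j + 1)) := by
  rw [taylorComponent, coeffDerivation_homogeneousComponent, coeffDerivation_translateHom D hD, hP,
    map_zero, add_zero, homogeneousComponent_dirDeriv, taylorComponent]

end CoefficientDerivation

section Lifting

variable {S A B : Type*} [CommSemiring S] [CommRing A] [CommRing B] [Algebra S A]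

theorem dvd_map_of_derivation_eq_zero [IsDomain A] (π : A →+* B) {L : A} (hL : Prime L)
    (hπ : π L = 0) (D : Derivation S A A) {F Q R T α β : A} {k : ℕ} (hQ : π Q ≠ 0)
    (hF : F = Q * R + L ^ (k + 1) * T) (hDF : D F = 0) (hDQ : D Q = α * Q + β * L ^ k) :
    π Q ∣ π β * π R + ((k + 1 : ℕ) : B) * (π (D L) * π T) := by
  have hLQ : ¬ L ∣ Q := fun ⟨c, hc⟩ => hQ (by rw [hc, map_mul, hπ, zero_mul])
  have hDF' : Q * (α * R + D R) +
      L ^ k * (β * R + ((k + 1 : ℕ) : A) * (D L * T) + L * D T) = 0 := by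
    rw [← hDF, hF, map_add, D.leibniz, D.leibniz, D.leibniz_pow, hDQ]
    simp only [smul_eq_mul, nsmul_eq_mul, add_tsub_cancel_right]
    ring
  obtain ⟨V, hV⟩ : L ^ k ∣ α * R + D R := by
    refine hL.pow_dvd_of_dvd_mul_left k hLQ ?_
    rw [eq_neg_of_add_eq_zero_left hDF', dvd_neg]
    exact dvd_mul_right _ _
  have hcancel : Q * V + (β * R + ((k + 1 : ℕ) : A) * (D L * T) + L * D T) = 0 := by
    refine (mul_eq_zero.1 ?_).resolve_left (pow_ne_zero k hL.ne_zero)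
    rw [← hDF', hV]
    ring
  have hmap := congrArg π hcancel
  simp only [map_add, map_mul, map_natCast, map_zero, hπ, zero_mul, add_zero] at hmap
  exact ⟨-π V, by linear_combination hmap⟩

theorem exists_eq_sub_mul_add_pow_mul (π : A →+* B) (hsurj : Function.Surjective π) {L : A}
    (hker : ∀ P, π P = 0 → L ∣ P) {F Q R T m : A} {k : ℕ} (hF : F = Q * R + L ^ (k + 1) * T)
    (hdvd : π Q ∣ π T + π m * π R) :
    ∃ R' T', F = (Q - m * L ^ (k + 1)) * R' + L ^ (k + 2) * T' := by
  obtain ⟨c, hc⟩ := hdvd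
  obtain ⟨c, rfl⟩ := hsurj c
  obtain ⟨b, hb⟩ := hker (T + m * R - Q * c) (by
    rw [map_sub, map_add, map_mul, map_mul, hc, sub_self])
  refine ⟨R + L ^ (k + 1) * c, b + m * L ^ k * c, ?_⟩
  rw [hF]
  linear_combination L ^ (k + 1) * hb

theorem dvd_mul_sub_mul_of_dvd_add {p x y b₁ b₂ h₁ h₂ : B} (hp : Prime p) (hx : ¬ p ∣ x)
    (h₁' : p ∣ b₁ * x + h₁ * y) (h₂' : p ∣ b₂ * x + h₂ * y) : p ∣ b₁ * h₂ - b₂ * h₁ := by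
  refine (hp.dvd_or_dvd ?_).resolve_right hx
  have := dvd_sub (h₁'.mul_left h₂) (h₂'.mul_left h₁)
  rwa [show h₂ * (b₁ * x + h₁ * y) - h₁ * (b₂ * x + h₂ * y) = (b₁ * h₂ - b₂ * h₁) * x by ring]
    at this

end Lifting

section PolarForms

variable {E τ : Type*} [Field E] [Finite τ] {q : MvPolynomial τ E}

theorem eq_zero_of_dvd_dirDeriv_mul {l : MvPolynomial τ E} (hq : q.IsHomogeneous 2)
    (hirr : Irreducible q) (hl : l.IsHomogeneous 1) {u : τ → E} (hu : dirDeriv u q ≠ 0)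
    (h : q ∣ dirDeriv u q * l) : l = 0 := by
  rcases (UniqueFactorizationMonoid.irreducible_iff_prime.1 hirr).dvd_or_dvd h with h | h
  · exact absurd (eq_zero_of_dvd_of_isHomogeneous hq (isHomogeneous_dirDeriv hq u) one_lt_two h) hu
  · exact eq_zero_of_dvd_of_isHomogeneous hq hl one_lt_two h

variable [CharZero E]

theorem eval_dirDeriv_self_ne_zero (hq : q.IsHomogeneous 2) {u : τ → E} (hu : eval u q ≠ 0) :
    eval u (dirDeriv u q) ≠ 0 := by
  rw [eval_dirDeriv_self hq]
  exact mul_ne_zero (by norm_num) hu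

theorem dirDeriv_ne_zero_of_eval_ne_zero (hq : q.IsHomogeneous 2) {u : τ → E}
    (hu : eval u q ≠ 0) : dirDeriv u q ≠ 0 := fun h =>
  eval_dirDeriv_self_ne_zero hq hu (by rw [h, map_zero])

theorem forall_eq_zero_of_dvd [IsAlgClosed E] (hq : q.IsHomogeneous 2) (hirr : Irreducible q)
    {γ : (τ → E) → E}
    (h : ∀ u v, q ∣ C (γ u) * dirDeriv v q - C (γ v) * dirDeriv u q) (u : τ → E) : γ u = 0 := by
  have hlin (x) : (dirDeriv x q).IsHomogeneous 1 := isHomogeneous_dirDeriv hq x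
  have hproportional (x y) : C (γ x) * dirDeriv y q = C (γ y) * dirDeriv x q :=
    sub_eq_zero.1 <| eq_zero_of_dvd_of_isHomogeneous hq
      (((hlin y).C_mul _).sub ((hlin x).C_mul _)) one_lt_two (h x y)
  obtain ⟨v, w, -, hv, hw, -, hvw, -, -⟩ := exists_orthogonal_triple hq hirr
  have hγv : γ v = 0 := by
    have := congrArg (eval w) (hproportional v w)
    simpa [hvw, eval_dirDeriv_self_ne_zero hq hw] using this
  simpa [hγv, dirDeriv_ne_zero_of_eval_ne_zero hq hv] using hproportional u v

-- Evaluation at a vector orthogonal to `v` and `w` turns the divisibility into an equality.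
theorem exists_eq_C_mul_dirDeriv [IsAlgClosed E] (hq : q.IsHomogeneous 2) (hirr : Irreducible q)
    {b : (τ → E) → MvPolynomial τ E} (hb : ∀ u, (b u).IsHomogeneous 1)
    (h : ∀ u v, q ∣ b u * dirDeriv v q - b v * dirDeriv u q) :
    ∃ c : E, ∀ u, b u = C c * dirDeriv u q := by
  have hlin (x) : (dirDeriv x q).IsHomogeneous 1 := isHomogeneous_dirDeriv hq x
  obtain ⟨v, w, x, hv, hw, hx, hvw, hvx, hwx⟩ := exists_orthogonal_triple hq hirr
  have heq : b v * dirDeriv w q = b w * dirDeriv v q := by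
    obtain ⟨e, he⟩ := exists_eq_C_mul_of_dvd hq
      (((hb v).mul (hlin w)).sub ((hb w).mul (hlin v))) (h v w)
    have heval : e = 0 := by simpa [hvx, hwx, hx] using congrArg (eval x) he
    rwa [heval, C_0, zero_mul, sub_eq_zero] at he
  have hv0 := dirDeriv_ne_zero_of_eval_ne_zero hq hv
  have hndvd : ¬ dirDeriv v q ∣ dirDeriv w q := fun ⟨c, hc⟩ =>
    eval_dirDeriv_self_ne_zero hq hw (by rw [hc, map_mul, hvw, zero_mul])
  obtain ⟨c, hc⟩ := exists_eq_C_mul_of_dvd (hlin v) (hb v) <|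
    ((prime_of_isHomogeneous_one (hlin v) hv0).dvd_or_dvd (Dvd.intro_left _ heq.symm)).resolve_right
      hndvd
  refine ⟨c, fun u => sub_eq_zero.1 <| eq_zero_of_dvd_dirDeriv_mul hq hirr
    ((hb u).sub ((hlin u).C_mul c)) hv0 ?_⟩
  have := h u v
  rwa [hc, show b u * dirDeriv v q - C c * dirDeriv v q * dirDeriv u q =
    dirDeriv v q * (b u - C c * dirDeriv u q) by ring] at this

end PolarForms

section TangentData

variable {K E σ τ : Type*} [CommRing K] [Field E] [Algebra K E] [Fintype τ]

/-- The second order behaviour of a form `F` of degree `d` along its tangent hyperplanes: `M`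
parametrizes the hyperplane `L = 0` tangent to `F = 0` at a point, `q` and `c` are the quadratic and
cubic Taylor components of `F` at that point, and `D u` moves the point in the tangent direction
`M.mulVec u`. -/
structure TangentData (d : ℕ) (F L q c : MvPolynomial σ E) (M : Matrix σ τ E)
    (D : (τ → E) → Derivation K E E) : Prop where
  isHomogeneous : F.IsHomogeneous d
  isHomogeneous_linear : L.IsHomogeneous 1
  isHomogeneous_quadratic : q.IsHomogeneous 2
  isHomogeneous_cubic : c.IsHomogeneous 3
  linear_ne_zero : L ≠ 0
  surjective : Function.Surjective (linSubst M)
  linSubst_linear : linSubst M L = 0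
  linear_dvd : ∀ P, linSubst M P = 0 → L ∣ P
  irreducible : Irreducible (linSubst M q)
  dvd_cubic : linSubst M q ∣ linSubst M c
  dvd : linSubst M q ∣ linSubst M F
  not_sq_dvd : ¬ linSubst M q ^ 2 ∣ linSubst M F
  coeffDerivation_eq_zero : ∀ u, coeffDerivation (D u) F = 0
  coeffDerivation_linear : ∀ u, coeffDerivation (D u) L = dirDeriv (M.mulVec u) q
  coeffDerivation_quadratic : ∀ u, coeffDerivation (D u) q = dirDeriv (M.mulVec u) c

/-- The quadric `Q` restricts to `q` on the tangent hyperplane, divides `F` modulo `L ^ (k + 1)`,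
and is carried by the derivations `D u` to a multiple of itself modulo `L ^ k`; the errors
`β u` are recorded because the next correction to `Q` is read off from them. -/
structure Osculates (F L q : MvPolynomial σ E) (M : Matrix σ τ E)
    (D : (τ → E) → Derivation K E E) (a : (τ → E) → E) (k : ℕ) (Q : MvPolynomial σ E)
    (β : (τ → E) → MvPolynomial σ E) : Prop where
  isHomogeneous : Q.IsHomogeneous 2
  linSubst_eq : linSubst M Q = linSubst M q
  exists_eq : ∃ R T, F = Q * R + L ^ (k + 1) * T
  coeffDerivation_eq : ∀ u, coeffDerivation (D u) Q = C (a u) * Q + β u * L ^ k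

variable {d k : ℕ} {F L q c Q R T : MvPolynomial σ E} {M : Matrix σ τ E}
  {D : (τ → E) → Derivation K E E} {a : (τ → E) → E} {β : (τ → E) → MvPolynomial σ E}

theorem TangentData.prime (H : TangentData d F L q c M D) : Prime (linSubst M q) :=
  UniqueFactorizationMonoid.irreducible_iff_prime.1 H.irreducible

theorem TangentData.exists_eq_mul_add (H : TangentData d F L q c M D) {P : MvPolynomial σ E}
    (hP : linSubst M q ∣ linSubst M P) : ∃ R T, P = q * R + L * T := by
  obtain ⟨r, hr⟩ := hP
  obtain ⟨R, rfl⟩ := H.surjective r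
  obtain ⟨T, hT⟩ := H.linear_dvd (P - q * R) (by rw [map_sub, map_mul, hr, sub_self])
  exact ⟨R, T, by rw [← hT, add_sub_cancel]⟩

theorem TangentData.exists_cubic_eq (H : TangentData d F L q c M D) :
    ∃ l p : MvPolynomial σ E, l.IsHomogeneous 1 ∧ p.IsHomogeneous 2 ∧ c = q * l + L * p := by
  obtain ⟨l, p, hc⟩ := H.exists_eq_mul_add H.dvd_cubic
  refine ⟨_, _, homogeneousComponent_isHomogeneous 1 l, homogeneousComponent_isHomogeneous 2 p, ?_⟩
  rw [← homogeneousComponent_add_mul H.isHomogeneous_quadratic,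
    ← homogeneousComponent_add_mul H.isHomogeneous_linear, ← map_add, ← hc,
    homogeneousComponent_eq_self H.isHomogeneous_cubic]

theorem Osculates.not_dvd (O : Osculates F L q M D a k Q β) (H : TangentData d F L q c M D)
    (hF : F = Q * R + L ^ (k + 1) * T) : ¬ linSubst M q ∣ linSubst M R := fun h =>
  H.not_sq_dvd <| by
    rw [hF, map_add, map_mul, map_mul, map_pow, H.linSubst_linear, zero_pow k.succ_ne_zero,
      zero_mul, add_zero, O.linSubst_eq, sq]
    exact mul_dvd_mul_left _ h

theorem TangentData.dvd_of_dvd_natCast_mul [CharZero E]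
    (H : TangentData d F L q c M D) {P : MvPolynomial τ E}
    (h : linSubst M q ∣ ((k + 1 : ℕ) : MvPolynomial τ E) * P) :
    linSubst M q ∣ P := by
  refine (H.prime.dvd_or_dvd h).resolve_left fun hk => Nat.cast_ne_zero.2 k.succ_ne_zero
    (eq_zero_of_dvd_of_isHomogeneous (isHomogeneous_linSubst M H.isHomogeneous_quadratic)
      (b := 0) ?_ two_pos hk)
  rw [← map_natCast C]
  exact isHomogeneous_C ..

theorem TangentData.exists_dirDeriv_linSubst_ne_zero [CharZero E]
    (H : TangentData d F L q c M D) : ∃ u, dirDeriv u (linSubst M q) ≠ 0 :=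
  exists_dirDeriv_ne_zero (isHomogeneous_linSubst M H.isHomogeneous_quadratic) two_ne_zero
    H.irreducible.ne_zero

variable [Finite σ]

theorem TangentData.dirDeriv_linear (H : TangentData d F L q c M D) (u : τ → E) :
    dirDeriv (M.mulVec u) L = 0 := by
  rw [dirDeriv_eq_C_eval H.isHomogeneous_linear, ← eval_linSubst, H.linSubst_linear, map_zero, C_0]

theorem TangentData.exists_osculates_zero (H : TangentData d F L q c M D) :
    ∃ (a : (τ → E) → E) (l p : MvPolynomial σ E), l.IsHomogeneous 1 ∧ p.IsHomogeneous 2 ∧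
      Osculates F L q M D a 0 q
        fun u => l * dirDeriv (M.mulVec u) q + L * dirDeriv (M.mulVec u) p := by
  obtain ⟨l, p, hl, hp, hc⟩ := H.exists_cubic_eq
  refine ⟨fun u => eval (M.mulVec u) l, l, p, hl, hp, H.isHomogeneous_quadratic, rfl, ?_,
    fun u => ?_⟩
  · simpa using H.exists_eq_mul_add H.dvd
  · rw [H.coeffDerivation_quadratic, hc, map_add, dirDeriv_mul, dirDeriv_mul, H.dirDeriv_linear,
      dirDeriv_eq_C_eval hl]
    ring

theorem Osculates.dvd_add (O : Osculates F L q M D a k Q β) (H : TangentData d F L q c M D)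
    (hF : F = Q * R + L ^ (k + 1) * T) (u : τ → E) :
    linSubst M q ∣ linSubst M (β u) * linSubst M R +
      ((k + 1 : ℕ) : MvPolynomial τ E) * dirDeriv u (linSubst M q) * linSubst M T := by
  have hQ : linSubst M Q ≠ 0 := O.linSubst_eq ▸ H.irreducible.ne_zero
  have := dvd_map_of_derivation_eq_zero (linSubst M).toRingHom
    (prime_of_isHomogeneous_one H.isHomogeneous_linear H.linear_ne_zero) H.linSubst_linear
    (coeffDerivation (D u)) hQ hF (H.coeffDerivation_eq_zero u) (O.coeffDerivation_eq u)
  simp only [AlgHom.toRingHom_eq_coe, RingHom.coe_coe, O.linSubst_eq, H.coeffDerivation_linear,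
    ← dirDeriv_linSubst, ← mul_assoc] at this
  exact this

variable [CharZero E]

theorem Osculates.dvd_mul_sub (O : Osculates F L q M D a k Q β) (H : TangentData d F L q c M D)
    (u v : τ → E) : linSubst M q ∣ linSubst M (β u) * dirDeriv v (linSubst M q) -
      linSubst M (β v) * dirDeriv u (linSubst M q) := by
  obtain ⟨R, T, hF⟩ := O.exists_eq
  refine H.dvd_of_dvd_natCast_mul (k := k) ?_
  have := dvd_mul_sub_mul_of_dvd_add H.prime (O.not_dvd H hF) (O.dvd_add H hF u) (O.dvd_add H hF v)
  convert this using 1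
  ring

theorem Osculates.succ (O : Osculates F L q M D a k Q β) (H : TangentData d F L q c M D)
    {m : MvPolynomial σ E} {γ : (τ → E) → MvPolynomial σ E}
    (hm : (m * L ^ (k + 1)).IsHomogeneous 2)
    (hβ : ∀ u, β u = ((k + 1 : ℕ) : MvPolynomial σ E) * m * dirDeriv (M.mulVec u) q + L * γ u) :
    Osculates F L q M D a (k + 1) (Q - m * L ^ (k + 1))
      fun u => γ u - coeffDerivation (D u) m + C (a u) * m := by
  refine ⟨O.isHomogeneous.sub hm, ?_, ?_, fun u => ?_⟩
  · rw [map_sub, map_mul, map_pow, H.linSubst_linear, zero_pow k.succ_ne_zero, mul_zero, sub_zero,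
      O.linSubst_eq]
  · obtain ⟨R, T, hF⟩ := O.exists_eq
    obtain ⟨u, hu⟩ := H.exists_dirDeriv_linSubst_ne_zero
    have hdvd : linSubst M q ∣ ((k + 1 : ℕ) : MvPolynomial τ E) *
        (dirDeriv u (linSubst M q) * (linSubst M T + linSubst M m * linSubst M R)) := by
      have := O.dvd_add H hF u
      simp only [hβ, map_add, map_mul, map_natCast, H.linSubst_linear, ← dirDeriv_linSubst] at this
      convert this using 1
      ring
    have hndvd : ¬ linSubst M q ∣ dirDeriv u (linSubst M q) := fun h => hu <|
      eq_zero_of_dvd_of_isHomogeneous (isHomogeneous_linSubst M H.isHomogeneous_quadratic)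
        (isHomogeneous_dirDeriv (isHomogeneous_linSubst M H.isHomogeneous_quadratic) u)
        one_lt_two h
    refine exists_eq_sub_mul_add_pow_mul (linSubst M).toRingHom H.surjective H.linear_dvd hF ?_
    simp only [AlgHom.toRingHom_eq_coe, RingHom.coe_coe, O.linSubst_eq]
    exact (H.prime.dvd_or_dvd (H.dvd_of_dvd_natCast_mul hdvd)).resolve_left hndvd
  · rw [map_sub, O.coeffDerivation_eq, hβ, Derivation.leibniz, Derivation.leibniz_pow,
      H.coeffDerivation_linear]
    simp only [smul_eq_mul, nsmul_eq_mul, add_tsub_cancel_right]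
    ring

theorem TangentData.exists_osculates_one (H : TangentData d F L q c M D) :
    ∃ a Q β, Osculates F L q M D a 1 Q β ∧ ∀ u, (β u).IsHomogeneous 1 := by
  obtain ⟨a, l, p, hl, hp, O⟩ := H.exists_osculates_zero
  refine ⟨_, _, _, O.succ H (m := l) (γ := fun u => dirDeriv (M.mulVec u) p) ?_ ?_, fun u => ?_⟩
  · simpa using hl.mul H.isHomogeneous_linear
  · simp
  · exact ((isHomogeneous_dirDeriv hp _).sub (isHomogeneous_coeffDerivation _ hl)).add
      (hl.C_mul _)

variable [IsAlgClosed E]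

theorem Osculates.exists_two {β : (τ → E) → MvPolynomial σ E} (O : Osculates F L q M D a 1 Q β)
    (H : TangentData d F L q c M D) (hβ : ∀ u, (β u).IsHomogeneous 1) :
    ∃ (Q : MvPolynomial σ E) (γ : (τ → E) → E), Osculates F L q M D a 2 Q fun u => C (γ u) := by
  obtain ⟨e, he⟩ := exists_eq_C_mul_dirDeriv (isHomogeneous_linSubst M H.isHomogeneous_quadratic)
    H.irreducible (fun u => isHomogeneous_linSubst M (hβ u)) (O.dvd_mul_sub H)
  have herror (u : τ → E) : ∃ g : E, β u - C e * dirDeriv (M.mulVec u) q = C g * L := by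
    refine exists_eq_C_mul_of_dvd H.isHomogeneous_linear
      ((hβ u).sub ((isHomogeneous_dirDeriv H.isHomogeneous_quadratic _).C_mul e))
      (H.linear_dvd _ ?_)
    rw [map_sub, map_mul, he, linSubst_C, dirDeriv_linSubst, sub_self]
  choose g hg using herror
  have O' := O.succ H (m := C (e / 2)) (γ := fun u => C (g u))
    ((H.isHomogeneous_linear.pow 2).C_mul _) fun u => by
      have htwo : ((1 + 1 : ℕ) : MvPolynomial σ E) * C (e / 2) = C e := by
        rw [← map_natCast C, ← C_mul]
        congr 1
        push_cast
        ring
      rw [htwo]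
      linear_combination hg u
  exact ⟨_, _, by simpa only [coeffDerivation_C, ← C_sub, ← C_mul, ← C_add] using O'⟩

theorem Osculates.eq_zero {γ : (τ → E) → E} (O : Osculates F L q M D a k Q fun u => C (γ u))
    (H : TangentData d F L q c M D) (u : τ → E) : γ u = 0 :=
  forall_eq_zero_of_dvd (isHomogeneous_linSubst M H.isHomogeneous_quadratic) H.irreducible
    (fun u v => by simpa only [linSubst_C] using O.dvd_mul_sub H u v) u

omit [IsAlgClosed E] in
theorem Osculates.add (O : Osculates F L q M D a k Q fun _ => 0)
    (H : TangentData d F L q c M D) (j : ℕ) :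
    Osculates F L q M D a (k + j) Q fun _ => 0 := by
  induction j with
  | zero => exact O
  | succ j ih =>
    have := ih.succ H (m := 0) (γ := fun _ => 0)
      (by simpa only [zero_mul] using isHomogeneous_zero ..) (by simp)
    simpa only [zero_mul, mul_zero, sub_zero, map_zero, add_zero, add_assoc] using this

theorem TangentData.factorsBelow (H : TangentData d F L q c M D) (hd : 3 ≤ d) :
    FactorsBelow F d := by
  obtain ⟨a, Q, β, O, hβ⟩ := H.exists_osculates_one
  obtain ⟨Q, γ, O⟩ := O.exists_two H hβ
  simp only [O.eq_zero H, C_0] at O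
  obtain ⟨R, T, hF⟩ := (O.add H d).exists_eq
  obtain ⟨e, rfl⟩ : ∃ e, d = 2 + e := ⟨d - 2, by omega⟩
  have hcomponent := congrArg (homogeneousComponent (2 + e)) hF
  rw [homogeneousComponent_eq_self H.isHomogeneous, map_add,
    homogeneousComponent_add_mul O.isHomogeneous,
    homogeneousComponent_mul_of_lt (H.isHomogeneous_linear.pow _) (by omega), add_zero]
    at hcomponent
  exact ⟨_, _, hcomponent, O.isHomogeneous.totalDegree_le.trans_lt (by omega),
    (homogeneousComponent_isHomogeneous e R).totalDegree_le.trans_lt (by omega)⟩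

end TangentData

section HyperplaneParametrizations

variable {E σ τ : Type*} [Field E] [Fintype σ] [Fintype τ] {L : MvPolynomial σ E}
  {M : Matrix σ τ E} {N : Matrix τ σ E}

theorem exists_hyperplane_parametrization [Infinite E] {n : ℕ} {L : MvPolynomial (Fin (n + 1)) E}
    (hL : L.IsHomogeneous 1) (hL0 : L ≠ 0) :
    ∃ (M : Matrix (Fin (n + 1)) (Fin n) E) (N : Matrix (Fin n) (Fin (n + 1)) E),
      N * M = 1 ∧ ∀ x, eval x L = 0 ↔ M.mulVec (N.mulVec x) = x := by
  obtain ⟨φ, hφ, -⟩ := exists_dual_eval_eq hL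
  obtain ⟨a, rfl⟩ := (dotProductEquiv E (Fin (n + 1))).surjective φ
  have ha (x) : eval x L = a ⬝ᵥ x := hφ x
  obtain ⟨u, hu⟩ : ∃ u, a u ≠ 0 := by
    by_contra! h
    exact hL0 (MvPolynomial.funext fun x => by simp [ha, dotProduct, h])
  refine ⟨hyperplaneParam a u, hyperplaneCoords a u, hyperplaneCoords_mul_hyperplaneParam hu,
    fun x => ⟨fun hx => ?_, fun hx => ?_⟩⟩
  · exact hyperplaneParam_mulVec_hyperplaneCoords_mulVec hu (by rw [← ha, hx])
  · rw [ha, ← hx, dotProduct_hyperplaneParam_mulVec]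

theorem mulVec_mulVec_of_mul_eq_one [DecidableEq τ] (hNM : N * M = 1) (y : τ → E) :
    N.mulVec (M.mulVec y) = y := by
  rw [Matrix.mulVec_mulVec, hNM, Matrix.one_mulVec]

theorem linSubst_surjective_of_mul_eq_one [DecidableEq τ] (hNM : N * M = 1) :
    Function.Surjective (linSubst M) := fun P =>
  ⟨linSubst N P, by rw [linSubst_linSubst, hNM, linSubst_one]⟩

theorem linSubst_eq_zero_of_forall_eval_eq_zero_iff [Infinite E] [DecidableEq τ] (hNM : N * M = 1)
    (hL : ∀ x, eval x L = 0 ↔ M.mulVec (N.mulVec x) = x) : linSubst M L = 0 :=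
  MvPolynomial.funext fun y => by
    rw [eval_linSubst, map_zero, hL, mulVec_mulVec_of_mul_eq_one hNM]

theorem dvd_of_linSubst_eq_zero [IsAlgClosed E] (hprime : Prime L)
    (hL : ∀ x, eval x L = 0 ↔ M.mulVec (N.mulVec x) = x) {P : MvPolynomial σ E}
    (hP : linSubst M P = 0) : L ∣ P :=
  dvd_of_forall_eval_eq_zero hprime fun x hx => by
    rw [← (hL x).1 hx, ← eval_linSubst, hP, map_zero]

end HyperplaneParametrizations

section GenericCounterexample

variable {K E σ τ : Type*} [CommRing K] [Field E] [Algebra K E] [Fintype σ] [Fintype τ]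

/-- The situation at the generic point `ξ` of a hypersurface `F = 0` that is not covered by its
linear divisors while all its hyperplane sections are: every hyperplane through `ξ` contains a
linear divisor of its section passing through `ξ`, none of the linear divisors of `F = 0` does, and
every tangent vector at `ξ` is realized by a derivation of `E` annihilating `F`. -/
structure GenericCounterexample (K : Type*) [CommRing K] [Algebra K E] (d : ℕ)
    (F : MvPolynomial σ E) (ξ : σ → E) : Prop where
  isHomogeneous : F.IsHomogeneous d
  irreducible : Irreducible F
  eval_eq_zero : eval ξ F = 0
  linear_ne_zero : taylorComponent ξ F 1 ≠ 0
  exists_submodule : ∀ φ : Module.Dual E (σ → E), φ ≠ 0 → φ ξ = 0 →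
    ∃ W : Submodule E (σ → E), Module.finrank E W + 3 = Fintype.card σ ∧ ξ ∈ W ∧
      W ≤ LinearMap.ker φ ∧ ∀ w ∈ W, eval w F = 0
  exists_eval_ne_zero : ∀ W : Submodule E (σ → E), Module.finrank E W + 2 = Fintype.card σ →
    ξ ∈ W → ∃ w ∈ W, eval w F ≠ 0
  exists_derivation : ∀ w, eval ξ (dirDeriv w F) = 0 →
    ∃ D : Derivation K E E, coeffDerivation D F = 0 ∧ ∀ i, D (ξ i) = w i

variable {d : ℕ} {F : MvPolynomial σ E} {ξ : σ → E} {M : Matrix σ τ E} {N : Matrix τ σ E}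

theorem GenericCounterexample.exists_coeffDerivation (G : GenericCounterexample K d F ξ) {w : σ → E}
    (hw : eval w (taylorComponent ξ F 1) = 0) :
    ∃ D : Derivation K E E, coeffDerivation D F = 0 ∧ ∀ j,
      coeffDerivation D (taylorComponent ξ F j) = dirDeriv w (taylorComponent ξ F (j + 1)) := by
  obtain ⟨D, hDF, hDξ⟩ := G.exists_derivation w (by rwa [← eval_taylorComponent_one])
  exact ⟨D, hDF, coeffDerivation_taylorComponent D hDξ hDF⟩

theorem GenericCounterexample.eval_linear (G : GenericCounterexample K d F ξ) :
    eval ξ (taylorComponent ξ F 1) = 0 := by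
  rw [eval_taylorComponent_one, eval_dirDeriv_self G.isHomogeneous, G.eval_eq_zero, mul_zero]

variable [DecidableEq τ]

theorem GenericCounterexample.hasSubspacesInHyperplanes [Infinite E]
    (G : GenericCounterexample K d F ξ) (hcard : Fintype.card σ = Fintype.card τ + 1)
    (hNM : N * M = 1)
    (hL : ∀ x, eval x (taylorComponent ξ F 1) = 0 ↔ M.mulVec (N.mulVec x) = x) :
    HasSubspacesInHyperplanes (N.mulVec ξ)
      (insert (linSubst M F) (Set.range fun j => linSubst M (taylorComponent ξ F j))) := by
  intro φ hφ hφη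
  have hNM' := mulVec_mulVec_of_mul_eq_one hNM
  have hinj : Function.Injective M.mulVecLin := Function.LeftInverse.injective hNM'
  obtain ⟨W, hW, hξW, hWφ, hWF⟩ := G.exists_submodule (φ ∘ₗ N.mulVecLin)
    (fun h => hφ (LinearMap.ext fun y => by simpa [hNM'] using LinearMap.congr_fun h (M.mulVec y)))
    hφη
  have hWtaylor (j) (w) (hw : w ∈ W) : eval w (taylorComponent ξ F j) = 0 :=
    eval_taylorComponent_eq_zero (fun s => hWF _ (W.add_mem hξW (W.smul_mem s hw))) j
  refine ⟨W.comap M.mulVecLin, ?_, ?_, fun y hy => ?_, ?_⟩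
  · have hmap : (W.comap M.mulVecLin).map M.mulVecLin = W := Submodule.map_comap_eq_of_le
      fun w hw => ⟨N.mulVec w, (hL w).1 (hWtaylor 1 w hw)⟩
    rw [(Submodule.equivMapOfInjective _ hinj _).finrank_eq, hmap]
    omega
  · rwa [Submodule.mem_comap, Matrix.mulVecLin_apply, (hL ξ).1 G.eval_linear]
  · simpa [hNM'] using hWφ hy
  · rintro _ (rfl | ⟨j, rfl⟩) y hy
    · rw [eval_linSubst]
      exact hWF _ hy
    · rw [eval_linSubst]
      exact hWtaylor j _ hy

theorem GenericCounterexample.linSubst_quadratic_ne_zero [IsAlgClosed E] [CharZero E]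
    (G : GenericCounterexample K d F ξ) (hd : 2 ≤ d) (hNM : N * M = 1)
    (hL : ∀ x, eval x (taylorComponent ξ F 1) = 0 ↔ M.mulVec (N.mulVec x) = x) :
    linSubst M (taylorComponent ξ F 2) ≠ 0 := by
  intro hq
  have hlin := isHomogeneous_taylorComponent ξ F 1
  have hprime := prime_of_isHomogeneous_one hlin G.linear_ne_zero
  have hML := linSubst_eq_zero_of_forall_eval_eq_zero_iff hNM hL
  have hvanish (j : ℕ) : linSubst M (taylorComponent ξ F (j + 1)) = 0 := by
    induction j with
    | zero => exact hML
    | succ j ih =>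
      by_contra hne
      obtain ⟨y, hy⟩ := exists_dirDeriv_ne_zero
        (isHomogeneous_linSubst M (isHomogeneous_taylorComponent ξ F (j + 2))) (by omega) hne
      obtain ⟨D, -, hD⟩ := G.exists_coeffDerivation (w := M.mulVec y)
        (by rw [← eval_linSubst, hML, map_zero])
      obtain ⟨P, hP⟩ := dvd_of_linSubst_eq_zero hprime hL ih
      refine hy ?_
      rw [dirDeriv_linSubst, ← hD, hP, Derivation.leibniz, hD, smul_eq_mul, smul_eq_mul, map_add,
        map_mul, map_mul, hML, ← dirDeriv_linSubst, hq, map_zero, zero_mul, mul_zero, add_zero]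
  refine not_dvd_of_isHomogeneous_of_lt hlin G.isHomogeneous G.irreducible one_pos hd
    (dvd_of_forall_eval_eq_zero hprime fun x hx => ?_)
  rw [← add_sub_cancel ξ x, ← eval_translateHom, ← sum_homogeneousComponent (translateHom ξ F),
    map_sum]
  refine Finset.sum_eq_zero fun j _ => ?_
  change eval (x - ξ) (taylorComponent ξ F j) = 0
  cases j with
  | zero => rw [taylorComponent_zero, G.eval_eq_zero, C_0, map_zero]
  | succ j =>
    obtain ⟨φ, hφ, -⟩ := exists_dual_eval_eq hlin
    have hxξ : eval (x - ξ) (taylorComponent ξ F 1) = 0 := by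
      rw [hφ, map_sub, ← hφ, ← hφ, hx, G.eval_linear, sub_zero]
    rw [← (hL (x - ξ)).1 hxξ, ← eval_linSubst, hvanish, map_zero]

theorem GenericCounterexample.not_dvd_linSubst [Infinite E]
    (G : GenericCounterexample K d F ξ) (hcard : Fintype.card σ = Fintype.card τ + 1)
    (hNM : N * M = 1) (hL : ∀ x, eval x (taylorComponent ξ F 1) = 0 ↔ M.mulVec (N.mulVec x) = x)
    {l : MvPolynomial τ E} (hl : l.IsHomogeneous 1) (hl0 : l ≠ 0)
    (hlη : eval (N.mulVec ξ) l = 0) : ¬ l ∣ linSubst M F := by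
  rintro ⟨P, hP⟩
  obtain ⟨φ, hφ, -⟩ := exists_dual_eval_eq hl
  have hNM' := mulVec_mulVec_of_mul_eq_one hNM
  have hinj : Function.Injective M.mulVecLin := Function.LeftInverse.injective hNM'
  have hφ0 : φ ≠ 0 := fun h => hl0 <| MvPolynomial.funext fun x => by
    rw [hφ, h, LinearMap.zero_apply, map_zero]
  have hrank := Module.Dual.finrank_ker_add_one_of_ne_zero hφ0
  rw [Module.finrank_pi, (Submodule.equivMapOfInjective _ hinj _).finrank_eq] at hrank
  obtain ⟨w, ⟨y, hy, rfl⟩, hw⟩ := G.exists_eval_ne_zero ((LinearMap.ker φ).map M.mulVecLin)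
    (by omega) ⟨N.mulVec ξ, by rwa [SetLike.mem_coe, LinearMap.mem_ker, ← hφ],
      (hL ξ).1 G.eval_linear⟩
  refine hw ?_
  rw [Matrix.mulVecLin_apply, ← eval_linSubst, hP, map_mul, hφ, hy, zero_mul]

theorem GenericCounterexample.eval_dirDeriv_quadratic [Infinite E]
    (G : GenericCounterexample K d F ξ) (hNM : N * M = 1)
    (hL : ∀ x, eval x (taylorComponent ξ F 1) = 0 ↔ M.mulVec (N.mulVec x) = x) (y : τ → E) :
    eval (N.mulVec ξ) (dirDeriv y (linSubst M (taylorComponent ξ F 2))) = 0 := by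
  rw [eval_dirDeriv_comm (isHomogeneous_linSubst M (isHomogeneous_taylorComponent ξ F 2)),
    dirDeriv_linSubst, (hL ξ).1 G.eval_linear, eval_linSubst,
    eval_dirDeriv_self_taylorComponent_two G.isHomogeneous, ← eval_linSubst,
    linSubst_eq_zero_of_forall_eval_eq_zero_iff hNM hL, map_zero, mul_zero]

theorem GenericCounterexample.not_sq_dvd [Infinite E] [CharZero E]
    (G : GenericCounterexample K d F ξ) (hNM : N * M = 1)
    (hL : ∀ x, eval x (taylorComponent ξ F 1) = 0 ↔ M.mulVec (N.mulVec x) = x)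
    (hq : linSubst M (taylorComponent ξ F 2) ≠ 0) :
    ¬ linSubst M (taylorComponent ξ F 2) ^ 2 ∣ linSubst M F := by
  rintro ⟨P, hP⟩
  have hhom := isHomogeneous_linSubst M (isHomogeneous_taylorComponent ξ F 2)
  have hη := G.eval_dirDeriv_quadratic hNM hL
  have hηq : eval (N.mulVec ξ) (linSubst M (taylorComponent ξ F 2)) = 0 := by
    simpa [hη] using eval_dirDeriv_self hhom (N.mulVec ξ)
  obtain ⟨y, hy⟩ := _root_.exists_eval_ne_zero hq
  refine eval_dirDeriv_self_ne_zero hhom hy ?_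
  rw [dirDeriv_linSubst, eval_linSubst, eval_dirDeriv_taylorComponent_two,
    ← (hL ξ).1 G.eval_linear, ← eval_linSubst, ← dirDeriv_linSubst, ← dirDeriv_linSubst, hP]
  simp [sq, hη, hηq]

theorem not_genericCounterexample [IsAlgClosed E] [CharZero E] {n : ℕ} (hn : 4 ≤ n) (hd : 3 ≤ d)
    {F : MvPolynomial (Fin (n + 1)) E} {ξ : Fin (n + 1) → E} :
    ¬ GenericCounterexample K d F ξ := by
  intro G
  have hlin := isHomogeneous_taylorComponent ξ F 1
  obtain ⟨M, N, hNM, hL⟩ := exists_hyperplane_parametrization hlin G.linear_ne_zero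
  have hML := linSubst_eq_zero_of_forall_eval_eq_zero_iff hNM hL
  have hq := isHomogeneous_linSubst M (isHomogeneous_taylorComponent ξ F 2)
  have hq0 := G.linSubst_quadratic_ne_zero (by omega) hNM hL
  have hη := G.eval_dirDeriv_quadratic hNM hL
  have hS := G.hasSubspacesInHyperplanes (by simp) hNM hL
  have hqS (j) : linSubst M (taylorComponent ξ F j) ∈ insert (linSubst M F)
      (Set.range fun j => linSubst M (taylorComponent ξ F j)) := .inr ⟨j, rfl⟩
  have hirr := hS.irreducible (by simpa) (hqS 2) (.inl rfl)
    (fun l hl hl0 hlη => G.not_dvd_linSubst (by simp) hNM hL hl hl0 hlη) hq hq0 hη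
  choose D hDF hD using fun y => G.exists_coeffDerivation (w := M.mulVec y)
    (by rw [← eval_linSubst, hML, map_zero])
  have H : TangentData d F (taylorComponent ξ F 1) (taylorComponent ξ F 2)
      (taylorComponent ξ F 3) M D :=
    { isHomogeneous := G.isHomogeneous
      isHomogeneous_linear := hlin
      isHomogeneous_quadratic := isHomogeneous_taylorComponent ξ F 2
      isHomogeneous_cubic := isHomogeneous_taylorComponent ξ F 3
      linear_ne_zero := G.linear_ne_zero
      surjective := linSubst_surjective_of_mul_eq_one hNM
      linSubst_linear := hML
      linear_dvd := fun _ =>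
        dvd_of_linSubst_eq_zero (prime_of_isHomogeneous_one hlin G.linear_ne_zero) hL
      irreducible := hirr
      dvd_cubic := hS.dvd (hqS 2) (hqS 3) hq hirr hη
      dvd := hS.dvd (hqS 2) (.inl rfl) hq hirr hη
      not_sq_dvd := G.not_sq_dvd hNM hL hq0
      coeffDerivation_eq_zero := hDF
      coeffDerivation_linear := fun y => hD y 1
      coeffDerivation_quadratic := fun y => hD y 2 }
  exact (irreducible_iff_not_factorsBelow G.isHomogeneous G.irreducible.ne_zero (by omega)).1
    G.irreducible (H.factorsBelow hd)

end GenericCounterexample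

section GenericHyperplaneSections

theorem exists_submodule_of_not_noncovered {E : Type*} [Field E] [Infinite E] {n r : ℕ}
    {F : MvPolynomial (Fin (n + 1)) E} {φ : Module.Dual E (Fin (n + 1) → E)} (hφ : φ ≠ 0)
    (hcov : ∀ a u, a u ≠ 0 → ¬ Noncovered (hyperplaneSection F a u) r) {ξ : Fin (n + 1) → E}
    (hξ : eval ξ F = 0) (hφξ : φ ξ = 0) :
    ∃ W : Submodule E (Fin (n + 1) → E), Module.finrank E W = r ∧ ξ ∈ W ∧
      W ≤ LinearMap.ker φ ∧ ∀ w ∈ W, eval w F = 0 := by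
  obtain ⟨a, rfl⟩ := (dotProductEquiv E (Fin (n + 1))).surjective φ
  obtain ⟨u, hu⟩ : ∃ u, a u ≠ 0 := Function.ne_iff.1 fun ha => hφ (ha ▸ map_zero _)
  have hparam := hyperplaneParam_mulVec_hyperplaneCoords_mulVec hu hφξ
  have hthrough : HasLinearSubspaceThrough (hyperplaneSection F a u) r
      ((hyperplaneCoords a u).mulVec ξ) := by
    by_contra hnot
    exact hcov a u hu ⟨_, by rw [hyperplaneSection, eval_linSubst, hparam, hξ], hnot⟩
  obtain ⟨W, hW, hξW, hWF⟩ := hasLinearSubspaceThrough_iff.1 hthrough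
  have hinj : Function.Injective (hyperplaneParam a u).mulVecLin := Function.LeftInverse.injective
    (mulVec_mulVec_of_mul_eq_one (hyperplaneCoords_mul_hyperplaneParam hu))
  refine ⟨W.map (hyperplaneParam a u).mulVecLin, ?_, ⟨_, hξW, hparam⟩, ?_, ?_⟩
  · rw [← hW, (Submodule.equivMapOfInjective _ hinj W).finrank_eq]
  · rintro _ ⟨y, -, rfl⟩
    exact dotProduct_hyperplaneParam_mulVec a u y
  · rintro _ ⟨y, hy, rfl⟩
    rw [← hWF y hy, hyperplaneSection, eval_linSubst, Matrix.mulVecLin_apply]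

variable {K E σ : Type*} [Field K] [Field E] [Algebra K E]

theorem eval_dirDeriv_map_algebraMap [Fintype σ] (F : MvPolynomial σ K) (ξ w : σ → E) :
    eval ξ (dirDeriv w (map (algebraMap K E) F)) = ∑ i, aeval ξ (pderiv i F) * w i := by
  rw [dirDeriv_eq_sum, map_sum]
  refine Finset.sum_congr rfl fun i _ => ?_
  rw [map_mul, eval_C, pderiv_map, eval_map, ← aeval_def, mul_comm]

theorem IsGenericZero.taylorComponent_one_ne_zero [CharZero K] [Finite σ] {F : MvPolynomial σ K}
    {ξ : σ → E} {d : ℕ} (hξ : IsGenericZero F ξ) (hF : F.IsHomogeneous d)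
    (hd : d ≠ 0) (hF0 : F ≠ 0) : taylorComponent ξ (map (algebraMap K E) F) 1 ≠ 0 := by
  classical
  cases nonempty_fintype σ
  intro hlin
  obtain ⟨i, hi⟩ := exists_pderiv_ne_zero hF hd hF0
  refine not_dvd_pderiv hF hd hi ((hξ _).1 ?_)
  have heval := eval_taylorComponent_one ξ (Pi.single i 1) (map (algebraMap K E) F)
  rw [hlin, map_zero, eval_dirDeriv_map_algebraMap] at heval
  simpa [Pi.single_apply] using heval.symm

end GenericHyperplaneSections

section NoncoveredSection

variable {K E : Type v} [Field K] [IsAlgClosed K] [Field E] [IsAlgClosed E] [Algebra K E]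

theorem irreducible_map_algebraMap_of_isHomogeneous {σ : Type*} [Finite σ] {d : ℕ} (hd : 0 < d)
    {F : MvPolynomial σ K} (hF : F.IsHomogeneous d) (hirr : Irreducible F) :
    Irreducible (map (algebraMap K E) F) := by
  have hinj := map_injective (σ := σ) _ (algebraMap K E).injective
  have hFE0 : map (algebraMap K E) F ≠ 0 := (map_ne_zero_iff _ hinj).2 hirr.ne_zero
  obtain ⟨G, hG⟩ := exists_finset_factorsBelow_iff.{_, v} σ hd
  rw [irreducible_iff_not_factorsBelow hF hirr.ne_zero hd, hG K F hF] at hirr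
  rw [irreducible_iff_not_factorsBelow (hF.map _) hFE0 hd, hG E _ (hF.map _)]
  refine fun hfac => hirr fun g hg => (algebraMap K E).injective ?_
  rw [map_aeval_int, map_zero, ← hfac g hg]
  simp only [coeff_map]

variable {n d : ℕ} {F : MvPolynomial (Fin (n + 1)) K}

theorem IsGenericZero.genericCounterexample [CharZero K] (hn : 2 ≤ n) (hd : 0 < d)
    {ξ : Fin (n + 1) → E} (hξ : IsGenericZero F ξ)
    (hder : ∀ w : Fin (n + 1) → E, ∑ i, aeval ξ (pderiv i F) * w i = 0 →
      ∃ D : Derivation K E E, ∀ i, D (ξ i) = w i)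
    (hF : F.IsHomogeneous d) (hirr : Irreducible F) (hX : Noncovered F (n - 1))
    (hcov : ∀ a u, a u ≠ 0 → ¬ Noncovered (hyperplaneSection F a u) (n - 2)) :
    GenericCounterexample K d (map (algebraMap K E) F) ξ := by
  have hξF : eval ξ (map (algebraMap K E) F) = 0 := by
    rw [eval_map, ← aeval_def, hξ]
  refine
    { isHomogeneous := hF.map _
      irreducible := irreducible_map_algebraMap_of_isHomogeneous hd hF hirr
      eval_eq_zero := hξF
      linear_ne_zero := hξ.taylorComponent_one_ne_zero hF hd.ne' hirr.ne_zero
      exists_submodule := fun φ hφ hφξ => ?_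
      exists_eval_ne_zero := fun W hW hξW => ?_
      exists_derivation := fun w hw => ?_ }
  · obtain ⟨W, hW, hprop⟩ := exists_submodule_of_not_noncovered hφ
      (fun a u hu => not_noncovered_hyperplaneSection_map hF (fun b => hcov b u) hu) hξF hφξ
    exact ⟨W, by rw [hW, Fintype.card_fin]; omega, hprop⟩
  · by_contra! hWF
    refine hξ.not_hasLinearSubspaceThrough hF hX (hasLinearSubspaceThrough_iff.2 ⟨W, ?_, hξW, hWF⟩)
    rw [Fintype.card_fin] at hW
    omega
  · rw [eval_dirDeriv_map_algebraMap] at hw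
    obtain ⟨D, hD⟩ := hder w hw
    exact ⟨D, coeffDerivation_map_algebraMap D F, hD⟩

theorem exists_noncovered_hyperplaneSection [CharZero K] (hn : 4 ≤ n) (hd : 3 ≤ d)
    (hF : F.IsHomogeneous d) (hirr : Irreducible F) (hX : Noncovered F (n - 1)) :
    ∃ a u, a u ≠ 0 ∧ Noncovered (hyperplaneSection F a u) (n - 2) := by
  by_contra! hcov
  obtain ⟨E, _, _, _, ξ, hξ, hder⟩ := exists_isGenericZero hirr.prime
  have : CharZero E := charZero_of_injective_algebraMap (algebraMap K E).injective
  exact not_genericCounterexample hn hd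
    (hξ.genericCounterexample (by omega) (by omega) hder hF hirr hX hcov)

end NoncoveredSection

section SectionForms

variable {n d : ℕ}

theorem hyperplaneSection_ne_zero {K : Type*} [Field K] [IsAlgClosed K]
    {F : MvPolynomial (Fin (n + 1)) K} (hF : F.IsHomogeneous d) (hirr : Irreducible F)
    (hd : 1 < d) {a : Fin (n + 1) → K} {u : Fin (n + 1)} (hu : a u ≠ 0) :
    hyperplaneSection F a u ≠ 0 := by
  intro hsec
  let L : MvPolynomial (Fin (n + 1)) K := ∑ i, C (a i) * X i
  have hLhom : L.IsHomogeneous 1 := IsHomogeneous.sum _ _ _ fun i _ => isHomogeneous_C_mul_X _ _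
  have hL (x) : eval x L = a ⬝ᵥ x := by simp [L, dotProduct]
  have hL0 : L ≠ 0 := fun h => hu <| by simpa [h] using (hL (Pi.single u 1)).symm
  refine not_dvd_of_isHomogeneous_of_lt hLhom hF hirr one_pos hd
    (dvd_of_forall_eval_eq_zero (prime_of_isHomogeneous_one hLhom hL0) fun x hx => ?_)
  rw [← hyperplaneParam_mulVec_hyperplaneCoords_mulVec hu ((hL x).symm.trans hx), ← eval_linSubst,
    ← hyperplaneSection, hsec, map_zero]

theorem sectionCondition_ne_zero {R S : Type*} [CommRing R] [CommRing S] {φ : R →+* S}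
    {g : MvPolynomial (exponentsEq (Fin n) d) ℤ} {F : MvPolynomial (Fin (n + 1)) R}
    {a : Fin (n + 1) → S} {u : Fin (n + 1)}
    (h : aeval (fun m : exponentsEq (Fin n) d =>
      coeff m.1 (hyperplaneSection (map φ F) a u)) g ≠ 0) : sectionCondition g F u ≠ 0 := by
  intro h0
  rw [← eval_sectionCondition, ← map_sectionCondition, h0, map_zero, map_zero] at h
  exact h rfl

theorem exists_form_of_sectionCondition_ne_zero
    (G : Finset (MvPolynomial (exponentsEq (Fin n) d) ℤ)) :
    ∃ D : ℕ, ∀ (k : Type v) [Field k] (F : MvPolynomial (Fin (n + 1)) k), F.IsHomogeneous d →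
      (∃ g ∈ G, ∃ u, sectionCondition g F u ≠ 0) →
      ∃ Φ : MvPolynomial (Fin (n + 1)) k, Φ ≠ 0 ∧ Φ.totalDegree ≤ D ∧
        ∀ a, eval a Φ ≠ 0 → ∃ u, a u ≠ 0 ∧ ∀ (K : Type v) [Field K] (φ : k →+* K), ∃ g ∈ G,
          aeval (fun m : exponentsEq (Fin n) d =>
            coeff m.1 (hyperplaneSection (map φ F) (φ ∘ a) u)) g ≠ 0 := by
  choose D hD using exists_totalDegree_sectionCondition_le.{v} (n := n) (d := d) d
  refine ⟨1 + (G ×ˢ Finset.univ).sup fun p => D p.1 p.2, fun k _ F hF ⟨g, hg, u, hgu⟩ =>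
    ⟨X u * sectionCondition g F u, mul_ne_zero (X_ne_zero u) hgu, ?_, fun a ha => ?_⟩⟩
  · have hmem : (g, u) ∈ G ×ˢ Finset.univ := Finset.mk_mem_product hg (Finset.mem_univ u)
    refine (totalDegree_mul _ _).trans (add_le_add (totalDegree_X u).le ((hD g u k F hF).trans ?_))
    exact Finset.le_sup (f := fun p => D p.1 p.2) hmem
  · rw [map_mul, eval_X] at ha
    refine ⟨u, left_ne_zero_of_mul ha, fun K _ φ => ⟨g, hg, ?_⟩⟩
    rw [← map_hyperplaneSection]
    simp only [coeff_map]
    rw [← map_aeval_int, ← eval_sectionCondition]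
    exact (map_ne_zero φ).2 (right_ne_zero_of_mul ha)

theorem exists_form_irreducible_hyperplaneSection (hn : 3 ≤ n) (hd : 2 ≤ d) :
    ∃ D : ℕ, ∀ (k K : Type v) [Field k] [Field K] [IsAlgClosed K] [CharZero K] (φ : k →+* K)
      (F : MvPolynomial (Fin (n + 1)) k), F.IsHomogeneous d → Irreducible (map φ F) →
      ∃ Φ : MvPolynomial (Fin (n + 1)) k, Φ ≠ 0 ∧ Φ.totalDegree ≤ D ∧
        ∀ a, eval a Φ ≠ 0 → ∃ u, a u ≠ 0 ∧
          Irreducible (hyperplaneSection (map φ F) (φ ∘ a) u) := by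
  obtain ⟨G, hG⟩ := exists_finset_factorsBelow_iff.{0, v} (Fin n) (d := d) (by omega)
  obtain ⟨D, hD⟩ := exists_form_of_sectionCondition_ne_zero.{v} G
  refine ⟨D, fun k K _ _ _ _ φ F hF hirr => ?_⟩
  obtain ⟨b, w, -, hb⟩ := exists_irreducible_hyperplaneSection hn hd (hF.map _) hirr
  have hbhom := isHomogeneous_hyperplaneSection
    ((hF.map φ).map (algebraMap K (RatFunClosure K))) b w
  rw [irreducible_iff_not_factorsBelow hbhom hb.ne_zero (by omega), hG _ _ hbhom] at hb
  push Not at hb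
  obtain ⟨g, hg, hgb⟩ := hb
  rw [map_map] at hgb
  obtain ⟨Φ, hΦ0, hΦD, hΦ⟩ := hD k F hF ⟨g, hg, w, sectionCondition_ne_zero hgb⟩
  refine ⟨Φ, hΦ0, hΦD, fun a ha => ?_⟩
  obtain ⟨u, hu, hcond⟩ := hΦ a ha
  have hhom := isHomogeneous_hyperplaneSection (hF.map φ) (φ ∘ a) u
  have hne : hyperplaneSection (map φ F) (φ ∘ a) u ≠ 0 :=
    hyperplaneSection_ne_zero (hF.map φ) hirr hd (by simpa using hu)
  obtain ⟨g, hg, hga⟩ := hcond K φ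
  refine ⟨u, hu, (irreducible_iff_not_factorsBelow hhom hne (by omega)).2 fun hfac => ?_⟩
  exact hga ((hG _ _ hhom).1 hfac g hg)

theorem exists_form_noncovered_hyperplaneSection (hn : 4 ≤ n) (hd : 3 ≤ d) :
    ∃ D : ℕ, ∀ (k K : Type v) [Field k] [Field K] [IsAlgClosed K] [CharZero K] (φ : k →+* K)
      (F : MvPolynomial (Fin (n + 1)) k), F.IsHomogeneous d → Irreducible (map φ F) →
      Noncovered (map φ F) (n - 1) →
      ∃ Φ : MvPolynomial (Fin (n + 1)) k, Φ ≠ 0 ∧ Φ.totalDegree ≤ D ∧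
        ∀ a, eval a Φ ≠ 0 → ∃ u, a u ≠ 0 ∧
          (Irreducible (hyperplaneSection (map φ F) (φ ∘ a) u) →
            Noncovered (hyperplaneSection (map φ F) (φ ∘ a) u) (n - 2)) := by
  obtain ⟨G, hG⟩ := exists_finset_noncovered.{0, v} (Fin n) d (n - 2)
  obtain ⟨D, hD⟩ := exists_form_of_sectionCondition_ne_zero.{v} G
  refine ⟨D, fun k K _ _ _ _ φ F hF hirr hX => ?_⟩
  obtain ⟨b, w, hbw, hb⟩ := exists_noncovered_hyperplaneSection hn hd (hF.map _) hirr hX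
  obtain ⟨g, hg, hgb⟩ := (hG _ _ (isHomogeneous_hyperplaneSection (hF.map _) b w)
    (hyperplaneSection_ne_zero (hF.map _) hirr (by omega) hbw)).1 hb
  obtain ⟨Φ, hΦ0, hΦD, hΦ⟩ := hD k F hF ⟨g, hg, w, sectionCondition_ne_zero hgb⟩
  refine ⟨Φ, hΦ0, hΦD, fun a ha => ?_⟩
  obtain ⟨u, hu, hcond⟩ := hΦ a ha
  exact ⟨u, hu, fun hirra => (hG _ _ (isHomogeneous_hyperplaneSection (hF.map _) _ u)
    hirra.ne_zero).2 hirra (hcond _ _)⟩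

end SectionForms

section RestrictPoly

theorem exists_isHomogeneous_eval_ne_zero {k σ : Type*} [Field k] [Infinite k]
    {Φ : MvPolynomial σ k} (hΦ : Φ ≠ 0) : ∃ e ≤ Φ.totalDegree, ∃ Ψ : MvPolynomial σ k,
      Ψ ≠ 0 ∧ Ψ.IsHomogeneous e ∧ ∀ a, eval a Ψ ≠ 0 → ∃ t : k, eval (t • a) Φ ≠ 0 := by
  obtain ⟨e, he, hne⟩ : ∃ e ∈ Finset.range (Φ.totalDegree + 1), homogeneousComponent e Φ ≠ 0 := by
    by_contra! h
    exact hΦ (by rw [← sum_homogeneousComponent Φ, Finset.sum_eq_zero h])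
  refine ⟨e, by simpa [Nat.lt_succ_iff] using he, _, hne, homogeneousComponent_isHomogeneous e Φ,
    fun a ha => ?_⟩
  by_contra! h
  have htranslate : translateHom (0 : σ → k) = AlgHom.id k _ := algHom_ext fun i => by simp
  have htaylor : taylorComponent 0 Φ e = homogeneousComponent e Φ := by
    rw [taylorComponent, htranslate, AlgHom.id_apply]
  rw [← htaylor] at ha
  exact ha (eval_taylorComponent_eq_zero (fun t => by rw [zero_add, h t]) e)

variable {k K : Type*} [Field k] [Field K] {n : ℕ}

theorem exists_units_map_restrictPoly_eq (κ : k →+* K) (F : MvPolynomial (Fin (n + 1)) k)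
    {a : Fin (n + 1) → k} {u : Fin (n + 1)} (hu : a u ≠ 0)
    {ψ : (Fin n → k) →ₗ[k] (Fin (n + 1) → k)} (hψ : Function.Injective ψ)
    (haψ : ∀ y, a ⬝ᵥ ψ y = 0) :
    ∃ T : (Matrix (Fin n) (Fin n) K)ˣ,
      map κ (restrictPoly F ψ) = linSubst T.val (hyperplaneSection (map κ F) (κ ∘ a) u) := by
  obtain ⟨T, hT⟩ := exists_isUnit_eq_hyperplaneParam_mul (A := LinearMap.toMatrix' ψ) hu
    (LinearMap.ker_eq_bot.2 (by simpa [← Matrix.toLin'_apply'] using hψ))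
    (fun y => by simpa using haψ y)
  refine ⟨Units.map κ.mapMatrix.toMonoidHom T, ?_⟩
  rw [restrictPoly_eq_linSubst, hT, ← linSubst_linSubst, map_linSubst, ← map_hyperplaneSection]
  rfl

theorem noncovered_linSubst_units_iff {τ : Type*} [Fintype τ] [DecidableEq τ]
    (T : (Matrix τ τ K)ˣ) {h : MvPolynomial τ K} {r : ℕ} :
    Noncovered (linSubst T.val h) r ↔ Noncovered h r := by
  simp only [Noncovered, eval_linSubst, hasLinearSubspaceThrough_linSubst_iff]
  have hsurj : Function.Surjective T.val.mulVec := fun y =>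
    ⟨T.inv.mulVec y, by rw [Matrix.mulVec_mulVec, T.val_inv, Matrix.one_mulVec]⟩
  exact (hsurj.exists (p := fun y => eval y h = 0 ∧ ¬ HasLinearSubspaceThrough h r y)).symm

theorem noncovered_map_algebraMap_iff [Infinite K] [Algebra k K] {σ : Type*} [Fintype σ]
    {F : MvPolynomial σ k} {r : ℕ} : Noncovered (map (algebraMap k K) F) r ↔
      ∃ x : σ → K, aeval x F = 0 ∧ ¬ ∃ W : Submodule K (σ → K),
        Module.finrank K W = r ∧ x ∈ W ∧ ∀ z ∈ W, aeval z F = 0 := by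
  simp only [Noncovered, hasLinearSubspaceThrough_iff, eval_map, aeval_def]

theorem Noncovered.exists_ne_zero [IsAlgClosed K] {σ : Type*} [Fintype σ] [Nonempty σ]
    {h : MvPolynomial σ K} {d r : ℕ} (hN : Noncovered h r) (hh : h.IsHomogeneous d) (hd : 1 < d)
    (hirr : Irreducible h) : ∃ y ≠ 0, eval y h = 0 ∧ ¬ HasLinearSubspaceThrough h r y := by
  obtain ⟨y, hy, hny⟩ := hN
  by_cases hy0 : y = 0
  · subst hy0
    obtain ⟨i⟩ := ‹Nonempty σ›
    obtain ⟨z, hz, hzi⟩ : ∃ z, eval z h = 0 ∧ eval z (X i) ≠ 0 := by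
      by_contra! hzero
      exact X_ne_zero i (eq_zero_of_dvd_of_isHomogeneous hh (isHomogeneous_X K i) hd
        (dvd_of_forall_eval_eq_zero hirr.prime hzero))
    refine ⟨z, fun hz0 => hzi (by simp [hz0]), hz, fun ⟨M, N, _, hNM, hMh, _⟩ => ?_⟩
    exact hny ⟨M, N, 0, hNM, hMh, M.mulVec_zero⟩
  · exact ⟨y, hy0, hy, hny⟩

end RestrictPoly

theorem exists_form_irreducible_noncovered_restrictPoly {n d : ℕ} (hn : 4 ≤ n) (hd : 3 ≤ d) :
    ∃ D : ℕ, ∀ (k K : Type v) [Field k] [Field K] [IsAlgClosed K] [CharZero K] (κ : k →+* K)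
      (F : MvPolynomial (Fin (n + 1)) k), F.IsHomogeneous d → Irreducible (map κ F) →
      Noncovered (map κ F) (n - 1) →
      ∃ Φ : MvPolynomial (Fin (n + 1)) k, Φ ≠ 0 ∧ (∃ e ≤ D, Φ.IsHomogeneous e) ∧
        ∀ a, eval a Φ ≠ 0 → ∀ ψ : (Fin n → k) →ₗ[k] (Fin (n + 1) → k), Function.Injective ψ →
          (∀ y, a ⬝ᵥ ψ y = 0) → Irreducible (map κ (restrictPoly F ψ)) ∧
            Noncovered (map κ (restrictPoly F ψ)) (n - 2) := by
  obtain ⟨D₁, hD₁⟩ := exists_form_irreducible_hyperplaneSection.{v} (n := n) (d := d) (by omega)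
    (by omega)
  obtain ⟨D₂, hD₂⟩ := exists_form_noncovered_hyperplaneSection.{v} hn hd
  refine ⟨D₁ + D₂, fun k K _ _ _ _ κ F hF hirr hX => ?_⟩
  obtain ⟨Φ₁, hΦ₁0, hΦ₁D, hΦ₁⟩ := hD₁ k K κ F hF hirr
  obtain ⟨Φ₂, hΦ₂0, hΦ₂D, hΦ₂⟩ := hD₂ k K κ F hF hirr hX
  have : CharZero k := κ.charZero
  obtain ⟨e, he, Φ, hΦ0, hΦhom, hΦ⟩ := exists_isHomogeneous_eval_ne_zero (mul_ne_zero hΦ₁0 hΦ₂0)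
  refine ⟨Φ, hΦ0, ⟨e, he.trans ((totalDegree_mul _ _).trans (add_le_add hΦ₁D hΦ₂D)), hΦhom⟩,
    fun a ha ψ hψ haψ => ?_⟩
  obtain ⟨t, ht⟩ := hΦ a ha
  rw [map_mul] at ht
  obtain ⟨u₁, hu₁, hirr₁⟩ := hΦ₁ _ (left_ne_zero_of_mul ht)
  obtain ⟨u₂, hu₂, hX₂⟩ := hΦ₂ _ (right_ne_zero_of_mul ht)
  have htaψ (y) : (t • a) ⬝ᵥ ψ y = 0 := by rw [smul_dotProduct, haψ, smul_zero]
  obtain ⟨T₁, hT₁⟩ := exists_units_map_restrictPoly_eq κ F hu₁ hψ htaψ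
  obtain ⟨T₂, hT₂⟩ := exists_units_map_restrictPoly_eq κ F hu₂ hψ htaψ
  have hirrψ : Irreducible (map κ (restrictPoly F ψ)) := by
    rwa [hT₁, irreducible_linSubst_units_iff]
  refine ⟨hirrψ, ?_⟩
  rw [hT₂, irreducible_linSubst_units_iff] at hirrψ
  rw [hT₂, noncovered_linSubst_units_iff]
  exact hX₂ hirrψ

theorem stmt_17_general (n d : ℕ) (hn : 4 ≤ n) (hd : 3 ≤ d) :
    ∃ Cdeg : ℕ, ∀ (k K : Type v) [Field k] [Field K] [IsAlgClosed K] [CharZero K] [Algebra k K]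
      (F : MvPolynomial (Fin (n + 1)) k), F.IsHomogeneous d →
      Irreducible (map (algebraMap k K) F) →
      (∃ x : Fin (n + 1) → K, aeval x F = 0 ∧ ¬ ∃ W : Submodule K (Fin (n + 1) → K),
        Module.finrank K W = n - 1 ∧ x ∈ W ∧ ∀ z ∈ W, aeval z F = 0) →
      ∃ Φ : MvPolynomial (Fin (n + 1)) k, Φ ≠ 0 ∧ (∃ e ≤ Cdeg, Φ.IsHomogeneous e) ∧
        ∀ a, eval a Φ ≠ 0 → ∀ ψ : (Fin n → k) →ₗ[k] (Fin (n + 1) → k), Function.Injective ψ →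
          (∀ y, a ⬝ᵥ ψ y = 0) → Irreducible (map (algebraMap k K) (restrictPoly F ψ)) ∧
            ∃ y : Fin n → K, y ≠ 0 ∧ aeval y (restrictPoly F ψ) = 0 ∧
              ¬ ∃ W : Submodule K (Fin n → K), Module.finrank K W = n - 2 ∧ y ∈ W ∧
                ∀ z ∈ W, aeval z (restrictPoly F ψ) = 0 := by
  obtain ⟨D, hD⟩ := exists_form_irreducible_noncovered_restrictPoly.{v} hn hd
  refine ⟨D, fun k K _ _ _ _ _ F hF hirr hX => ?_⟩
  obtain ⟨Φ, hΦ0, hΦhom, hΦ⟩ :=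
    hD k K (algebraMap k K) F hF hirr (noncovered_map_algebraMap_iff.2 hX)
  refine ⟨Φ, hΦ0, hΦhom, fun a ha ψ hψ haψ => ?_⟩
  obtain ⟨hirrψ, hXψ⟩ := hΦ a ha ψ hψ haψ
  have : Nonempty (Fin n) := ⟨⟨0, by omega⟩⟩
  have hFψ : (restrictPoly F ψ).IsHomogeneous d := by
    rw [restrictPoly_eq_linSubst]
    exact isHomogeneous_linSubst _ hF
  obtain ⟨y, hy0, hy⟩ := hXψ.exists_ne_zero (hFψ.map _) (by omega) hirrψ
  simp only [hasLinearSubspaceThrough_iff, eval_map, ← aeval_def] at hy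
  exact ⟨hirrψ, y, hy0, hy⟩

/-- Corollary 7.8 of Salberger: let `n ≥ 4` and let `X = {F = 0} ⊂ P^n` be a
geometrically integral hypersurface over `ℚ` of degree `d ≥ 3` which is not covered by
its linear divisors.  Then there is a nonzero form `Φ(a_0,…,a_n)` over `ℚ` of degree
`≪_{d,n} 1` such that whenever `Φ(a) ≠ 0`, the hyperplane section `Π_a ∩ X` is
geometrically integral and not covered by its linear divisors. -/
theorem stmt_17 (n d : ℕ) (hn : 4 ≤ n) (hd : 3 ≤ d) :
    ∃ Cdeg : ℕ, ∀ F : MvPolynomial (Fin (n + 1)) ℚ,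
      F.IsHomogeneous d →
      Irreducible (MvPolynomial.map (algebraMap ℚ (AlgebraicClosure ℚ)) F) →
      (∃ x : Fin (n + 1) → AlgebraicClosure ℚ, x ≠ 0 ∧ aeval x F = 0 ∧
        ¬ ∃ W : Submodule (AlgebraicClosure ℚ) (Fin (n + 1) → AlgebraicClosure ℚ),
          Module.finrank (AlgebraicClosure ℚ) W = n - 1 ∧ x ∈ W ∧
          ∀ z ∈ W, aeval z F = 0) →
      ∃ Φ : MvPolynomial (Fin (n + 1)) ℚ, Φ ≠ 0 ∧ (∃ e ≤ Cdeg, Φ.IsHomogeneous e) ∧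
        ∀ a : Fin (n + 1) → ℚ, a ≠ 0 → eval a Φ ≠ 0 →
        ∀ φ : (Fin n → ℚ) ≃ₗ[ℚ]
            (LinearMap.ker (∑ i, a i • LinearMap.proj i : (Fin (n + 1) → ℚ) →ₗ[ℚ] ℚ)),
          Irreducible (MvPolynomial.map (algebraMap ℚ (AlgebraicClosure ℚ))
            (restrictPoly F
              ((LinearMap.ker
                  (∑ i, a i • LinearMap.proj i : (Fin (n + 1) → ℚ) →ₗ[ℚ] ℚ)).subtype.comp
                φ.toLinearMap))) ∧
          ∃ y : Fin n → AlgebraicClosure ℚ, y ≠ 0 ∧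
            aeval y (restrictPoly F
              ((LinearMap.ker
                  (∑ i, a i • LinearMap.proj i : (Fin (n + 1) → ℚ) →ₗ[ℚ] ℚ)).subtype.comp
                φ.toLinearMap)) = 0 ∧
            ¬ ∃ W : Submodule (AlgebraicClosure ℚ) (Fin n → AlgebraicClosure ℚ),
              Module.finrank (AlgebraicClosure ℚ) W = n - 2 ∧ y ∈ W ∧
              ∀ z ∈ W, aeval z (restrictPoly F
                ((LinearMap.ker
                    (∑ i, a i • LinearMap.proj i : (Fin (n + 1) → ℚ) →ₗ[ℚ] ℚ)).subtype.comp
                  φ.toLinearMap)) = 0 := by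
  obtain ⟨D, hD⟩ := stmt_17_general n d hn hd
  refine ⟨D, fun F hF hirr ⟨x, _, hx⟩ => ?_⟩
  obtain ⟨Φ, hΦ0, hΦhom, hΦ⟩ := hD ℚ _ F hF hirr ⟨x, hx⟩
  exact ⟨Φ, hΦ0, hΦhom, fun a _ ha φ => hΦ a ha _ (Subtype.val_injective.comp φ.injective)
    fun y => (LinearMap.sum_apply ..).symm.trans (LinearMap.mem_ker.1 (φ y).2)⟩
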